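/- arXiv:2510.24119 — 2 statements merged into one kernel-verified Lean document; each statement's English description precedes it below -/
import Mathlib

section
/- Uniform large deviation principle for empirical distributions of a random dynamical system (abstract criterion): Assume hypotheses (I) and (C) hold for the one-step transition kernel κ of the RDS. Then there exists a function I : P(X) → [0,∞] which is convex, lower semicontinuous for the topology of weak convergence, and has compact sublevel sets {σ : I(σ) ≤ a} for every a ∈ [0,∞), such that for every Borel set B ⊆ P(X): −inf_{σ∈B°} I(σ) ≤ liminf_{n→∞} inf_{μ∈P(X)} (1/n)·log ℙ_μ(L_{n,μ} ∈ B) ≤ limsup_{n→∞} sup_{μ∈P(X)} (1/n)·log ℙ_μ(L_{n,μ} ∈ B) ≤ −inf_{σ∈cl(B)} I(σ), where B° and cl(B) are the interior and closure of B, ℙ_μ(L_{n,μ} ∈ B) := (μ ⊗ ℓ^⊗ℕ)({(x,ω) : (1/n)·Σ_{k=1}^n δ_{x_k(x,ω)} ∈ B}), all inequalities are in the extended reals with the conventions log 0 = −∞ and inf over the empty set = +∞. -/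
open MeasureTheory Filter Topology
open scoped ENNReal NNReal

noncomputable def kIter {X : Type*} [MeasurableSpace X] (κ : X → Measure X) : ℕ → X → Measure X
  | 0 => fun x => Measure.dirac x
  | n + 1 => fun x => (kIter κ n x).bind κ

/-- The trajectory of the random dynamical system: `x_0(x,ω) = x` and
`x_k(x,ω) = S(x_{k-1}(x,ω), ω_{k-1})`. -/
def traj {X E : Type*} (S : X × E → X) : ℕ → X × (ℕ → E) → X
  | 0 => fun p => p.1
  | k + 1 => fun p => S (traj S k p, p.2 k)

/-- The empirical measure `(1/n)·Σ_{k=1}^n δ_{x_k}`. -/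
noncomputable def empMeas {X E : Type*} [MeasurableSpace X] (S : X × E → X) (n : ℕ)
    (p : X × (ℕ → E)) : Measure X :=
  (n : ℝ≥0∞)⁻¹ • ∑ k ∈ Finset.Icc 1 n, Measure.dirac (traj S k p)

lemma empMeas_isProbabilityMeasure {X E : Type*} [MeasurableSpace X] (S : X × E → X)
    {n : ℕ} (hn : n ≠ 0) (p : X × (ℕ → E)) : IsProbabilityMeasure (empMeas S n p) := by
  constructor
  rw [empMeas, Measure.smul_apply, Measure.finset_sum_apply]
  simp only [measure_univ, Finset.sum_const, Nat.card_Icc, Nat.add_sub_cancel,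
    nsmul_eq_mul, mul_one, smul_eq_mul]
  exact ENNReal.inv_mul_cancel (by exact_mod_cast hn) (ENNReal.natCast_ne_top n)

/-- The empirical distribution `L_{n} = (1/n)·Σ_{k=1}^n δ_{x_k}` as a (random) probability
measure on `X` (for `n = 0` we use an irrelevant junk value). -/
noncomputable def empDist {X E : Type*} [MeasurableSpace X] (S : X × E → X) (n : ℕ)
    (p : X × (ℕ → E)) : ProbabilityMeasure X :=
  if hn : n = 0 then ⟨Measure.dirac p.1, inferInstance⟩
  else ⟨empMeas S n p, empMeas_isProbabilityMeasure S hn p⟩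

section LDPabs
variable {X : Type*} [MetricSpace X] [CompactSpace X]

/-- Exponential of a continuous function. -/
noncomputable def expC (V : C(X, ℝ)) : C(X, ℝ) := ⟨fun x => Real.exp (V x), by fun_prop⟩

@[simp] lemma expC_apply (V : C(X, ℝ)) (x : X) : expC V x = Real.exp (V x) := rfl

lemma leC {f g : C(X, ℝ)} : f ≤ g ↔ ∀ x, f x ≤ g x := Iff.rfl

lemma nonnegC {f : C(X, ℝ)} : 0 ≤ f ↔ ∀ x, 0 ≤ f x := Iff.rfl

lemma leC_norm (f : C(X, ℝ)) (x : X) : f x ≤ ‖f‖ :=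
  (Real.le_norm_self _).trans (f.norm_coe_le_norm x)

lemma continuous_evalC (x : X) : Continuous fun f : C(X, ℝ) => f x := by fun_prop

/-- The Feynman–Kac operator. -/
noncomputable def LL (T : C(X, ℝ) →L[ℝ] C(X, ℝ)) (V : C(X, ℝ)) : C(X, ℝ) →L[ℝ] C(X, ℝ) :=
  T.comp (ContinuousLinearMap.mul ℝ C(X, ℝ) (expC V))

lemma LL_apply (T : C(X, ℝ) →L[ℝ] C(X, ℝ)) (V f : C(X, ℝ)) : LL T V f = T (expC V * f) := rfl

/-- Lipschitz with constant `D`. -/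
def IsLip (f : C(X, ℝ)) (D : ℝ) : Prop := ∀ x y, |f x - f y| ≤ D * dist x y

/-- Abstract properties of the transition operator. -/
structure Setup (T : C(X, ℝ) →L[ℝ] C(X, ℝ)) (q : ℝ) : Prop where
  pos : ∀ f, 0 ≤ f → 0 ≤ T f
  one : T 1 = 1
  q0 : 0 ≤ q
  q1 : q < 1
  ly : ∀ V D, IsLip V D → ∃ B, 0 ≤ B ∧ ∀ f w : C(X, ℝ), 0 ≤ w →
    (∀ y y', |f y - f y'| ≤ dist y y' * w y) →
    ∀ x x', |LL T V f x - LL T V f x'| ≤ dist x x' * (q * LL T V w x + B * ‖f‖)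
  irr : ∀ ε : ℝ, 0 < ε → ∃ (N : ℕ) (p : ℝ), 0 < p ∧ ∀ V f : C(X, ℝ), 0 ≤ f → ∀ a : ℝ, 0 ≤ a →
    ∀ y, (∀ z, dist z y < ε → a ≤ f z) →
      ∀ x, p * Real.exp (-(N * ‖V‖)) * a ≤ ((LL T V) ^ N) f x

variable {T : C(X, ℝ) →L[ℝ] C(X, ℝ)} {q : ℝ}

lemma IsLip.mono {f : C(X, ℝ)} {D D' : ℝ} (h : IsLip f D) (hD : D ≤ D') : IsLip f D' :=
  fun x y => (h x y).trans (mul_le_mul_of_nonneg_right hD dist_nonneg)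

lemma IsLip.add {f g : C(X, ℝ)} {D D' : ℝ} (h : IsLip f D) (h' : IsLip g D') :
    IsLip (f + g) (D + D') := fun x y => by
  have h1 := h x y
  have h2 := h' x y
  simp only [ContinuousMap.add_apply]
  rw [abs_le] at *
  constructor <;> nlinarith

lemma IsLip.smul {f : C(X, ℝ)} {D : ℝ} (h : IsLip f D) (a : ℝ) :
    IsLip (a • f) (|a| * D) := fun x y => by
  have h1 := h x y
  simp only [ContinuousMap.smul_apply, smul_eq_mul]
  rw [← mul_sub, abs_mul, mul_assoc]
  exact mul_le_mul_of_nonneg_left h1 (abs_nonneg _)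

lemma IsLip.mul {f g : C(X, ℝ)} {D D' : ℝ} (h : IsLip f D) (h' : IsLip g D') :
    IsLip (f * g) (‖f‖ * D' + ‖g‖ * D) := fun x y => by
  have h1 := h x y
  have h2 := h' x y
  simp only [ContinuousMap.mul_apply]
  have : f x * g x - f y * g y = f x * (g x - g y) + g y * (f x - f y) := by ring
  rw [this]
  refine (abs_add_le _ _).trans ?_
  rw [abs_mul, abs_mul, add_mul, mul_assoc, mul_assoc]
  have h3 : |f x| ≤ ‖f‖ := f.norm_coe_le_norm x
  have h4 : |g y| ≤ ‖g‖ := g.norm_coe_le_norm y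
  gcongr

lemma isLip_const (c : ℝ) : IsLip (ContinuousMap.const X c) 0 := fun x y => by simp

lemma isLip_one : IsLip (1 : C(X, ℝ)) 0 := fun x y => by simp

lemma IsLip.of_tendsto {f : ℕ → C(X, ℝ)} {g : C(X, ℝ)} {D : ℝ} (h : ∀ n, IsLip (f n) D)
    (hf : Tendsto f atTop (𝓝 g)) : IsLip g D := fun x y => by
  have e : ∀ x, Tendsto (fun n => f n x) atTop (𝓝 (g x)) := fun x =>
    ((continuous_evalC x).tendsto g).comp hf
  exact le_of_tendsto ((e x).sub (e y)).abs (Eventually.of_forall fun n => h n x y)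

lemma LL_pos (h : Setup T q) (V : C(X, ℝ)) {f : C(X, ℝ)} (hf : 0 ≤ f) : 0 ≤ LL T V f := by
  rw [LL_apply]
  apply h.pos
  rw [nonnegC] at *
  intro x
  have := hf x
  simp only [ContinuousMap.mul_apply, expC_apply]
  positivity

lemma LL_mono (h : Setup T q) (V : C(X, ℝ)) {f g : C(X, ℝ)} (hf : f ≤ g) :
    LL T V f ≤ LL T V g := by
  have := LL_pos h V (sub_nonneg.2 hf)
  rw [map_sub] at this
  exact sub_nonneg.1 this

lemma LLpow_pos (h : Setup T q) (V : C(X, ℝ)) (n : ℕ) {f : C(X, ℝ)} (hf : 0 ≤ f) :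
    0 ≤ (LL T V ^ n) f := by
  induction n generalizing f with
  | zero => simpa using hf
  | succ n ih => rw [pow_succ]; exact ih (LL_pos h V hf)

lemma LLpow_mono (h : Setup T q) (V : C(X, ℝ)) (n : ℕ) {f g : C(X, ℝ)} (hf : f ≤ g) :
    (LL T V ^ n) f ≤ (LL T V ^ n) g := by
  have := LLpow_pos h V n (sub_nonneg.2 hf)
  rw [map_sub] at this
  exact sub_nonneg.1 this

lemma LL_sub_const (V : C(X, ℝ)) (l : ℝ) :
    LL T (V - ContinuousMap.const X l) = Real.exp (-l) • LL T V := by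
  ext1 f
  rw [smul_apply, LL_apply, LL_apply, ← map_smul]
  congr 1
  ext x
  simp [sub_eq_add_neg, Real.exp_add]
  ring

lemma le_norm_one (f : C(X, ℝ)) : f ≤ ‖f‖ • (1 : C(X, ℝ)) := fun x => by
  simpa using (le_abs_self _).trans (f.norm_coe_le_norm x)

lemma neg_norm_one_le (f : C(X, ℝ)) : -(‖f‖ • (1 : C(X, ℝ))) ≤ f := fun x => by
  have : |f x| ≤ ‖f‖ := f.norm_coe_le_norm x
  simpa using (abs_le.1 this).1

lemma LLpow_norm (h : Setup T q) (V : C(X, ℝ)) (n : ℕ) (f : C(X, ℝ)) :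
    ‖(LL T V ^ n) f‖ ≤ ‖f‖ * ‖(LL T V ^ n) 1‖ := by
  rw [ContinuousMap.norm_le _ (by positivity)]
  intro x
  have h1 := leC.1 (LLpow_mono h V n (le_norm_one f)) x
  have h2 := leC.1 (LLpow_mono h V n (neg_norm_one_le f)) x
  rw [map_neg, map_smul] at h2
  rw [map_smul] at h1
  simp only [ContinuousMap.neg_apply, ContinuousMap.smul_apply, smul_eq_mul] at h1 h2
  have h3 : ((LL T V ^ n) 1) x ≤ ‖(LL T V ^ n) 1‖ :=
    leC_norm _ x
  rw [Real.norm_eq_abs, abs_le]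
  have := norm_nonneg f
  constructor <;> nlinarith

/-- Iterated Lasota–Yorke inequality. -/
lemma LYm (h : Setup T q) {V : C(X, ℝ)} {DV : ℝ} (hV : IsLip V DV) (m : ℕ) :
    ∃ b, 0 ≤ b ∧ ∀ f D, 0 ≤ D → IsLip f D → ∀ x x',
      |(LL T V ^ m) f x - (LL T V ^ m) f x'| ≤
        dist x x' * (q ^ m * D * (LL T V ^ m) 1 x + b * ‖f‖) := by
  obtain ⟨B, hB, hly⟩ := h.ly V DV hV
  induction m with
  | zero =>
    refine ⟨0, le_rfl, fun f D hD hf x x' => ?_⟩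
    simpa [mul_comm] using hf x x'
  | succ m ih =>
    obtain ⟨b, hb, ih⟩ := ih
    refine ⟨q * b * ‖LL T V 1‖ + B * ‖(LL T V ^ m) 1‖, ?_, fun f D hD hf x x' => ?_⟩
    · have := h.q0
      positivity
    have hq := h.q0
    have key := hly ((LL T V ^ m) f) ((q ^ m * D) • (LL T V ^ m) 1 + (b * ‖f‖) • (1 : C(X, ℝ))) ?_ ?_ x x'
    · rw [pow_succ', mul_apply_eq_comp, mul_apply_eq_comp]
      refine key.trans (mul_le_mul_of_nonneg_left ?_ dist_nonneg)
      rw [map_add, map_smul, map_smul]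
      simp only [ContinuousMap.add_apply, ContinuousMap.smul_apply, smul_eq_mul]
      have h1 : (LL T V 1) x ≤ ‖LL T V 1‖ :=
        leC_norm _ x
      have h2 := LLpow_norm h V m f
      have h3 : q * (b * ‖f‖ * (LL T V 1) x) ≤ q * (b * ‖f‖ * ‖LL T V 1‖) := by gcongr
      have h4 : B * ‖(LL T V ^ m) f‖ ≤ B * (‖f‖ * ‖(LL T V ^ m) 1‖) := by gcongr
      generalize ((LL T V) ((LL T V ^ m) 1)) x = A at *
      generalize ‖(LL T V ^ m) f‖ = A2 at *
      generalize ‖(LL T V ^ m) 1‖ = A3 at *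
      generalize ‖(LL T V) 1‖ = A4 at *
      generalize ((LL T V) 1) x = A5 at *
      rw [pow_succ' q]
      linarith
    · have := LLpow_pos h V m (f := 1) zero_le_one
      rw [nonnegC] at *
      intro x
      have := this x
      simp only [ContinuousMap.add_apply, ContinuousMap.smul_apply, smul_eq_mul,
        ContinuousMap.zero_apply, ContinuousMap.one_apply] at *
      positivity
    · intro y y'
      simpa using ih f D hD hf y y'

lemma LYhalf (h : Setup T q) {V : C(X, ℝ)} {DV : ℝ} (hV : IsLip V DV) (m : ℕ)
    (hm : q ^ m * ‖(LL T V ^ m) 1‖ ≤ 1 / 2) :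
    ∃ b, 0 ≤ b ∧ ∀ f D, 0 ≤ D → IsLip f D → IsLip ((LL T V ^ m) f) (D / 2 + b * ‖f‖) := by
  obtain ⟨b, hb, H⟩ := LYm h hV m
  refine ⟨b, hb, fun f D hD hf x x' => (H f D hD hf x x').trans ?_⟩
  rw [mul_comm]
  refine mul_le_mul_of_nonneg_right ?_ dist_nonneg
  have h1 : ((LL T V ^ m) 1) x ≤ ‖(LL T V ^ m) 1‖ :=
    leC_norm _ x
  have : q ^ m * D * ((LL T V ^ m) 1) x ≤ D * (q ^ m * ‖(LL T V ^ m) 1‖) := by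
    have := h.q0
    calc _ ≤ q ^ m * D * ‖(LL T V ^ m) 1‖ := by gcongr
      _ = _ := by ring
  nlinarith

/-- A compactness lemma (Arzelà–Ascoli). -/
lemma compact_lip (K : ℝ) : IsCompact {f : C(X, ℝ) | IsLip f K ∧ ∀ x, f x ∈ Set.Icc (0 : ℝ) 1} := by
  set A : Set C(X, ℝ) := {f : C(X, ℝ) | IsLip f K ∧ ∀ x, f x ∈ Set.Icc (0 : ℝ) 1} with hA
  let e := ContinuousMap.isometryEquivBoundedOfCompact X ℝ
  have hc : IsClosed A := by
    rw [hA, Set.ofPred_and]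
    refine IsClosed.inter ?_ ?_
    · simp only [IsLip, Set.ofPred_forall]
      refine isClosed_iInter fun x => isClosed_iInter fun y => isClosed_le ?_ continuous_const
      exact ((continuous_evalC x).sub (continuous_evalC y)).abs
    · simp only [Set.ofPred_forall]
      exact isClosed_iInter fun x => isClosed_Icc.preimage (continuous_evalC x)
  have h1 : IsCompact (e.symm ⁻¹' A) := by
    refine BoundedContinuousFunction.arzela_ascoli₂ (Set.Icc (0 : ℝ) 1) isCompact_Icc _
      (hc.preimage e.symm.continuous) (fun f x hf => hf.2 x) ?_
    have hK : ∀ f : (e.symm ⁻¹' A), LipschitzWith (Real.toNNReal K) (f : X → ℝ) := by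
      intro f
      refine LipschitzWith.of_dist_le_mul fun x y => ?_
      rw [Real.dist_eq]
      refine (f.2.1 x y).trans ?_
      exact mul_le_mul_of_nonneg_right (Real.le_coe_toNNReal K) dist_nonneg
    exact (LipschitzWith.uniformEquicontinuous _ _ hK).equicontinuous
  have := h1.image e.symm.continuous
  rwa [Set.image_preimage_eq _ e.symm.surjective] at this

end LDPabs

section LDPeig
variable {X : Type*} [MetricSpace X] [CompactSpace X]
variable {T : C(X, ℝ) →L[ℝ] C(X, ℝ)} {q : ℝ}

lemma normC_mono {f g : C(X, ℝ)} (hf : 0 ≤ f) (hfg : f ≤ g) : ‖f‖ ≤ ‖g‖ := by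
  rw [ContinuousMap.norm_le _ (norm_nonneg _)]
  intro x
  rw [Real.norm_eq_abs, abs_of_nonneg (nonnegC.1 hf x)]
  exact (leC.1 hfg x).trans (leC_norm g x)

/-- The resolvent function, with all its properties. -/
lemma FKresolvent (h : Setup T q) {V : C(X, ℝ)}
    (hN : ∀ n, 1 ≤ ‖(LL T V ^ n) 1‖)
    (hsub : ∀ η : ℝ, 0 < η → ∀ᶠ n : ℕ in atTop, ‖(LL T V ^ n) 1‖ ≤ Real.exp (η * n))
    {s : ℝ} (hs0 : 0 < s) (hs1 : s < 1) :
    ∃ G : C(X, ℝ), 1 ≤ G ∧ G = 1 + s • LL T V G ∧ 1 / (1 - s) ≤ ‖G‖ ∧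
      (∀ n, ∑ k ∈ Finset.range n, s ^ k • (LL T V ^ k) 1 ≤ G) ∧
      Tendsto (fun n => ∑ k ∈ Finset.range n, s ^ k • (LL T V ^ k) 1) atTop (𝓝 G) := by
  have hnn : ∀ k, 0 ≤ s ^ k • (LL T V ^ k) (1 : C(X, ℝ)) := fun k =>
    smul_nonneg (by positivity) (LLpow_pos h V k zero_le_one)
  have hsum : Summable fun k => s ^ k • (LL T V ^ k) (1 : C(X, ℝ)) := by
    set η := - Real.log s / 2 with hη
    have hlog : Real.log s < 0 := Real.log_neg hs0 hs1
    have hη0 : 0 < η := by rw [hη]; linarith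
    have hr : s * Real.exp η < 1 := by
      rw [← Real.exp_log hs0, ← Real.exp_add, Real.exp_lt_one_iff]
      rw [hη]; linarith
    refine Summable.of_norm_bounded_eventually_nat (g := fun n => (s * Real.exp η) ^ n) 
      (summable_geometric_of_lt_one (by positivity) hr) ?_
    filter_upwards [hsub η hη0] with n hn
    rw [norm_smul, mul_pow, ← Real.exp_nat_mul, norm_pow, Real.norm_eq_abs, abs_of_pos hs0]
    rw [mul_comm η] at hn
    gcongr
  set G := ∑' k, s ^ k • (LL T V ^ k) (1 : C(X, ℝ)) with hG
  have htend : Tendsto (fun n => ∑ k ∈ Finset.range n, s ^ k • (LL T V ^ k) (1 : C(X, ℝ))) atTop (𝓝 G) :=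
    hsum.hasSum.tendsto_sum_nat
  have hle : ∀ n, ∑ k ∈ Finset.range n, s ^ k • (LL T V ^ k) (1 : C(X, ℝ)) ≤ G := by
    intro n
    rw [leC]
    intro x
    have ht : Tendsto (fun n => (∑ k ∈ Finset.range n, s ^ k • (LL T V ^ k) (1 : C(X, ℝ))) x) atTop (𝓝 (G x)) :=
      ((continuous_evalC x).tendsto G).comp htend
    refine Monotone.ge_of_tendsto ?_ ht n
    refine monotone_nat_of_le_succ fun n => ?_
    rw [Finset.sum_range_succ]
    simp only [ContinuousMap.add_apply]
    have := nonnegC.1 (hnn n) x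
    linarith
  have h1G : 1 ≤ G := by simpa using hle 1
  have heq : G = 1 + s • LL T V G := by
    rw [hG, ContinuousLinearMap.map_tsum _ hsum, ← tsum_const_smul'', hsum.tsum_eq_zero_add]
    congr 1
    · simp
    · congr 1
      ext1 k
      rw [map_smul, smul_smul, ← pow_succ', pow_succ' (LL T V), mul_apply_eq_comp]
  refine ⟨G, h1G, heq, ?_, hle, htend⟩
  -- norm lower bound
  have hB0 : 1 ≤ ‖G‖ := by
    have h0 := hN 0
    rw [pow_zero, ContinuousLinearMap.one_apply] at h0
    exact h0.trans (normC_mono zero_le_one h1G)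
  by_contra hcon
  push Not at hcon
  set B := ‖G‖ with hB
  set ρ := (1 - 1 / B) / s with hρ
  have hB1 : 0 < B := by linarith
  have hρ1 : ρ < 1 := by
    rw [hρ, div_lt_one hs0]
    have : 1 - s < 1 / B := by
      rw [lt_div_iff₀ (by linarith)] at hcon
      rw [lt_div_iff₀ hB1]
      linarith
    linarith
  have hρ0 : 0 ≤ ρ := by
    rw [hρ]
    have : 1 / B ≤ 1 := by rw [div_le_one hB1]; exact hB0
    apply div_nonneg _ hs0.le
    linarith
  have hLG : LL T V G ≤ ρ • G := by
    rw [leC]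
    intro x
    have e := congrArg (fun f : C(X, ℝ) => f x) heq
    simp only [ContinuousMap.add_apply, ContinuousMap.smul_apply, smul_eq_mul,
      ContinuousMap.one_apply] at e ⊢
    have h3 := leC_norm G x
    rw [hρ, div_mul_eq_mul_div, le_div_iff₀ hs0]
    have : G x / B ≤ 1 := by rw [div_le_one hB1]; exact h3
    have e2 : (1 - 1 / B) * G x = G x - G x / B := by ring
    rw [e2]
    linarith
  have hpow : ∀ n, (LL T V ^ n) G ≤ ρ ^ n • G := by
    intro n
    induction n with
    | zero => simp
    | succ n ih =>
      rw [pow_succ', mul_apply_eq_comp]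
      calc LL T V ((LL T V ^ n) G) ≤ LL T V (ρ ^ n • G) := LL_mono h V ih
        _ = ρ ^ n • LL T V G := map_smul _ _ _
        _ ≤ ρ ^ n • (ρ • G) := smul_le_smul_of_nonneg_left hLG (by positivity)
        _ = ρ ^ (n + 1) • G := by rw [smul_smul, pow_succ]
  have hfin : ∀ n, 1 ≤ ρ ^ n * B := by
    intro n
    refine (hN n).trans ?_
    have := normC_mono (LLpow_pos h V n zero_le_one) ((LLpow_mono h V n h1G).trans (hpow n))
    rwa [norm_smul, Real.norm_eq_abs, abs_of_nonneg (by positivity)] at this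
  have ht : Tendsto (fun n => ρ ^ n * B) atTop (𝓝 (0 * B)) :=
    (tendsto_pow_atTop_nhds_zero_of_lt_one hρ0 hρ1).mul_const B
  have := ge_of_tendsto' ht hfin
  norm_num at this

lemma LLpow_lip (h : Setup T q) {V : C(X, ℝ)} {DV : ℝ} (hV : IsLip V DV) (n : ℕ) :
    ∃ D, 0 ≤ D ∧ IsLip ((LL T V ^ n) 1) D := by
  obtain ⟨b, hb, H⟩ := LYm h hV n
  refine ⟨b * ‖(1 : C(X, ℝ))‖, by positivity, fun x x' => ?_⟩
  have := H 1 0 le_rfl isLip_one x x'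
  simpa [mul_comm] using this

/-- Uniform Lipschitz bounds for the resolvent. -/
lemma resolvent_lip (h : Setup T q) {V : C(X, ℝ)} {DV : ℝ} (hV : IsLip V DV)
    (hsub : ∀ η : ℝ, 0 < η → ∀ᶠ n : ℕ in atTop, ‖(LL T V ^ n) 1‖ ≤ Real.exp (η * n)) :
    ∃ K, 0 ≤ K ∧ ∀ s : ℝ, 0 < s → s < 1 → ∀ G : C(X, ℝ), 1 ≤ ‖G‖ →
      (∀ n, ∑ k ∈ Finset.range n, s ^ k • (LL T V ^ k) 1 ≤ G) →
      ∀ n, IsLip (∑ k ∈ Finset.range n, s ^ k • (LL T V ^ k) (1 : C(X, ℝ))) (K * ‖G‖) := by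
  -- choose m
  obtain ⟨m, hm0, hm⟩ : ∃ m : ℕ, 0 < m ∧ q ^ m * ‖(LL T V ^ m) 1‖ ≤ 1 / 2 := by
    set q' := max q (1 / 2) with hq'
    have hq'0 : 0 < q' := by positivity
    have hq'1 : q' < 1 := max_lt h.q1 (by norm_num)
    set η := - Real.log q' / 2 with hη
    have hlog : Real.log q' < 0 := Real.log_neg hq'0 hq'1
    have hη0 : 0 < η := by rw [hη]; linarith
    have hr : q' * Real.exp η < 1 := by
      rw [← Real.exp_log hq'0, ← Real.exp_add, Real.exp_lt_one_iff]
      rw [hη]; linarith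
    have ht := tendsto_pow_atTop_nhds_zero_of_lt_one (by positivity) hr
    have ht2 := ht.eventually (Iic_mem_nhds (show (0 : ℝ) < 1 / 2 by norm_num))
    obtain ⟨m, h1, h2, h3⟩ := ((hsub η hη0).and (ht2.and (eventually_gt_atTop 0))).exists
    refine ⟨m, h3, le_trans ?_ h2⟩
    rw [mul_pow, ← Real.exp_nat_mul]
    rw [mul_comm η] at h1
    have := h.q0
    have : q ≤ q' := le_max_left _ _
    gcongr
  obtain ⟨b, hb, H⟩ := LYhalf h hV m hm
  choose d hd0 hd using fun n => LLpow_lip h hV n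
  set Dm := ∑ k ∈ Finset.range m, d k with hDm
  have hDm0 : 0 ≤ Dm := Finset.sum_nonneg fun k _ => hd0 k
  refine ⟨2 * (Dm + b), by positivity, fun s hs0 hs1 G hG1 hG => ?_⟩
  have hnn : ∀ k, 0 ≤ s ^ k • (LL T V ^ k) (1 : C(X, ℝ)) := fun k =>
    smul_nonneg (by positivity) (LLpow_pos h V k zero_le_one)
  have hsmall : ∀ n, IsLip (∑ k ∈ Finset.range n, s ^ k • (LL T V ^ k) (1 : C(X, ℝ)))
      (∑ k ∈ Finset.range n, d k) := by
    intro n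
    induction n with
    | zero => intro x y; simp
    | succ n ih =>
      rw [Finset.sum_range_succ, Finset.sum_range_succ]
      refine ih.add (((hd n).smul _).mono ?_)
      rw [abs_of_nonneg (by positivity)]
      exact mul_le_of_le_one_left (hd0 n) (pow_le_one₀ hs0.le hs1.le)
  intro n
  have hGn := norm_nonneg G
  induction n using Nat.strong_induction_on with
  | _ n ih =>
  by_cases hn : n < m
  · refine (hsmall n).mono ?_
    have h1 : ∑ k ∈ Finset.range n, d k ≤ Dm :=
      Finset.sum_le_sum_of_subset_of_nonneg (Finset.range_mono hn.le) fun k _ _ => hd0 k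
    nlinarith
  · push Not at hn
    obtain ⟨k, rfl⟩ := Nat.exists_eq_add_of_le hn
    rw [Finset.sum_range_add]
    have e : ∑ x ∈ Finset.range k, s ^ (m + x) • (LL T V ^ (m + x)) (1 : C(X, ℝ)) =
        s ^ m • (LL T V ^ m) (∑ x ∈ Finset.range k, s ^ x • (LL T V ^ x) (1 : C(X, ℝ))) := by
      rw [map_sum, Finset.smul_sum]
      refine Finset.sum_congr rfl fun x _ => ?_
      rw [map_smul, smul_smul, ← pow_add, pow_add (LL T V), mul_apply_eq_comp]
    rw [e]
    have h1 := H _ _ (by positivity) (ih k (by omega))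
    refine ((hsmall m).add (h1.smul (s ^ m))).mono ?_
    rw [← hDm, abs_of_nonneg (by positivity)]
    have h2 : s ^ m ≤ 1 := pow_le_one₀ hs0.le hs1.le
    have h3 : ‖∑ k ∈ Finset.range k, s ^ k • (LL T V ^ k) (1 : C(X, ℝ))‖ ≤ ‖G‖ :=
      normC_mono (Finset.sum_nonneg fun k _ => hnn k) (hG k)
    have h4 : s ^ m * (2 * (Dm + b) * ‖G‖ / 2 + b * ‖∑ k ∈ Finset.range k, s ^ k • (LL T V ^ k) (1 : C(X, ℝ))‖)
      ≤ 1 * (2 * (Dm + b) * ‖G‖ / 2 + b * ‖G‖) := by gcongr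
    nlinarith

/-- Existence of the eigenfunction, normalized case. -/
lemma eig_norm (h : Setup T q) [Nonempty X] {V : C(X, ℝ)} {DV : ℝ} (hV : IsLip V DV)
    (hN : ∀ n, 1 ≤ ‖(LL T V ^ n) 1‖)
    (hsub : ∀ η : ℝ, 0 < η → ∀ᶠ n : ℕ in atTop, ‖(LL T V ^ n) 1‖ ≤ Real.exp (η * n)) :
    ∃ (g : C(X, ℝ)) (K c : ℝ), 0 ≤ K ∧ IsLip g K ∧ 0 < c ∧ (∀ x, c ≤ g x) ∧ (∀ x, g x ≤ 1) ∧
      LL T V g = g := by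
  obtain ⟨K, hK0, hK⟩ := resolvent_lip h hV hsub
  set s : ℕ → ℝ := fun n => 1 - 1 / ((n : ℝ) + 2) with hs
  have hs0 : ∀ n, 0 < s n := fun n => by
    have : 1 / ((n : ℝ) + 2) < 1 := by
      rw [div_lt_one (by positivity)]
      have : (0 : ℝ) ≤ n := by positivity
      linarith
    simp only [hs]; linarith
  have hs1 : ∀ n, s n < 1 := fun n => by
    have : 0 < 1 / ((n : ℝ) + 2) := by positivity
    simp only [hs]; linarith
  choose G hG1 hG2 hG3 hG4 hG5 using fun n => FKresolvent h hN hsub (hs0 n) (hs1 n)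
  have hGn : ∀ n : ℕ, (n : ℝ) + 2 ≤ ‖G n‖ := fun n => by
    refine le_trans (le_of_eq ?_) (hG3 n)
    simp [hs]
  have hGpos : ∀ n, 0 < ‖G n‖ := fun n => lt_of_lt_of_le (by positivity) (hGn n)
  have hGge : ∀ n, 1 ≤ ‖G n‖ := fun n => by
    have := hGn n
    have : (0 : ℝ) ≤ n := by positivity
    linarith
  have hGlip : ∀ n, IsLip (G n) (K * ‖G n‖) := fun n =>
    IsLip.of_tendsto (hK (s n) (hs0 n) (hs1 n) (G n) (hGge n) (hG4 n)) (hG5 n)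
  set u : ℕ → C(X, ℝ) := fun n => ‖G n‖⁻¹ • G n with hu
  have hunorm : ∀ n, ‖u n‖ = 1 := fun n => by
    simp only [hu, norm_smul, norm_inv, norm_norm]
    exact inv_mul_cancel₀ (hGpos n).ne'
  have humem : ∀ n, u n ∈ {f : C(X, ℝ) | IsLip f K ∧ ∀ x, f x ∈ Set.Icc (0 : ℝ) 1} := by
    intro n
    refine ⟨?_, fun x => ⟨?_, ?_⟩⟩
    · have := (hGlip n).smul (‖G n‖⁻¹)
      rw [abs_of_nonneg (by positivity)] at this
      refine this.mono (le_of_eq ?_)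
      field_simp [(hGpos n).ne']
    · have := leC.1 (hG1 n) x
      simp only [hu, ContinuousMap.smul_apply, smul_eq_mul, ContinuousMap.one_apply] at *
      have : 0 ≤ G n x := by linarith
      positivity
    · rw [← hunorm n]; exact leC_norm _ x
  obtain ⟨g, hg, φ, hφ, hlim⟩ := (compact_lip (X := X) K).tendsto_subseq humem
  have hueq : ∀ n, u n = ‖G n‖⁻¹ • 1 + s n • LL T V (u n) := by
    intro n
    have : ‖G n‖⁻¹ • G n = ‖G n‖⁻¹ • (1 + s n • LL T V (G n)) := by rw [← hG2 n]
    simp only [hu, map_smul]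
    rw [this, smul_add, smul_comm]
  have hs_lim : Tendsto s atTop (𝓝 1) := by
    have : Tendsto (fun n : ℕ => 1 / ((n : ℝ) + 2)) atTop (𝓝 0) := by
      refine Tendsto.div_atTop tendsto_const_nhds ?_
      exact tendsto_atTop_add_const_right _ _ tendsto_natCast_atTop_atTop
    simpa [hs] using (tendsto_const_nhds (x := (1 : ℝ))).sub this
  have hGlim : Tendsto (fun n => ‖G n‖⁻¹) atTop (𝓝 0) := by
    refine Tendsto.inv_tendsto_atTop (tendsto_atTop_mono hGn ?_)
    exact tendsto_atTop_add_const_right _ _ tendsto_natCast_atTop_atTop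
  have hLg : LL T V g = g := by
    have t1 : Tendsto (fun n => ‖G (φ n)‖⁻¹ • (1 : C(X, ℝ)) + s (φ n) • LL T V (u (φ n))) atTop
        (𝓝 ((0 : ℝ) • (1 : C(X, ℝ)) + (1 : ℝ) • LL T V g)) := by
      refine Tendsto.add ((hGlim.comp hφ.tendsto_atTop).smul_const _) ?_
      exact (hs_lim.comp hφ.tendsto_atTop).smul (((LL T V).continuous.tendsto g).comp hlim)
    have t2 : Tendsto (fun n => ‖G (φ n)‖⁻¹ • (1 : C(X, ℝ)) + s (φ n) • LL T V (u (φ n))) atTop (𝓝 g) := by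
      refine hlim.congr fun n => ?_
      exact hueq (φ n)
    have := tendsto_nhds_unique t1 t2
    simpa using this
  have hgn : ‖g‖ = 1 := by
    have := hlim.norm
    refine tendsto_nhds_unique this ?_
    refine tendsto_const_nhds.congr fun n => ?_
    exact (hunorm (φ n)).symm
  have hgpow : ∀ n, (LL T V ^ n) g = g := by
    intro n
    induction n with
    | zero => simp
    | succ n ih => rw [pow_succ, mul_apply_eq_comp, hLg, ih]
  obtain ⟨y, -, hy⟩ := isCompact_univ.exists_isMaxOn (Set.univ_nonempty) (g.continuous.continuousOn)
  have hy1 : 1 ≤ g y := by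
    rw [← hgn, ContinuousMap.norm_le _ ((hg.2 y).1)]
    intro x
    rw [Real.norm_eq_abs, abs_of_nonneg (hg.2 x).1]
    exact hy (Set.mem_univ x)
  obtain ⟨N, p, hp, hirr⟩ := h.irr (1 / (2 * (K + 1))) (by positivity)
  have hg0 : 0 ≤ g := nonnegC.2 fun x => (hg.2 x).1
  have hlow := hirr V g hg0 (1 / 2) (by norm_num) y ?_
  · refine ⟨g, K, p * Real.exp (-(N * ‖V‖)) * (1 / 2), hK0, hg.1, by positivity, fun x => ?_, fun x => (hg.2 x).2, hLg⟩
    have := hlow x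
    rwa [hgpow] at this
  · intro z hz
    have h1 := (abs_le.1 (hg.1 z y)).1
    have h2 : K * dist z y ≤ 1 / 2 := by
      rw [lt_div_iff₀ (by positivity)] at hz
      have := dist_nonneg (x := z) (y := y)
      nlinarith
    linarith

end LDPeig

section LDPder
variable {X : Type*} [MetricSpace X] [CompactSpace X]
variable {T : C(X, ℝ) →L[ℝ] C(X, ℝ)} {q : ℝ}

/-- `g` is a positive Lipschitz eigenfunction of `LL T V` with eigenvalue `exp l`. -/
structure IsEig (T : C(X, ℝ) →L[ℝ] C(X, ℝ)) (V : C(X, ℝ)) (l : ℝ) (g : C(X, ℝ)) (K c : ℝ) :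
    Prop where
  K0 : 0 ≤ K
  lip : IsLip g K
  c0 : 0 < c
  low : ∀ x, c ≤ g x
  up : ∀ x, g x ≤ 1
  eig : LL T V g = Real.exp l • g

lemma LLpow_low (h : Setup T q) (V : C(X, ℝ)) (n : ℕ) :
    Real.exp (-‖V‖) ^ n • (1 : C(X, ℝ)) ≤ (LL T V ^ n) 1 := by
  have h1 : Real.exp (-‖V‖) • (1 : C(X, ℝ)) ≤ LL T V 1 := by
    have : 0 ≤ T (expC V * 1 - Real.exp (-‖V‖) • (1 : C(X, ℝ))) := by
      apply h.pos
      rw [nonnegC]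
      intro x
      have : |V x| ≤ ‖V‖ := V.norm_coe_le_norm x
      simpa using (abs_le.1 this).1
    rw [map_sub, map_smul, h.one] at this
    exact sub_nonneg.1 this
  induction n with
  | zero => simp
  | succ n ih =>
    rw [pow_succ' (LL T V), mul_apply_eq_comp]
    calc _ = Real.exp (-‖V‖) ^ n • (Real.exp (-‖V‖) • (1 : C(X, ℝ))) := by
            rw [smul_smul, pow_succ]
      _ ≤ Real.exp (-‖V‖) ^ n • LL T V 1 := smul_le_smul_of_nonneg_left h1 (by positivity)
      _ = LL T V (Real.exp (-‖V‖) ^ n • 1) := (map_smul _ _ _).symm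
      _ ≤ _ := LL_mono h V ih

lemma exists_eig (h : Setup T q) [Nonempty X] {V : C(X, ℝ)} {DV : ℝ} (hV : IsLip V DV) :
    ∃ l g K c, IsEig T V l g K c := by
  have hlow : ∀ n : ℕ, Real.exp (-‖V‖) ^ n ≤ ‖(LL T V ^ n) 1‖ := by
    intro n
    obtain ⟨x⟩ := ‹Nonempty X›
    have := leC.1 (LLpow_low h V n) x
    simp only [ContinuousMap.smul_apply, ContinuousMap.one_apply, smul_eq_mul, mul_one] at this
    exact this.trans (leC_norm _ x)
  have hpos : ∀ n : ℕ, 0 < ‖(LL T V ^ n) 1‖ := fun n =>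
    lt_of_lt_of_le (by positivity) (hlow n)
  set u : ℕ → ℝ := fun n => Real.log ‖(LL T V ^ n) 1‖ with hu
  have hsubadd : Subadditive u := by
    intro m n
    simp only [hu]
    rw [← Real.log_mul (hpos m).ne' (hpos n).ne']
    apply Real.log_le_log (hpos _)
    rw [pow_add, mul_apply_eq_comp, mul_comm]
    exact LLpow_norm h V m _
  have hbdd : BddBelow (Set.range fun n => u n / n) := by
    refine ⟨-‖V‖, ?_⟩
    rintro _ ⟨n, rfl⟩
    simp only
    rcases Nat.eq_zero_or_pos n with rfl | hn
    · simp
    · rw [le_div_iff₀ (by positivity)]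
      have := Real.log_le_log (by positivity) (hlow n)
      rw [Real.log_pow, Real.log_exp] at this
      simp only [hu]
      linarith
  set l := hsubadd.lim with hl
  have hpw : ∀ n, ‖(LL T (V - ContinuousMap.const X l) ^ n) 1‖ = Real.exp (u n - n * l) := by
    intro n
    rw [LL_sub_const, smul_pow, smul_apply, norm_smul, ← Real.exp_nat_mul, Real.norm_eq_abs,
      abs_of_pos (Real.exp_pos _), Real.exp_sub, hu]
    simp only
    rw [Real.exp_log (hpos n), mul_neg, Real.exp_neg]
    field_simp
  have hlip : IsLip (V - ContinuousMap.const X l) DV := fun x y => by simpa using hV x y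
  obtain ⟨g, K, c, hK, hg, hc, h1, h2, h3⟩ := eig_norm h hlip (fun n => by
    rw [hpw]
    apply Real.one_le_exp
    rcases Nat.eq_zero_or_pos n with rfl | hn
    · simp [hu]
    · have := hsubadd.lim_le_div hbdd hn.ne'
      rw [le_div_iff₀ (by positivity)] at this
      linarith) (fun η hη => by
    have := (hsubadd.tendsto_lim hbdd).eventually (Iio_mem_nhds (show l < l + η by linarith))
    filter_upwards [this, eventually_gt_atTop 0] with n hn hn0
    rw [hpw]
    apply Real.exp_le_exp.2
    rw [div_lt_iff₀ (by positivity)] at hn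
    linarith)
  refine ⟨l, g, K, c, hK, hg, hc, h1, h2, ?_⟩
  rw [LL_sub_const, smul_apply] at h3
  rw [← h3, smul_smul, ← Real.exp_add]
  simp [h3]

lemma IsEig.pow {V : C(X, ℝ)} {l : ℝ} {g : C(X, ℝ)} {K c : ℝ} (hg : IsEig T V l g K c) (n : ℕ) :
    (LL T V ^ n) g = Real.exp (n * l) • g := by
  induction n with
  | zero => simp
  | succ n ih =>
    rw [pow_succ, mul_apply_eq_comp, hg.eig, map_smul, ih, smul_smul, ← Real.exp_add]
    congr 2
    push_cast
    ring

/-- Comparison principle. -/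
lemma IsEig.le_of_super (h : Setup T q) [Nonempty X] {V : C(X, ℝ)} {l : ℝ} {g : C(X, ℝ)} {K c : ℝ}
    (hg : IsEig T V l g K c) {ψ : C(X, ℝ)} {c' a : ℝ} (hc' : 0 < c') (hψ : ∀ x, c' ≤ ψ x)
    (hle : LL T V ψ ≤ Real.exp a • ψ) : l ≤ a := by
  have hpow : ∀ n : ℕ, (LL T V ^ n) ψ ≤ Real.exp (n * a) • ψ := by
    intro n
    induction n with
    | zero => simp
    | succ n ih =>
      rw [pow_succ', mul_apply_eq_comp]
      calc LL T V ((LL T V ^ n) ψ) ≤ LL T V (Real.exp (n * a) • ψ) := LL_mono h V ih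
        _ = Real.exp (n * a) • LL T V ψ := map_smul _ _ _
        _ ≤ Real.exp (n * a) • (Real.exp a • ψ) := smul_le_smul_of_nonneg_left hle (by positivity)
        _ = _ := by
          rw [smul_smul, ← Real.exp_add]
          congr 2
          push_cast
          ring
  obtain ⟨x⟩ := ‹Nonempty X›
  have hcmp : c' • g ≤ ψ := by
    rw [leC]
    intro y
    have h1 := hψ y
    have h2 := hg.up y
    simp only [ContinuousMap.smul_apply, smul_eq_mul]
    nlinarith
  have hn : ∀ n : ℕ, c' * c * Real.exp (n * (l - a)) ≤ ‖ψ‖ := by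
    intro n
    have h1 := leC.1 ((LLpow_mono h V n hcmp).trans (hpow n)) x
    rw [map_smul, hg.pow] at h1
    simp only [ContinuousMap.smul_apply, smul_eq_mul] at h1
    have h2 := hg.low x
    have h3 := leC_norm ψ x
    have e : Real.exp (n * (l - a)) = Real.exp (n * l) / Real.exp (n * a) := by
      rw [← Real.exp_sub]; congr 1; ring
    rw [e, ← mul_div_assoc, div_le_iff₀ (Real.exp_pos _)]
    calc c' * c * Real.exp (n * l) ≤ c' * g x * Real.exp (n * l) := by gcongr
      _ = c' * (Real.exp (n * l) * g x) := by ring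
      _ ≤ Real.exp (n * a) * ψ x := h1
      _ ≤ Real.exp (n * a) * ‖ψ‖ := by gcongr
      _ = _ := by ring
  by_contra hcon
  push Not at hcon
  have hd : 0 < l - a := by linarith
  have hcc : 0 < c' * c := mul_pos hc' hg.c0
  obtain ⟨n, hn2⟩ := exists_nat_gt (‖ψ‖ / (c' * c * (l - a)))
  rw [div_lt_iff₀ (by positivity)] at hn2
  have h5 := hn n
  have h6 : (n : ℝ) * (l - a) ≤ Real.exp (n * (l - a)) := by
    have := Real.add_one_le_exp ((n : ℝ) * (l - a))
    linarith
  have h7 : c' * c * (n * (l - a)) ≤ c' * c * Real.exp (n * (l - a)) := by gcongr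
  linarith

/-- The inverse of a positive function. -/
noncomputable def invC (g : C(X, ℝ)) (hg : ∀ x, g x ≠ 0) : C(X, ℝ) :=
  ⟨fun x => (g x)⁻¹, g.continuous.inv₀ hg⟩

lemma conv_K (h : Setup T q) [Nonempty X] {V : C(X, ℝ)} {DV : ℝ} (hV : IsLip V DV)
    {g : C(X, ℝ)} {K c : ℝ} (hg : IsEig T V 0 g K c) {W : C(X, ℝ)} {DW : ℝ} (hW : IsLip W DW) :
    ∃ e : ℝ, ∀ r : ℝ, 0 < r → ∃ n : ℕ, ∀ x, |(LL T V ^ (n + 1)) (g * W) x / g x - e| ≤ r := by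
  have hc0 := hg.c0
  have hgp : ∀ x, 0 < g x := fun x => lt_of_lt_of_le hg.c0 (hg.low x)
  have hgpow : ∀ n, (LL T V ^ n) g = g := fun n => by simpa using hg.pow n
  set F : ℕ → C(X, ℝ) := fun n => (LL T V ^ n) (g * W) with hF
  have hFadd : ∀ n m, F (n + m) = (LL T V ^ m) (F n) := by
    intro n m
    simp only [hF]
    rw [add_comm, pow_add, mul_apply_eq_comp]
  set φ : ℕ → C(X, ℝ) := fun n => invC g (fun x => (hgp x).ne') * F n with hφ
  have hφx : ∀ n x, φ n x = F n x / g x := by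
    intro n x
    simp only [hφ, ContinuousMap.mul_apply]
    change (g x)⁻¹ * _ = _
    field_simp
  have lowiff : ∀ n a, (∀ x, a ≤ φ n x) ↔ a • g ≤ F n := by
    intro n a
    rw [leC]
    refine forall_congr' fun x => ?_
    rw [hφx, le_div_iff₀ (hgp x)]
    rfl
  have upiff : ∀ n a, (∀ x, φ n x ≤ a) ↔ F n ≤ a • g := by
    intro n a
    rw [leC]
    refine forall_congr' fun x => ?_
    rw [hφx, div_le_iff₀ (hgp x)]
    rfl
  have lowmono : ∀ n m a, (∀ x, a ≤ φ n x) → ∀ x, a ≤ φ (n + m) x := by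
    intro n m a ha
    rw [lowiff] at *
    have := LLpow_mono h V m ha
    rwa [map_smul, hgpow, ← hFadd] at this
  have upmono : ∀ n m a, (∀ x, φ n x ≤ a) → ∀ x, φ (n + m) x ≤ a := by
    intro n m a ha
    rw [upiff] at *
    have := LLpow_mono h V m ha
    rwa [map_smul, hgpow, ← hFadd] at this
  have hφ0 : ∀ x, φ 0 x = W x := by
    intro x
    rw [hφx]
    simp only [hF, pow_zero, ContinuousLinearMap.one_apply, ContinuousMap.mul_apply]
    have := (hgp x).ne'
    field_simp
  have hub : ∀ n x, φ n x ≤ ‖W‖ := by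
    intro n
    have := upmono 0 n ‖W‖ (fun x => by rw [hφ0]; exact leC_norm W x)
    simpa using this
  -- uniform bound of powers
  have hL1 : ∀ n, ‖(LL T V ^ n) 1‖ ≤ c⁻¹ := by
    intro n
    have h1 : (1 : C(X, ℝ)) ≤ c⁻¹ • g := by
      rw [leC]
      intro x
      simp only [ContinuousMap.one_apply, ContinuousMap.smul_apply, smul_eq_mul]
      rw [← div_eq_inv_mul, le_div_iff₀ hc0, one_mul]
      exact hg.low x
    have h2 := LLpow_mono h V n h1
    rw [map_smul, hgpow] at h2
    rw [ContinuousMap.norm_le _ (by positivity)]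
    intro x
    rw [Real.norm_eq_abs, abs_of_nonneg (nonnegC.1 (LLpow_pos h V n zero_le_one) x)]
    refine (leC.1 h2 x).trans ?_
    simp only [ContinuousMap.smul_apply, smul_eq_mul]
    exact mul_le_of_le_one_right (by positivity) (hg.up x)
  obtain ⟨m, hm0, hm⟩ : ∃ m : ℕ, 0 < m ∧ q ^ m * ‖(LL T V ^ m) 1‖ ≤ 1 / 2 := by
    have ht := tendsto_pow_atTop_nhds_zero_of_lt_one h.q0 h.q1
    have ht2 := ht.eventually (Iic_mem_nhds (show (0 : ℝ) < c / 2 by positivity))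
    obtain ⟨m, h1, h2⟩ := (ht2.and (eventually_gt_atTop 0)).exists
    refine ⟨m, h2, ?_⟩
    have := h.q0
    calc _ ≤ (c / 2) * c⁻¹ := by
          have := hL1 m
          have : q ^ m ≤ c / 2 := h1
          gcongr
      _ = _ := by field_simp
  obtain ⟨b, hb, H⟩ := LYhalf h hV m hm
  -- uniform Lipschitz bound
  obtain ⟨A, hA0, hA⟩ : ∃ A, 0 ≤ A ∧ ∀ k, IsLip (F (m * k)) A := by
    have h0 : IsLip (g * W) |‖g‖ * DW + ‖W‖ * K| := (hg.lip.mul hW).mono (le_abs_self _)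
    refine ⟨|‖g‖ * DW + ‖W‖ * K| + 2 * (b * (‖g * W‖ * c⁻¹)), by positivity, fun k => ?_⟩
    induction k with
    | zero =>
      simp only [mul_zero, hF, pow_zero, ContinuousLinearMap.one_apply]
      refine h0.mono ?_
      have : 0 ≤ 2 * (b * (‖g * W‖ * c⁻¹)) := by positivity
      linarith
    | succ k ih =>
      rw [mul_add, mul_one, hFadd]
      refine (H _ _ (by positivity) ih).mono ?_
      have h1 : ‖F (m * k)‖ ≤ ‖g * W‖ * c⁻¹ :=
        (LLpow_norm h V (m * k) (g * W)).trans (mul_le_mul_of_nonneg_left (hL1 _) (norm_nonneg _))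
      have h2 : b * ‖F (m * k)‖ ≤ b * (‖g * W‖ * c⁻¹) := by gcongr
      have := abs_nonneg (‖g‖ * DW + ‖W‖ * K)
      linarith
  obtain ⟨A', hA'0, hA'⟩ : ∃ A, 0 ≤ A ∧ ∀ k, IsLip (φ (m * k)) A := by
    have hinv : IsLip (invC g (fun x => (hgp x).ne')) (K / c ^ 2) := by
      intro x y
      change |(g x)⁻¹ - (g y)⁻¹| ≤ _
      have hx := hgp x
      have hy := hgp y
      rw [inv_sub_inv hx.ne' hy.ne', abs_div, abs_of_pos (mul_pos hx hy), div_mul_eq_mul_div]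
      have := hg.lip y x
      rw [dist_comm] at this
      have hx := hg.low x
      have hy := hg.low y
      have hK := hg.K0
      have h3 : c ^ 2 ≤ g x * g y := by rw [sq]; gcongr
      gcongr
    refine ⟨‖invC g (fun x => (hgp x).ne')‖ * A + (‖g * W‖ * c⁻¹) * (K / c ^ 2), ?_, fun k => ?_⟩
    · have hK := hg.K0
      positivity
    · refine (hinv.mul (hA k)).mono ?_
      have h1 : ‖F (m * k)‖ ≤ ‖g * W‖ * c⁻¹ :=
        (LLpow_norm h V (m * k) (g * W)).trans (mul_le_mul_of_nonneg_left (hL1 _) (norm_nonneg _))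
      have hK := hg.K0
      gcongr
  have exmin : ∀ n, ∃ y, ∀ x, φ n y ≤ φ n x := fun n => by
    obtain ⟨y, -, hy⟩ := isCompact_univ.exists_isMinOn (Set.univ_nonempty) ((φ n).continuous.continuousOn)
    exact ⟨y, fun x => hy (Set.mem_univ x)⟩
  have exmax : ∀ n, ∃ y, ∀ x, φ n x ≤ φ n y := fun n => by
    obtain ⟨y, -, hy⟩ := isCompact_univ.exists_isMaxOn (Set.univ_nonempty) ((φ n).continuous.continuousOn)
    exact ⟨y, fun x => hy (Set.mem_univ x)⟩
  choose ym hym using exmin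
  choose yM hyM using exmax
  -- oscillation goes to zero
  have hosc : ∀ w : ℝ, 0 < w → ∃ n, φ n (yM n) - φ n (ym n) < w := by
    intro w hw
    by_contra hcon
    push Not at hcon
    obtain ⟨N, p, hp, hirr⟩ := h.irr (w / (2 * (A' + 1))) (by positivity)
    set δ := p * Real.exp (-(N * ‖V‖)) * (c * (w / 2)) with hδ
    have hδ0 : 0 < δ := by positivity
    have step : ∀ k, ∀ x, φ (m * k) (ym (m * k)) + δ ≤ φ (m * k + N) x := by
      intro k
      set n := m * k with hn
      set a := φ n (ym n) with ha
      have hlow := (lowiff n a).1 (hym n)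
      have := hirr V (F n - a • g) (sub_nonneg.2 hlow) (c * (w / 2)) (by positivity) (yM n) ?_
      · rw [lowiff, leC]
        intro x
        have h1 := this x
        rw [map_sub, map_smul, hgpow, ← hFadd, ← hδ] at h1
        simp only [ContinuousMap.sub_apply, ContinuousMap.smul_apply, smul_eq_mul] at h1 ⊢
        have := hg.up x
        nlinarith
      · intro z hz
        simp only [ContinuousMap.sub_apply, ContinuousMap.smul_apply, smul_eq_mul]
        have e : F n z = φ n z * g z := by
          rw [hφx]; have := (hgp z).ne'; field_simp
        have h1 := (abs_le.1 (hA' k z (yM n))).1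
        rw [← hn] at h1
        have h2 : A' * dist z (yM n) ≤ w / 2 := by
          rw [lt_div_iff₀ (by positivity)] at hz
          have := dist_nonneg (x := z) (y := yM n)
          nlinarith
        have h3 := hcon n
        have h4 : w / 2 ≤ φ n z - a := by linarith
        have h5 := hg.low z
        rw [e]
        nlinarith
    have iter : ∀ j : ℕ, ∀ x, φ 0 (ym 0) + j * δ ≤ φ (m * (N * j)) x := by
      intro j
      induction j with
      | zero => simpa using hym 0
      | succ j ih =>
        intro x
        have h1 := step (N * j)
        obtain ⟨d, hd⟩ : ∃ d, m * (N * (j + 1)) = m * (N * j) + N + d := by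
          refine ⟨m * N - N, ?_⟩
          have : N ≤ m * N := Nat.le_mul_of_pos_left N hm0
          have e : m * (N * (j + 1)) = m * (N * j) + m * N := by ring
          omega
        have h2 := lowmono _ d _ h1 x
        rw [hd]
        refine le_trans ?_ h2
        have := ih (ym (m * (N * j)))
        push_cast
        linarith
    obtain ⟨j, hj⟩ := exists_nat_gt ((‖W‖ - φ 0 (ym 0)) / δ)
    rw [div_lt_iff₀ hδ0] at hj
    have h1 := iter j (ym 0)
    have h2 := hub (m * (N * j)) (ym 0)
    linarith
  have hmono : ∀ n k x, φ n (ym n) ≤ φ (n + k) x ∧ φ (n + k) x ≤ φ n (yM n) := fun n k x =>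
    ⟨lowmono n k _ (hym n) x, upmono n k _ (hyM n) x⟩
  have hcross : ∀ n k, φ n (ym n) ≤ φ k (yM k) := by
    intro n k
    have h1 := lowmono n k _ (hym n) (ym n)
    have h2 := upmono k n _ (hyM k) (ym n)
    rw [add_comm] at h2
    exact h1.trans h2
  have hbd : BddAbove (Set.range fun n => φ n (ym n)) := by
    refine ⟨φ 0 (yM 0), ?_⟩
    rintro _ ⟨n, rfl⟩
    exact hcross n 0
  refine ⟨⨆ n, φ n (ym n), fun r hr => ?_⟩
  obtain ⟨n, hn⟩ := hosc r hr
  refine ⟨n, fun x => ?_⟩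
  have h1 : φ n (ym n) ≤ ⨆ n, φ n (ym n) := le_ciSup hbd n
  have h2 : ⨆ n, φ n (ym n) ≤ φ n (yM n) := ciSup_le fun k => hcross k n
  have h3 := hmono n 1 x
  have e : (LL T V ^ (n + 1)) (g * W) x / g x = φ (n + 1) x := (hφx _ _).symm
  rw [e, abs_le]
  constructor <;> linarith

/-- Differentiability of the pressure (one-sided linear upper bound). -/
lemma pressure_diff (h : Setup T q) [Nonempty X] {V : C(X, ℝ)} {DV : ℝ} (hV : IsLip V DV)
    {l : ℝ} {g : C(X, ℝ)} {K c : ℝ} (hg : IsEig T V l g K c) {W : C(X, ℝ)} {DW : ℝ}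
    (hW : IsLip W DW) :
    ∃ e : ℝ, ∀ r : ℝ, 0 < r → ∃ t0 : ℝ, 0 < t0 ∧ ∀ t : ℝ, |t| ≤ t0 →
      ∀ l' g' K' c', IsEig T (V + t • W) l' g' K' c' → l' ≤ l + t * e + |t| * r := by
  set V' := V - ContinuousMap.const X l with hV'
  have hlip : IsLip V' DV := fun x y => by simpa [hV'] using hV x y
  have hg' : IsEig T V' 0 g K c := by
    refine ⟨hg.K0, hg.lip, hg.c0, hg.low, hg.up, ?_⟩
    rw [hV', LL_sub_const, smul_apply, hg.eig, smul_smul, ← Real.exp_add]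
    simp
  have hgp : ∀ x, 0 < g x := fun x => lt_of_lt_of_le hg.c0 (hg.low x)
  obtain ⟨e, he⟩ := conv_K h hlip hg' hW
  refine ⟨e, fun r hr => ?_⟩
  obtain ⟨n, hn⟩ := he (r / 2) (by positivity)
  set F : ℕ → C(X, ℝ) := fun n => (LL T V' ^ n) (g * W) with hF
  set u : C(X, ℝ) := invC g (fun x => (hgp x).ne') * ∑ k ∈ Finset.range n, F (k + 1) with hu
  have hgu : g * u = ∑ k ∈ Finset.range n, F (k + 1) := by
    ext x
    simp only [hu, ContinuousMap.mul_apply]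
    change g x * ((g x)⁻¹ * _) = _
    have := (hgp x).ne'
    field_simp
  have hLY : LL T V' (g * (W + u)) = g * u + F (n + 1) := by
    rw [mul_add, hgu, map_add, map_sum]
    have e1 : LL T V' (g * W) = F 1 := by simp [hF]
    have e2 : ∀ k, LL T V' (F k) = F (k + 1) := fun k => by
      simp only [hF]; rw [pow_succ', mul_apply_eq_comp]
    simp only [e2]
    rw [e1, ← Finset.sum_range_succ, Finset.sum_range_succ', add_comm]
  set Y := W + u with hY
  set M := ‖Y‖ with hM
  have hM0 : 0 ≤ M := norm_nonneg _
  refine ⟨min (1 / (M + 1)) (r / 2 / (M ^ 2 + 1)), by positivity, fun t ht l' g1 K' c' hg1 => ?_⟩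
  have ht1 : |t| * M ≤ 1 := by
    have h1 : |t| ≤ 1 / (M + 1) := ht.trans (min_le_left _ _)
    rw [le_div_iff₀ (by positivity)] at h1
    have := abs_nonneg t
    nlinarith
  have ht2 : |t| * M ^ 2 ≤ r / 2 := by
    have h1 := ht.trans (min_le_right _ _)
    rw [le_div_iff₀ (by positivity)] at h1
    have := abs_nonneg t
    nlinarith
  have hsq : t ^ 2 * M ^ 2 ≤ |t| * (r / 2) := by
    rw [← sq_abs, sq, mul_assoc]
    exact mul_le_mul_of_nonneg_left ht2 (abs_nonneg t)
  have hexp : expC (t • Y) ≤ 1 + t • Y + (t ^ 2 * M ^ 2) • (1 : C(X, ℝ)) := by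
    rw [leC]
    intro x
    simp only [expC_apply, ContinuousMap.add_apply, ContinuousMap.smul_apply, smul_eq_mul,
      ContinuousMap.one_apply, mul_one]
    have hYx : |Y x| ≤ M := Y.norm_coe_le_norm x
    have h1 : |t * Y x| ≤ 1 := by
      rw [abs_mul]
      exact (mul_le_mul_of_nonneg_left hYx (abs_nonneg t)).trans ht1
    have h2 := (abs_le.1 (Real.abs_exp_sub_one_sub_id_le h1)).2
    have h3 : (t * Y x) ^ 2 ≤ t ^ 2 * M ^ 2 := by
      rw [mul_pow]
      have : (Y x) ^ 2 ≤ M ^ 2 := by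
        rw [← sq_abs]; gcongr
      gcongr
    linarith
  set ψ : C(X, ℝ) := g * expC (t • u) with hψ
  have hψx : ∀ x, ψ x = g x * Real.exp (t * u x) := fun x => rfl
  have hkey : LL T (V + t • W) ψ ≤ Real.exp (l + t * e + |t| * r) • ψ := by
    have e1 : LL T (V + t • W) ψ = Real.exp l • LL T V' (g * expC (t • Y)) := by
      rw [hV', LL_sub_const, smul_apply, smul_smul, ← Real.exp_add]
      simp only [add_neg_cancel, Real.exp_zero, one_smul, LL_apply]
      congr 1
      ext x
      simp only [hψ, hY, ContinuousMap.mul_apply, expC_apply, ContinuousMap.add_apply,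
        ContinuousMap.smul_apply, smul_eq_mul, mul_add, Real.exp_add]
      ring
    have e2 : LL T V' (g * expC (t • Y)) ≤ g + t • (g * u + F (n + 1)) + (t ^ 2 * M ^ 2) • g := by
      have : g * expC (t • Y) ≤ g + t • (g * Y) + (t ^ 2 * M ^ 2) • g := by
        rw [leC] at hexp ⊢
        intro x
        have h1 := hexp x
        have h2 := hgp x
        simp only [ContinuousMap.mul_apply, ContinuousMap.add_apply, ContinuousMap.smul_apply,
          smul_eq_mul, ContinuousMap.one_apply, mul_one] at h1 ⊢
        nlinarith
      have h3 := LL_mono h V' this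
      rwa [map_add, map_add, map_smul, map_smul, hLY, hg'.eig, Real.exp_zero, one_smul] at h3
    rw [e1, leC]
    intro x
    have h1 := leC.1 e2 x
    simp only [ContinuousMap.add_apply, ContinuousMap.mul_apply, ContinuousMap.smul_apply,
      smul_eq_mul] at h1 ⊢
    have h2 : F (n + 1) x ≤ g x * (F (n + 1) x / g x) := by
      have := (hgp x).ne'
      apply le_of_eq; field_simp
    have h3 := abs_le.1 (hn x)
    set f := F (n + 1) x / g x with hf
    have hFf : F (n + 1) x = g x * f := by
      have := (hgp x).ne'
      rw [hf]; field_simp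
    have h4 : t * (f - e) ≤ |t| * (r / 2) := by
      refine (le_abs_self _).trans ?_
      rw [abs_mul]
      exact mul_le_mul_of_nonneg_left (hn x) (abs_nonneg t)
    have h5 : 1 + t * (u x + f) + t ^ 2 * M ^ 2 ≤ Real.exp (t * u x + t * e + |t| * r) := by
      have := Real.add_one_le_exp (t * u x + t * e + |t| * r)
      nlinarith
    rw [hψx]
    calc Real.exp l * (LL T V' (g * expC (t • Y))) x
        ≤ Real.exp l * (g x * (1 + t * (u x + f) + t ^ 2 * M ^ 2)) := by
          refine mul_le_mul_of_nonneg_left (h1.trans (le_of_eq ?_)) (Real.exp_pos _).le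
          rw [hFf]; ring
      _ ≤ Real.exp l * (g x * Real.exp (t * u x + t * e + |t| * r)) := by
          have := hgp x
          gcongr
      _ = _ := by
          simp only [Real.exp_add]; ring
  have hψlow : ∀ x, c * Real.exp (-(|t| * ‖u‖)) ≤ ψ x := by
    intro x
    rw [hψx]
    have h1 : |u x| ≤ ‖u‖ := u.norm_coe_le_norm x
    have h2 : -(|t| * ‖u‖) ≤ t * u x := by
      have : |t * u x| ≤ |t| * ‖u‖ := by
        rw [abs_mul]; gcongr
      linarith [(abs_le.1 this).1]
    have h3 := hg.low x
    have h4 := hg.c0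
    have h5 : 0 ≤ g x := h4.le.trans h3
    gcongr
  exact hg1.le_of_super h (mul_pos hg.c0 (Real.exp_pos _)) hψlow hkey

end LDPder

section LDPconc
variable {X E : Type*} [MetricSpace X] [CompactSpace X]
    [MeasurableSpace X] [BorelSpace X]
    [MetricSpace E] [CompactSpace E] [MeasurableSpace E] [BorelSpace E]

lemma intC (ℓ : Measure E) [IsProbabilityMeasure ℓ] {f : E → ℝ} (hf : Continuous f) :
    Integrable f ℓ := by
  have := hf.continuousOn.integrableOn_compact (μ := ℓ) (isCompact_univ)
  simpa using this

/-- The transition operator. -/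
noncomputable def TT (ℓ : Measure E) [IsProbabilityMeasure ℓ] (S : X × E → X)
    (hS : Continuous S) : C(X, ℝ) →L[ℝ] C(X, ℝ) :=
  LinearMap.mkContinuous
    { toFun := fun f => ⟨fun x => ∫ ζ, f (S (x, ζ)) ∂ℓ, by
        have := continuous_parametric_integral_of_continuous (μ := ℓ)
          (f := fun x ζ => f (S (x, ζ))) (by fun_prop) isCompact_univ
        simpa using this⟩
      map_add' := fun f g => by
        ext x
        exact integral_add (intC ℓ (by fun_prop)) (intC ℓ (by fun_prop))
      map_smul' := fun a f => by
        ext x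
        exact integral_const_mul a _ } 1 (fun f => by
    rw [one_mul, ContinuousMap.norm_le _ (norm_nonneg _)]
    intro x
    refine (norm_integral_le_of_norm_le_const (C := ‖f‖)
      (Eventually.of_forall fun ζ => f.norm_coe_le_norm _)).trans ?_
    simp)

lemma TT_apply (ℓ : Measure E) [IsProbabilityMeasure ℓ] (S : X × E → X)
    (hS : Continuous S) (f : C(X, ℝ)) (x : X) :
    TT ℓ S hS f x = ∫ ζ, f (S (x, ζ)) ∂ℓ := rfl

lemma TT_apply_map (ℓ : Measure E) [IsProbabilityMeasure ℓ] (S : X × E → X)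
    (hS : Continuous S) (f : C(X, ℝ)) (x : X) :
    TT ℓ S hS f x = ∫ y, f y ∂(Measure.map (fun ζ => S (x, ζ)) ℓ) := by
  have h1 : Measurable fun ζ => S (x, ζ) :=
    (show Continuous fun ζ => S (x, ζ) by fun_prop).measurable
  rw [TT_apply, integral_map h1.aemeasurable f.continuous.aestronglyMeasurable]

lemma TT_pos (ℓ : Measure E) [IsProbabilityMeasure ℓ] (S : X × E → X)
    (hS : Continuous S) (f : C(X, ℝ)) (hf : 0 ≤ f) : 0 ≤ TT ℓ S hS f :=
  fun x => integral_nonneg fun ζ => hf _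

lemma kernel_meas (ℓ : Measure E) [IsProbabilityMeasure ℓ] (S : X × E → X)
    (hS : Continuous S) : Measurable fun x => Measure.map (fun ζ => S (x, ζ)) ℓ := by
  refine Measure.measurable_of_measurable_coe _ fun s hs => ?_
  have h1 : ∀ x, Measurable fun ζ => S (x, ζ) := fun x =>
    (show Continuous fun ζ => S (x, ζ) by fun_prop).measurable
  simp only [fun x => Measure.map_apply (μ := ℓ) (h1 x) hs]
  exact measurable_measure_prodMk_left (hS.measurable hs)

lemma TT_pow (ℓ : Measure E) [IsProbabilityMeasure ℓ] (S : X × E → X)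
    (hS : Continuous S) (n : ℕ) (f : C(X, ℝ)) (hf : 0 ≤ f) (x : X) :
    ENNReal.ofReal ((TT ℓ S hS ^ n) f x) =
      ∫⁻ y, ENNReal.ofReal (f y) ∂(kIter (fun x => Measure.map (fun ζ => S (x, ζ)) ℓ) n x) := by
  have hm : ∀ f : C(X, ℝ), Measurable fun y => ENNReal.ofReal (f y) := fun f =>
    f.continuous.measurable.ennreal_ofReal
  induction n generalizing f with
  | zero => simp [kIter, lintegral_dirac' _ (hm f)]
  | succ n ih =>
    rw [pow_succ, kIter, Measure.lintegral_bind (kernel_meas ℓ S hS).aemeasurable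
      (hm f).aemeasurable]
    refine (ih (TT ℓ S hS f) (TT_pos ℓ S hS f hf)).trans (lintegral_congr fun y => ?_)
    have h1 : Measurable fun ζ => S (y, ζ) :=
      (show Continuous fun ζ => S (y, ζ) by fun_prop).measurable
    rw [lintegral_map (hm f) h1, TT_apply, ofReal_integral_eq_lintegral_ofReal
      (f := fun ζ => f (S (y, ζ)))
      (intC ℓ (by fun_prop)) (Eventually.of_forall fun ζ => nonnegC.1 hf _)]

lemma TT_LL_pow (ℓ : Measure E) [IsProbabilityMeasure ℓ] (S : X × E → X)
    (hS : Continuous S) (V : C(X, ℝ)) (n : ℕ) (f : C(X, ℝ)) (hf : 0 ≤ f) (x : X) :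
    Real.exp (-(n * ‖V‖)) * (TT ℓ S hS ^ n) f x ≤ (LL (TT ℓ S hS) V ^ n) f x := by
  induction n generalizing f x with
  | zero => simp
  | succ n ih =>
    have h0 : ∀ x, Real.exp (-‖V‖) * TT ℓ S hS f x ≤ LL (TT ℓ S hS) V f x := by
      intro x
      rw [LL_apply, TT_apply, TT_apply, ← integral_const_mul]
      refine integral_mono (intC ℓ (by fun_prop)) (intC ℓ (by fun_prop)) fun ζ => ?_
      have h1 : |V (S (x, ζ))| ≤ ‖V‖ := V.norm_coe_le_norm _
      have h2 := hf (S (x, ζ))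
      exact mul_le_mul_of_nonneg_right (Real.exp_le_exp.2 (abs_le.1 h1).1) h2
    have h1 : 0 ≤ LL (TT ℓ S hS) V f := by
      rw [LL_apply]
      exact TT_pos ℓ S hS _ (fun x => mul_nonneg (Real.exp_pos _).le (hf x))
    have hTp : ∀ m : ℕ, ∀ u : C(X, ℝ), 0 ≤ u → 0 ≤ (TT ℓ S hS ^ m) u := by
      intro m
      induction m with
      | zero => intro u hu; simpa using hu
      | succ m ihm => intro u hu; rw [pow_succ]; exact ihm _ (TT_pos ℓ S hS u hu)
    have h2 : 0 ≤ (TT ℓ S hS ^ n) (LL (TT ℓ S hS) V f - Real.exp (-‖V‖) • TT ℓ S hS f) := by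
      refine hTp _ _ (fun x => ?_)
      simpa using h0 x
    have h3 := nonnegC.1 h2 x
    rw [map_sub, map_smul] at h3
    simp only [ContinuousMap.zero_apply, ContinuousMap.sub_apply, ContinuousMap.smul_apply,
      smul_eq_mul] at h3
    have h4 := ih _ h1 x
    rw [pow_succ, pow_succ]
    show _ * (TT ℓ S hS ^ n) (TT ℓ S hS f) x ≤ (LL (TT ℓ S hS) V ^ n) (LL (TT ℓ S hS) V f) x
    refine le_trans ?_ h4
    have e : Real.exp (-(((n + 1 : ℕ) : ℝ) * ‖V‖)) = Real.exp (-(n * ‖V‖)) * Real.exp (-‖V‖) := by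
      rw [← Real.exp_add]; congr 1; push_cast; ring
    rw [e, mul_assoc]
    exact mul_le_mul_of_nonneg_left (by linarith) (Real.exp_pos _).le

lemma setupTT
    (ℓ : Measure E) [IsProbabilityMeasure ℓ]
    (S : X × E → X) (hS : Continuous S)
    (κ : X → Measure X) (hκdef : κ = fun x => Measure.map (fun ζ => S (x, ζ)) ℓ)
    (hI : ∀ ε : ℝ, 0 < ε → ∃ (N : ℕ) (p : ℝ≥0∞), 0 < p ∧
      ∀ x y : X, p < kIter κ N x (Metric.ball y ε))
    {Ω₀ : Type*} [MeasurableSpace Ω₀] (P₀ : Measure Ω₀) [IsProbabilityMeasure P₀]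
    (q : ℝ) (hq0 : 0 ≤ q) (hq1 : q < 1) (C : ℝ) (hC : 0 < C)
    (R R' : X → X → Ω₀ → X)
    (hRmeas : Measurable fun p : (X × X) × Ω₀ => R p.1.1 p.1.2 p.2)
    (hR'meas : Measurable fun p : (X × X) × Ω₀ => R' p.1.1 p.1.2 p.2)
    (hRlaw : ∀ x x' : X, Measure.map (R x x') P₀ = κ x)
    (hR'law : ∀ x x' : X, Measure.map (R' x x') P₀ = κ x')
    (hcouple : ∀ x x' : X,
      P₀ {ω | q * dist x x' < dist (R x x' ω) (R' x x' ω)} ≤ ENNReal.ofReal (C * dist x x')) :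
    Setup (TT ℓ S hS) q where
  pos := TT_pos ℓ S hS
  one := by ext x; simp [TT_apply]
  q0 := hq0
  q1 := hq1
  ly := by
    intro V D hV
    refine ⟨Real.exp ‖V‖ * (q * |D| + 2 * C) * Real.exp ‖V‖, by positivity, ?_⟩
    intro f w hw hf x x'
    have hRm : Measurable (R x x') := hRmeas.comp (measurable_prodMk_left (x := (x, x')))
    have hRm' : Measurable (R' x x') := hR'meas.comp (measurable_prodMk_left (x := (x, x')))
    have rep : ∀ u : C(X, ℝ), LL (TT ℓ S hS) V u x =
        ∫ ω, Real.exp (V (R x x' ω)) * u (R x x' ω) ∂P₀ := by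
      intro u
      rw [LL_apply, TT_apply_map]
      have : Measure.map (fun ζ => S (x, ζ)) ℓ = κ x := by rw [hκdef]
      rw [this, ← hRlaw x x', integral_map hRm.aemeasurable
        (expC V * u).continuous.aestronglyMeasurable]
      rfl
    have rep' : ∀ u : C(X, ℝ), LL (TT ℓ S hS) V u x' =
        ∫ ω, Real.exp (V (R' x x' ω)) * u (R' x x' ω) ∂P₀ := by
      intro u
      rw [LL_apply, TT_apply_map]
      have : Measure.map (fun ζ => S (x', ζ)) ℓ = κ x' := by rw [hκdef]
      rw [this, ← hR'law x x', integral_map hRm'.aemeasurable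
        (expC V * u).continuous.aestronglyMeasurable]
      rfl
    have int1 : ∀ (u : C(X, ℝ)) (r : Ω₀ → X), Measurable r →
        Integrable (fun ω => Real.exp (V (r ω)) * u (r ω)) P₀ := by
      intro u r hr
      refine Integrable.of_bound ((expC V * u).continuous.measurable.comp hr).aestronglyMeasurable
        ‖expC V * u‖ (Eventually.of_forall fun ω => ?_)
      exact (expC V * u).norm_coe_le_norm (r ω)
    set bad := {ω | q * dist x x' < dist (R x x' ω) (R' x x' ω)} with hbad
    have hbm : MeasurableSet bad :=
      measurableSet_lt measurable_const (hRm.dist hRm')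
    set d := dist x x' with hd
    have hd0 : 0 ≤ d := dist_nonneg
    set M := Real.exp ‖V‖ with hM
    have hM1 : 1 ≤ M := Real.one_le_exp (norm_nonneg _)
    have hMe : ∀ y, Real.exp (V y) ≤ M := fun y => Real.exp_le_exp.2 (leC_norm V y)
    have hfn : ∀ y, |f y| ≤ ‖f‖ := fun y => f.norm_coe_le_norm y
    have hVl : ∀ y y', |Real.exp (V y) - Real.exp (V y')| ≤ M * (|D| * dist y y') := by
      intro y y'
      have h1 : |V y - V y'| ≤ |D| * dist y y' :=
        (hV y y').trans (mul_le_mul_of_nonneg_right (le_abs_self _) dist_nonneg)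
      rw [abs_le] at h1
      have h2 := Real.add_one_le_exp (V y - V y')
      have h3 := Real.add_one_le_exp (V y' - V y)
      have e1 : Real.exp (V y') * Real.exp (V y - V y') = Real.exp (V y) := by
        rw [← Real.exp_add]; congr 1; ring
      have e2 : Real.exp (V y) * Real.exp (V y' - V y) = Real.exp (V y') := by
        rw [← Real.exp_add]; congr 1; ring
      have p1 := Real.exp_pos (V y)
      have p2 := Real.exp_pos (V y')
      have m1 := hMe y
      have m2 := hMe y'
      have hk : 0 ≤ |D| * dist y y' := by positivity
      rw [abs_le]
      constructor <;> nlinarith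
    have pt : ∀ ω, |Real.exp (V (R x x' ω)) * f (R x x' ω)
        - Real.exp (V (R' x x' ω)) * f (R' x x' ω)| ≤
        q * d * (Real.exp (V (R x x' ω)) * w (R x x' ω)) + q * d * |D| * M * ‖f‖
          + 2 * M * ‖f‖ * bad.indicator 1 ω := by
      intro ω
      set y := R x x' ω
      set y' := R' x x' ω
      have hwy : 0 ≤ w y := nonnegC.1 hw y
      have hE := Real.exp_pos (V y)
      have hE' := Real.exp_pos (V y')
      by_cases hω : ω ∈ bad
      · rw [Set.indicator_of_mem hω, Pi.one_apply, mul_one]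
        have h1 : |Real.exp (V y) * f y| ≤ M * ‖f‖ := by
          rw [abs_mul, abs_of_pos hE]
          exact mul_le_mul (hMe y) (hfn y) (abs_nonneg _) (by positivity)
        have h2 : |Real.exp (V y') * f y'| ≤ M * ‖f‖ := by
          rw [abs_mul, abs_of_pos hE']
          exact mul_le_mul (hMe y') (hfn y') (abs_nonneg _) (by positivity)
        have h3 := abs_sub (Real.exp (V y) * f y) (Real.exp (V y') * f y')
        have h4 : 0 ≤ q * d * (Real.exp (V y) * w y) := by positivity
        have h5 : 0 ≤ q * d * |D| * M * ‖f‖ := by positivity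
        linarith
      · rw [Set.indicator_of_notMem hω, mul_zero, add_zero]
        have hdist : dist y y' ≤ q * d := not_lt.1 hω
        have e : Real.exp (V y) * f y - Real.exp (V y') * f y' =
          Real.exp (V y) * (f y - f y') + (Real.exp (V y) - Real.exp (V y')) * f y' := by ring
        rw [e]
        refine (abs_add_le _ _).trans (add_le_add ?_ ?_)
        · rw [abs_mul, abs_of_pos hE]
          calc _ ≤ Real.exp (V y) * (dist y y' * w y) :=
                mul_le_mul_of_nonneg_left (hf y y') hE.le
            _ ≤ Real.exp (V y) * (q * d * w y) := by gcongr
            _ = _ := by ring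
        · rw [abs_mul]
          calc _ ≤ (M * (|D| * dist y y')) * ‖f‖ :=
                mul_le_mul (hVl y y') (hfn y') (abs_nonneg _) (by positivity)
            _ ≤ (M * (|D| * (q * d))) * ‖f‖ := by gcongr
            _ = _ := by ring
    have hbadint : Integrable (bad.indicator (1 : Ω₀ → ℝ)) P₀ :=
      (integrable_const (1 : ℝ)).indicator hbm
    have hP : P₀.real bad ≤ C * d := by
      refine ENNReal.toReal_le_of_le_ofReal (by positivity) (hcouple x x')
    rw [rep f, rep' f, rep w, ← integral_sub (int1 f _ hRm) (int1 f _ hRm')]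
    have i1 := (int1 w _ hRm).const_mul (q * d)
    have i3 := hbadint.const_mul (2 * M * ‖f‖)
    have key : ∫ ω, |Real.exp (V (R x x' ω)) * f (R x x' ω)
        - Real.exp (V (R' x x' ω)) * f (R' x x' ω)| ∂P₀ ≤
        q * d * (∫ ω, Real.exp (V (R x x' ω)) * w (R x x' ω) ∂P₀) + q * d * |D| * M * ‖f‖
          + 2 * M * ‖f‖ * P₀.real bad := by
      refine (integral_mono ((int1 f _ hRm).sub (int1 f _ hRm')).abs
        ((i1.add (integrable_const (q * d * |D| * M * ‖f‖))).add i3) pt).trans (le_of_eq ?_)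
      rw [integral_add' (i1.add (integrable_const _)) i3, integral_add' i1 (integrable_const _),
        integral_const_mul, integral_const_mul, integral_const_mul, integral_indicator_one hbm]
      simp
    refine abs_integral_le_integral_abs.trans (key.trans ?_)
    set J := ∫ ω, Real.exp (V (R x x' ω)) * w (R x x' ω) ∂P₀
    have hf0 := norm_nonneg f
    have h6 : 2 * M * ‖f‖ * P₀.real bad ≤ 2 * M * ‖f‖ * (C * d) := by gcongr
    have h7 : M * (q * |D| + 2 * C) * ‖f‖ ≤ M * (q * |D| + 2 * C) * M * ‖f‖ := by
      have : 0 ≤ M * (q * |D| + 2 * C) := by positivity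
      nlinarith [mul_nonneg this hf0]
    have h8 := mul_le_mul_of_nonneg_left h7 hd0
    linarith
  irr := by
    intro ε hε
    obtain ⟨N, p, hp, h⟩ := hI ε hε
    rw [hκdef] at h
    by_cases hne : Nonempty X
    swap
    · exact ⟨N, 1, one_pos, fun V f hf a ha y => (hne ⟨y⟩).elim⟩
    obtain ⟨x0⟩ := hne
    have hpt : p ≠ ⊤ := (h x0 x0).ne_top
    refine ⟨N, p.toReal, ENNReal.toReal_pos hp.ne' hpt, ?_⟩
    intro V f hf a ha y hfa x
    refine le_trans ?_ (TT_LL_pow ℓ S hS V N f hf x)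
    rw [mul_comm p.toReal, mul_assoc]
    refine mul_le_mul_of_nonneg_left ?_ (Real.exp_pos _).le
    have hTp : ∀ m : ℕ, ∀ u : C(X, ℝ), 0 ≤ u → 0 ≤ (TT ℓ S hS ^ m) u := by
      intro m
      induction m with
      | zero => intro u hu; simpa using hu
      | succ m ihm => intro u hu; rw [pow_succ]; exact ihm _ (TT_pos ℓ S hS u hu)
    refine (ENNReal.ofReal_le_ofReal_iff (nonnegC.1 (hTp N f hf) x)).1 ?_
    rw [TT_pow ℓ S hS N f hf x]
    set ν := kIter (fun x => Measure.map (fun ζ => S (x, ζ)) ℓ) N x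
    calc ENNReal.ofReal (p.toReal * a) = ENNReal.ofReal a * p := by
          rw [mul_comm, ENNReal.ofReal_mul ha, ENNReal.ofReal_toReal hpt]
      _ ≤ ENNReal.ofReal a * ν (Metric.ball y ε) := by gcongr; exact (h x y).le
      _ = ∫⁻ z in Metric.ball y ε, ENNReal.ofReal a ∂ν := by rw [setLIntegral_const]
      _ ≤ ∫⁻ z in Metric.ball y ε, ENNReal.ofReal (f z) ∂ν :=
          setLIntegral_mono' Metric.isOpen_ball.measurableSet
            fun z hz => ENNReal.ofReal_le_ofReal (hfa z hz)
      _ ≤ _ := setLIntegral_le_lintegral _ _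

end LDPconc

section LDPmarkov
variable {X E : Type*} [MetricSpace X] [CompactSpace X]
    [MeasurableSpace X] [BorelSpace X]
    [MetricSpace E] [CompactSpace E] [MeasurableSpace E] [BorelSpace E]

lemma traj_meas {S : X × E → X} (hS : Continuous S) (n : ℕ) : Measurable (traj S n) := by
  induction n with
  | zero => exact measurable_fst
  | succ n ih =>
    exact hS.measurable.comp (ih.prodMk ((measurable_pi_apply n).comp measurable_snd))

lemma traj_congr (S : X × E → X) (n : ℕ) (x : X) (ω ω' : ℕ → E) (h : ∀ i < n, ω i = ω' i) :
    traj S n (x, ω) = traj S n (x, ω') := by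
  induction n with
  | zero => rfl
  | succ n ih =>
    show S (traj S n (x, ω), ω n) = S (traj S n (x, ω'), ω' n)
    rw [ih fun i hi => h i (by omega), h n (by omega)]

/-- The weight `exp(V(x_1)+...+V(x_n))`. -/
noncomputable def wt (S : X × E → X) (V : C(X, ℝ)) (n : ℕ) (p : X × (ℕ → E)) : ℝ :=
  Real.exp (∑ k ∈ Finset.Icc 1 n, V (traj S k p))

lemma wt_congr (S : X × E → X) (V : C(X, ℝ)) (n : ℕ) (x : X) (ω ω' : ℕ → E)
    (h : ∀ i < n, ω i = ω' i) : wt S V n (x, ω) = wt S V n (x, ω') := by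
  unfold wt
  congr 1
  refine Finset.sum_congr rfl fun k hk => ?_
  rw [Finset.mem_Icc] at hk
  rw [traj_congr S k x ω ω' fun i hi => h i (by omega)]

lemma wt_succ (S : X × E → X) (V : C(X, ℝ)) (n : ℕ) (p : X × (ℕ → E)) :
    wt S V (n + 1) p = wt S V n p * Real.exp (V (traj S (n + 1) p)) := by
  unfold wt
  rw [Finset.sum_Icc_succ_top (by omega), Real.exp_add]

lemma wt_meas {S : X × E → X} (hS : Continuous S) (V : C(X, ℝ)) (n : ℕ) :
    Measurable (wt S V n) := by
  unfold wt
  refine Real.measurable_exp.comp (Finset.measurable_sum _ fun k _ => ?_)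
  exact V.continuous.measurable.comp (traj_meas hS k)

lemma wt_pos (S : X × E → X) (V : C(X, ℝ)) (n : ℕ) (p : X × (ℕ → E)) : 0 < wt S V n p :=
  Real.exp_pos _

lemma wt_le (S : X × E → X) (V : C(X, ℝ)) (n : ℕ) (p : X × (ℕ → E)) :
    wt S V n p ≤ Real.exp (n * ‖V‖) := by
  unfold wt
  refine Real.exp_le_exp.2 ((Finset.sum_le_card_nsmul _ _ ‖V‖ fun k _ => leC_norm V _).trans ?_)
  simp

lemma markov_pt (ℓ : Measure E) [IsProbabilityMeasure ℓ] (S : X × E → X) (hS : Continuous S)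
    (P : Measure (ℕ → E)) [IsProbabilityMeasure P]
    (hP : ∀ n : ℕ, Measure.map (fun ω (i : Fin n) => ω i) P = Measure.pi fun _ : Fin n => ℓ)
    (V : C(X, ℝ)) (n : ℕ) (f : C(X, ℝ)) (x : X) :
    ∫ ω, wt S V n (x, ω) * f (traj S n (x, ω)) ∂P = (LL (TT ℓ S hS) V ^ n) f x := by
  have e0 : E := by
    have : Nonempty E := by
      by_contra hne
      rw [not_nonempty_iff] at hne
      have := measure_univ (μ := ℓ)
      rw [Set.univ_eq_empty_iff.2 hne] at this
      simp at this
    exact Classical.choice this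
  induction n generalizing f with
  | zero => simp [wt, traj]
  | succ n ih =>
    set ext : (Fin n → E) → (ℕ → E) := fun v k => if h : k < n then v ⟨k, h⟩ else e0 with hext
    have hextm : Measurable ext := by
      refine measurable_pi_iff.2 fun k => ?_
      by_cases h : k < n
      · simp only [hext, h, dite_true]; exact measurable_pi_apply _
      · simp only [hext, h, dite_false]; exact measurable_const
    have hexte : ∀ ω : ℕ → E, ∀ i < n, ω i = ext (fun i => ω i) i := by
      intro ω i hi
      simp [hext, hi]
    set G : (Fin n → E) → ℝ := fun v => wt S V n (x, ext v) with hG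
    set H : (Fin n → E) → X := fun v => traj S n (x, ext v) with hH
    have hGm : Measurable G := (wt_meas hS V n).comp (measurable_const.prodMk hextm)
    have hHm : Measurable H := (traj_meas hS n).comp (measurable_const.prodMk hextm)
    have hGω : ∀ ω, wt S V n (x, ω) = G (fun i => ω i) := fun ω =>
      wt_congr S V n x _ _ (hexte ω)
    have hHω : ∀ ω, traj S n (x, ω) = H (fun i => ω i) := fun ω =>
      traj_congr S n x _ _ (hexte ω)
    set u : C(X, ℝ) := expC V * f with hu
    set Φ : E × (Fin n → E) → ℝ := fun z => G z.2 * u (S (H z.2, z.1)) with hΦ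
    have hΦm : Measurable Φ :=
      (hGm.comp measurable_snd).mul (u.continuous.measurable.comp
        (hS.measurable.comp ((hHm.comp measurable_snd).prodMk measurable_fst)))
    have hrm : ∀ m : ℕ, Measurable (fun (ω : ℕ → E) (i : Fin m) => ω i) := fun m =>
      measurable_pi_iff.2 fun i => measurable_pi_apply _
    have hmp := measurePreserving_piFinSuccAbove (fun _ : Fin (n + 1) => ℓ) (Fin.last n)
    have hmp2 : MeasurePreserving (fun (ω : ℕ → E) (i : Fin (n + 1)) => ω i) P
        (Measure.pi fun _ : Fin (n + 1) => ℓ) := ⟨hrm _, hP _⟩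
    have hmp3 := hmp.comp hmp2
    have hbd : ∀ z, ‖Φ z‖ ≤ Real.exp (n * ‖V‖) * ‖u‖ := by
      intro z
      rw [hΦ, norm_mul]
      refine mul_le_mul ?_ (u.norm_coe_le_norm _) (norm_nonneg _) (Real.exp_pos _).le
      rw [Real.norm_of_nonneg (wt_pos S V n _).le]
      exact wt_le S V n _
    have hintg : Integrable Φ (ℓ.prod (Measure.pi fun _ : Fin n => ℓ)) :=
      Integrable.of_bound hΦm.aestronglyMeasurable _ (Eventually.of_forall hbd)
    calc ∫ ω, wt S V (n + 1) (x, ω) * f (traj S (n + 1) (x, ω)) ∂P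
        = ∫ ω, Φ (ω n, fun i : Fin n => ω i) ∂P := by
          refine integral_congr_ae (Eventually.of_forall fun ω => ?_)
          simp only [hΦ]
          rw [wt_succ, ← hGω, ← hHω, hu, mul_assoc]
          rfl
      _ = ∫ z, Φ z ∂(ℓ.prod (Measure.pi fun _ : Fin n => ℓ)) := by
          have h1 : Measure.map (fun ω : ℕ → E => (ω n, fun i : Fin n => ω i)) P =
              ℓ.prod (Measure.pi fun _ : Fin n => ℓ) := by
            have h2 := hmp3.map_eq
            rw [← h2]
            congr 1
            ext ω
            · simp [MeasurableEquiv.piFinSuccAbove]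
            · simp [MeasurableEquiv.piFinSuccAbove, Fin.removeNth]
              rfl
          rw [← h1, integral_map]
          · exact ((measurable_pi_apply n).prodMk (hrm n)).aemeasurable
          · exact hΦm.aestronglyMeasurable
      _ = ∫ v, ∫ e, Φ (e, v) ∂ℓ ∂(Measure.pi fun _ : Fin n => ℓ) := integral_prod_symm _ hintg
      _ = ∫ v, G v * LL (TT ℓ S hS) V f (H v) ∂(Measure.pi fun _ : Fin n => ℓ) := by
          refine integral_congr_ae (Eventually.of_forall fun v => ?_)
          simp only [hΦ]
          rw [integral_const_mul]
          rfl
      _ = ∫ ω, wt S V n (x, ω) * LL (TT ℓ S hS) V f (traj S n (x, ω)) ∂P := by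
          rw [← hP n, integral_map (hrm n).aemeasurable]
          · refine integral_congr_ae (Eventually.of_forall fun ω => ?_)
            simp only []
            rw [hGω, hHω]
          · exact (hGm.mul ((LL (TT ℓ S hS) V f).continuous.measurable.comp
              hHm)).aestronglyMeasurable
      _ = (LL (TT ℓ S hS) V ^ (n + 1)) f x := by
          rw [ih, pow_succ]; rfl

lemma wt_int {S : X × E → X} (hS : Continuous S) (Q : Measure (X × (ℕ → E)))
    [IsProbabilityMeasure Q] (V f : C(X, ℝ)) (n : ℕ) :
    Integrable (fun p => wt S V n p * f (traj S n p)) Q := by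
  refine Integrable.of_bound ((wt_meas hS V n).mul
    (f.continuous.measurable.comp (traj_meas hS n))).aestronglyMeasurable
    (Real.exp (n * ‖V‖) * ‖f‖) (Eventually.of_forall fun p => ?_)
  rw [norm_mul]
  refine mul_le_mul ?_ (f.norm_coe_le_norm _) (norm_nonneg _) (Real.exp_pos _).le
  rw [Real.norm_of_nonneg (wt_pos S V n _).le]
  exact wt_le S V n _

lemma wt_int1 {S : X × E → X} (hS : Continuous S) (Q : Measure (X × (ℕ → E)))
    [IsProbabilityMeasure Q] (V : C(X, ℝ)) (n : ℕ) :
    Integrable (wt S V n) Q := by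
  simpa using wt_int hS Q V 1 n

lemma wt_bounds (ℓ : Measure E) [IsProbabilityMeasure ℓ] (S : X × E → X) (hS : Continuous S)
    (P : Measure (ℕ → E)) [IsProbabilityMeasure P]
    (hP : ∀ n : ℕ, Measure.map (fun ω (i : Fin n) => ω i) P = Measure.pi fun _ : Fin n => ℓ)
    {V : C(X, ℝ)} {l : ℝ} {g : C(X, ℝ)} {K c : ℝ} (hg : IsEig (TT ℓ S hS) V l g K c) (n : ℕ)
    (μ : Measure X) [IsProbabilityMeasure μ] :
    c * Real.exp (n * l) ≤ ∫ p, wt S V n p ∂(μ.prod P) ∧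
      ∫ p, wt S V n p ∂(μ.prod P) ≤ c⁻¹ * Real.exp (n * l) := by
  have h1 : ∫ p, wt S V n p * g (traj S n p) ∂(μ.prod P) = Real.exp (n * l) * ∫ x, g x ∂μ := by
    rw [integral_prod _ (wt_int hS _ V g n), ← integral_const_mul]
    refine integral_congr_ae (Eventually.of_forall fun x => ?_)
    simp only []
    rw [markov_pt ℓ S hS P hP V n g x, hg.pow n]
    rfl
  have hgi : Integrable (fun x => g x) μ := Integrable.of_bound
    g.continuous.measurable.aestronglyMeasurable ‖g‖ (Eventually.of_forall g.norm_coe_le_norm)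
  have hlo : c ≤ ∫ x, g x ∂μ := by
    have := integral_mono (integrable_const c) hgi hg.low
    simpa using this
  have hup : ∫ x, g x ∂μ ≤ 1 := by
    have := integral_mono hgi (integrable_const 1) hg.up
    simpa using this
  have he := Real.exp_pos (n * l)
  have hc := hg.c0
  constructor
  · calc c * Real.exp (n * l) ≤ Real.exp (n * l) * ∫ x, g x ∂μ := by nlinarith
      _ = _ := h1.symm
      _ ≤ _ := by
        refine integral_mono (wt_int hS _ V g n) (wt_int1 hS _ V n) fun p => ?_
        exact mul_le_of_le_one_right (wt_pos S V n p).le (hg.up _)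
  · have h2 : c * ∫ p, wt S V n p ∂(μ.prod P) ≤ Real.exp (n * l) := by
      rw [← integral_const_mul]
      refine le_trans (integral_mono ((wt_int1 hS _ V n).const_mul c) (wt_int hS _ V g n)
        fun p => ?_) (h1.le.trans (by nlinarith))
      simp only []
      rw [mul_comm]
      exact mul_le_mul_of_nonneg_left (hg.low _) (wt_pos S V n p).le
    rwa [inv_mul_eq_div, le_div_iff₀ hc, mul_comm]

lemma empDist_integral (S : X × E → X) (V : C(X, ℝ)) {n : ℕ} (hn : n ≠ 0) (p : X × (ℕ → E)) :
    (n : ℝ) * ∫ x, V x ∂(empDist S n p : Measure X) = ∑ k ∈ Finset.Icc 1 n, V (traj S k p) := by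
  have e : (empDist S n p : Measure X) = empMeas S n p := by
    have : empDist S n p = ⟨empMeas S n p, empMeas_isProbabilityMeasure S hn p⟩ := dif_neg hn
    rw [this]; rfl
  rw [e, empMeas]
  rw [integral_smul_measure, integral_finsetSum_measure]
  · have : (n : ℝ) ≠ 0 := by exact_mod_cast hn
    simp [integral_dirac]
    field_simp
  · intro i _
    exact integrable_dirac (by simp)

end LDPmarkov

section LDPpress
variable {X : Type*} [MetricSpace X] [CompactSpace X] [Nonempty X]
variable {T : C(X, ℝ) →L[ℝ] C(X, ℝ)} {q : ℝ}

lemma press_zero (h : Setup T q) {l : ℝ} {g : C(X, ℝ)} {K c : ℝ} (hg : IsEig T 0 l g K c) :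
    l ≤ 0 := by
  refine hg.le_of_super h (ψ := 1) one_pos (fun x => le_refl _) ?_
  have : expC (0 : C(X, ℝ)) * 1 = 1 := by ext x; simp
  rw [LL_apply, this, h.one]
  simp

lemma press_lip (h : Setup T q) {V W : C(X, ℝ)} {l l' : ℝ} {g g' : C(X, ℝ)} {K c K' c' : ℝ}
    (hg : IsEig T V l g K c) (hg' : IsEig T W l' g' K' c') : l ≤ l' + ‖V - W‖ := by
  refine hg.le_of_super h hg'.c0 hg'.low ?_
  have h1 : 0 ≤ T (Real.exp ‖V - W‖ • (expC W * g') - expC V * g') := by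
    apply h.pos
    rw [nonnegC]
    intro x
    have h2 : V x - W x ≤ ‖V - W‖ := leC_norm (V - W) x
    have h3 : 0 ≤ g' x := hg'.c0.le.trans (hg'.low x)
    simp only [ContinuousMap.sub_apply, ContinuousMap.smul_apply, ContinuousMap.mul_apply,
      expC_apply, smul_eq_mul]
    have h4 : Real.exp (V x) ≤ Real.exp ‖V - W‖ * Real.exp (W x) := by
      rw [← Real.exp_add]; exact Real.exp_le_exp.2 (by linarith)
    nlinarith
  rw [map_sub, map_smul, ← LL_apply, ← LL_apply, hg'.eig, smul_smul, ← Real.exp_add] at h1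
  rw [add_comm]
  exact sub_nonneg.1 h1

/-- The minimization step of the lower bound. -/
lemma minim (h : Setup T q) (Λ : C(X, ℝ) → ℝ)
    (hΛ : ∀ V D, IsLip V D → ∃ g K c, IsEig T V (Λ V) g K c)
    {ι : Type*} [Fintype ι] [DecidableEq ι] (V : ι → C(X, ℝ)) (D : ι → ℝ)
    (hV : ∀ i, IsLip (V i) (D i)) (s : ι → ℝ) (I : ℝ) 
    (hI : ∀ α : ι → ℝ, (∑ i, α i * s i) - Λ (∑ i, α i • V i) ≤ I) :
    ∃ (α e : ι → ℝ), (∀ i, |e i - s i| ≤ 1 / 2) ∧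
      -I ≤ Λ (∑ i, α i • V i) - ∑ i, α i * e i ∧
      ∀ i, ∀ r : ℝ, 0 < r → ∃ t0 : ℝ, 0 < t0 ∧ ∀ t : ℝ, |t| ≤ t0 →
        Λ ((∑ i, α i • V i) + t • V i) ≤ Λ (∑ i, α i • V i) + t * e i + |t| * r := by
  have hlip : ∀ α : ι → ℝ, ∃ D', IsLip (∑ i, α i • V i) D' := by
    intro α
    refine ⟨∑ i, |α i| * D i, ?_⟩
    classical
    refine Finset.induction_on (Finset.univ : Finset ι) ?_ ?_
    · intro x y; simp
    · intro a s ha ih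
      rw [Finset.sum_insert ha, Finset.sum_insert ha]
      exact ((hV a).smul (α a)).add ih
  have hΛlip : ∀ U W : C(X, ℝ), (∃ D, IsLip U D) → (∃ D, IsLip W D) → |Λ U - Λ W| ≤ ‖U - W‖ := by
    rintro U W ⟨D1, h1⟩ ⟨D2, h2⟩
    obtain ⟨g, K, c, hg⟩ := hΛ U D1 h1
    obtain ⟨g', K', c', hg'⟩ := hΛ W D2 h2
    have a1 := press_lip h hg hg'
    have a2 := press_lip h hg' hg
    rw [norm_sub_rev] at a2
    rw [abs_le]; constructor <;> linarith
  have hΛcont : Continuous fun α : ι → ℝ => Λ (∑ i, α i • V i) := by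
    have hc : Continuous fun α : ι → ℝ => ∑ i, α i • V i := by fun_prop
    rw [continuous_iff_continuousAt]
    intro α
    rw [ContinuousAt, tendsto_iff_norm_sub_tendsto_zero]
    have h1 := tendsto_iff_norm_sub_tendsto_zero.1 (hc.tendsto α)
    exact squeeze_zero (fun _ => norm_nonneg _) (fun β => hΛlip _ _ (hlip β) (hlip α)) h1
  have hI0 : 0 ≤ I := by
    have h1 := hI 0
    obtain ⟨D0, h2⟩ := hlip 0
    obtain ⟨g, K, c, hg⟩ := hΛ _ _ h2
    have e : (∑ i, (0 : ι → ℝ) i • V i) = 0 := by simp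
    rw [e] at hg h1
    have h3 := press_zero h hg
    simp at h1
    linarith
  set η : ℝ := 1 / (16 * (I + 1)) with hη
  have hη0 : 0 < η := by positivity
  have hηI : 16 * (η * I) ≤ 1 := by
    rw [hη]; field_simp; linarith
  set J : (ι → ℝ) → ℝ := fun α => Λ (∑ i, α i • V i) - (∑ i, α i * s i) + η * ∑ i, α i ^ 2 with hJ
  have hJc : Continuous J := by
    refine (hΛcont.sub (by fun_prop)).add (by fun_prop)
  have hJ0 : J 0 ≤ 0 := by
    obtain ⟨D0, h2⟩ := hlip 0
    obtain ⟨g, K, c, hg⟩ := hΛ _ _ h2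
    have e : (∑ i, (0 : ι → ℝ) i • V i) = 0 := by simp
    rw [e] at hg
    have h3 := press_zero h hg
    simp only [hJ, e]
    simpa using h3
  have hJlow : ∀ α, η * ∑ i, α i ^ 2 - I ≤ J α := by
    intro α
    have := hI α
    simp only [hJ]; linarith
  have hsq : ∀ α, J α ≤ 0 → ∀ i, η * α i ^ 2 ≤ I := by
    intro α hα i
    have h1 := hJlow α
    have h2 : α i ^ 2 ≤ ∑ i, α i ^ 2 :=
      Finset.single_le_sum (f := fun i => α i ^ 2) (fun i _ => sq_nonneg _) (Finset.mem_univ i)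
    have h3 := mul_le_mul_of_nonneg_left h2 hη0.le
    linarith
  have hbdd : Bornology.IsBounded {α | J α ≤ J 0} := by
    refine (Metric.isBounded_closedBall (x := (0 : ι → ℝ)) (r := Real.sqrt (I / η))).subset ?_
    intro α hα
    rw [mem_closedBall_zero_iff, pi_norm_le_iff_of_nonneg (Real.sqrt_nonneg _)]
    intro i
    have h1 := hsq α (le_trans hα hJ0) i
    rw [Real.norm_eq_abs]
    apply Real.abs_le_sqrt
    rw [le_div_iff₀ hη0]; linarith
  obtain ⟨α, hα⟩ := hJc.exists_forall_le_of_isBounded 0 hbdd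
  obtain ⟨DV, hVs⟩ := hlip α
  obtain ⟨g, K, c, hg⟩ := hΛ _ _ hVs
  choose e he using fun i => pressure_diff h hVs hg (hV i)
  have he' : ∀ i, ∀ r : ℝ, 0 < r → ∃ t0 : ℝ, 0 < t0 ∧ ∀ t : ℝ, |t| ≤ t0 →
        Λ ((∑ i, α i • V i) + t • V i) ≤ Λ (∑ i, α i • V i) + t * e i + |t| * r := by
    intro i r hr
    obtain ⟨t0, ht0, h1⟩ := he i r hr
    refine ⟨t0, ht0, fun t ht => ?_⟩
    obtain ⟨g', K', c', hg'⟩ := hΛ _ _ (hVs.add ((hV i).smul t))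
    exact h1 t ht _ _ _ _ hg'
  have hstat : ∀ i, e i - s i + 2 * η * α i = 0 := by
    intro i
    set b := e i - s i + 2 * η * α i with hb
    have key : ∀ r : ℝ, 0 < r → |b| ≤ 2 * r := by
      intro r hr
      obtain ⟨t0, ht0, h1⟩ := he' i r hr
      have main : ∀ t, |t| ≤ t0 → 0 ≤ t * b + |t| * r + η * t ^ 2 := by
        intro t ht
        have h2 := hα (α + Pi.single i t)
        have h3 := h1 t ht
        have e1 : (∑ j, (α + Pi.single i t : ι → ℝ) j • V j) = (∑ j, α j • V j) + t • V i := by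
          simp only [Pi.add_apply, add_smul, Finset.sum_add_distrib]
          congr 1
          rw [Finset.sum_eq_single i]
          · simp
          · intro j _ hj; simp [hj]
          · simp
        have e2 : (∑ j, (α + Pi.single i t : ι → ℝ) j * s j) = (∑ j, α j * s j) + t * s i := by
          simp only [Pi.add_apply, add_mul, Finset.sum_add_distrib]
          congr 1
          rw [Finset.sum_eq_single i]
          · simp
          · intro j _ hj; simp [hj]
          · simp
        have e3 : (∑ j, (α + Pi.single i t : ι → ℝ) j ^ 2) = (∑ j, α j ^ 2) + (2 * α i * t + t ^ 2) := by
          have : ∀ j, (α + Pi.single i t : ι → ℝ) j ^ 2 = α j ^ 2 +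
              (2 * α j * (Pi.single i t : ι → ℝ) j + (Pi.single i t : ι → ℝ) j ^ 2) := by
            intro j; simp only [Pi.add_apply]; ring
          simp only [this, Finset.sum_add_distrib (f := fun j => α j ^ 2)]
          congr 1
          rw [Finset.sum_eq_single i]
          · simp
          · intro j _ hj; simp [hj]
          · simp
        simp only [hJ, e1, e2, e3] at h2
        rw [hb]
        nlinarith
      set t := min t0 (r / η) with ht
      have htp : 0 < t := lt_min ht0 (by positivity)
      have ht1 : t ≤ t0 := min_le_left _ _
      have ht2 : η * t ≤ r := by
        have : t ≤ r / η := min_le_right _ _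
        rw [le_div_iff₀ hη0] at this; linarith
      have m1 := main t (by rwa [abs_of_pos htp])
      have m2 := main (-t) (by rwa [abs_neg, abs_of_pos htp])
      rw [abs_of_pos htp] at m1
      rw [abs_neg, abs_of_pos htp] at m2
      have m1' : 0 ≤ t * (b + r + η * t) := by nlinarith
      have m2' : 0 ≤ t * (-b + r + η * t) := by nlinarith
      have n1 := nonneg_of_mul_nonneg_right m1' htp
      have n2 := nonneg_of_mul_nonneg_right m2' htp
      rw [abs_le]; constructor <;> linarith
    have : |b| ≤ 0 := le_of_forall_pos_le_add fun r hr => by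
      have := key (r / 2) (by positivity)
      linarith
    exact abs_nonpos_iff.1 this
  have hJα : J α ≤ 0 := (hα 0).trans hJ0
  refine ⟨α, e, fun i => ?_, ?_, he'⟩
  · have h1 := hsq α hJα i
    have h2 : e i - s i = -(2 * η * α i) := by linarith [hstat i]
    rw [h2, abs_neg]
    apply abs_le_of_sq_le_sq _ (by norm_num)
    have h3 := mul_le_mul_of_nonneg_left h1 hη0.le
    nlinarith
  · have h1 : ∑ i, α i * e i = ∑ i, α i * s i - 2 * η * ∑ i, α i ^ 2 := by
      rw [Finset.mul_sum, ← Finset.sum_sub_distrib]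
      refine Finset.sum_congr rfl fun i _ => ?_
      have : e i = s i - 2 * η * α i := by linarith [hstat i]
      rw [this]; ring
    have h2 := hJlow α
    simp only [hJ] at h2
    have h3 : 0 ≤ ∑ i, α i ^ 2 := Finset.sum_nonneg fun i _ => sq_nonneg _
    have h4 := mul_nonneg hη0.le h3
    have h5 := hI α
    rw [h1]
    linarith

end LDPpress

section LDPtilt
variable {X E : Type*} [MetricSpace X] [CompactSpace X]
    [MeasurableSpace X] [BorelSpace X]
    [MetricSpace E] [CompactSpace E] [MeasurableSpace E] [BorelSpace E]

/-- Time averages of a function along a trajectory. -/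
noncomputable def tavg (S : X × E → X) (V : C(X, ℝ)) (n : ℕ) (p : X × (ℕ → E)) : ℝ :=
  (n : ℝ)⁻¹ * ∑ k ∈ Finset.Icc 1 n, V (traj S k p)

lemma mul_tavg (S : X × E → X) (V : C(X, ℝ)) (n : ℕ) (p : X × (ℕ → E)) :
    (n : ℝ) * tavg S V n p = ∑ k ∈ Finset.Icc 1 n, V (traj S k p) := by
  rcases Nat.eq_zero_or_pos n with rfl | hn
  · simp
  · have : (n : ℝ) ≠ 0 := by positivity
    rw [tavg]; field_simp

lemma tavg_eq (S : X × E → X) (V : C(X, ℝ)) {n : ℕ} (hn : n ≠ 0) (p : X × (ℕ → E)) :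
    ∫ x, V x ∂(empDist S n p : Measure X) = tavg S V n p := by
  have h1 := empDist_integral S V hn p
  rw [← mul_tavg] at h1
  exact mul_left_cancel₀ (by exact_mod_cast hn) h1

lemma wt_eq (S : X × E → X) (V : C(X, ℝ)) (n : ℕ) (p : X × (ℕ → E)) :
    wt S V n p = Real.exp (n * tavg S V n p) := by
  rw [wt, mul_tavg]

lemma tavg_meas {S : X × E → X} (hS : Continuous S) (V : C(X, ℝ)) (n : ℕ) :
    Measurable (tavg S V n) := by
  unfold tavg
  refine (Finset.measurable_sum _ fun k _ => ?_).const_mul _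
  exact V.continuous.measurable.comp (traj_meas hS k)

lemma tavg_add (S : X × E → X) (V W : C(X, ℝ)) (n : ℕ) (p : X × (ℕ → E)) :
    tavg S (V + W) n p = tavg S V n p + tavg S W n p := by
  simp [tavg, Finset.sum_add_distrib, mul_add]

lemma tavg_smul (S : X × E → X) (V : C(X, ℝ)) (a : ℝ) (n : ℕ) (p : X × (ℕ → E)) :
    tavg S (a • V) n p = a * tavg S V n p := by
  simp only [tavg, ContinuousMap.smul_apply, smul_eq_mul, ← Finset.mul_sum]
  ring

lemma tavg_sum (S : X × E → X) {ι : Type*} [Fintype ι] (α : ι → ℝ) (V : ι → C(X, ℝ)) (n : ℕ)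
    (p : X × (ℕ → E)) :
    tavg S (∑ i, α i • V i) n p = ∑ i, α i * tavg S (V i) n p := by
  classical
  refine Finset.induction_on (Finset.univ : Finset ι) ?_ ?_
  · simp [tavg]
  · intro a s ha ih
    rw [Finset.sum_insert ha, Finset.sum_insert ha, tavg_add, tavg_smul, ih]

lemma cheb (ℓ : Measure E) [IsProbabilityMeasure ℓ] (S : X × E → X) (hS : Continuous S)
    (P : Measure (ℕ → E)) [IsProbabilityMeasure P]
    (hP : ∀ n : ℕ, Measure.map (fun ω (i : Fin n) => ω i) P = Measure.pi fun _ : Fin n => ℓ)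
    {V : C(X, ℝ)} {l : ℝ} {g : C(X, ℝ)} {K c : ℝ} (hg : IsEig (TT ℓ S hS) V l g K c)
    (n : ℕ) (a : ℝ) (μ : Measure X) [IsProbabilityMeasure μ] :
    (μ.prod P) {p | a < tavg S V n p - l} ≤ ENNReal.ofReal (c⁻¹ * Real.exp (n * (-a))) := by
  have h1 := (wt_bounds ℓ S hS P hP hg n μ).2
  have h2 := mul_meas_ge_le_integral_of_nonneg (μ := μ.prod P) (f := wt S V n)
    (Eventually.of_forall fun p => (wt_pos S V n p).le) (wt_int1 hS _ V n)
    (Real.exp (n * (a + l)))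
  have h3 : (μ.prod P) {p | a < tavg S V n p - l} ≤
      (μ.prod P) {p | Real.exp (n * (a + l)) ≤ wt S V n p} := by
    refine measure_mono fun p hp => ?_
    simp only [Set.mem_setOf_eq] at hp ⊢
    rw [wt_eq]
    refine Real.exp_le_exp.2 (mul_le_mul_of_nonneg_left (by linarith) (Nat.cast_nonneg n))
  refine h3.trans ?_
  rw [← ENNReal.ofReal_toReal (measure_ne_top (μ.prod P) {p | Real.exp (n * (a + l)) ≤ wt S V n p})]
  refine ENNReal.ofReal_le_ofReal ?_
  have h4 := h2.trans h1
  have e1 : Real.exp (n * l) = Real.exp (n * (a + l)) * Real.exp (n * (-a)) := by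
    rw [← Real.exp_add]; congr 1; ring
  rw [e1] at h4
  refine le_of_mul_le_mul_left (h4.trans (le_of_eq ?_)) (Real.exp_pos (n * (a + l)))
  ring

lemma tilt (ℓ : Measure E) [IsProbabilityMeasure ℓ] (S : X × E → X) (hS : Continuous S)
    (P : Measure (ℕ → E)) [IsProbabilityMeasure P]
    (hP : ∀ n : ℕ, Measure.map (fun ω (i : Fin n) => ω i) P = Measure.pi fun _ : Fin n => ℓ)
    (Λ : C(X, ℝ) → ℝ)
    (hΛ : ∀ V D, IsLip V D → ∃ g K c, IsEig (TT ℓ S hS) V (Λ V) g K c)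
    {ι : Type*} [Fintype ι] (V : ι → C(X, ℝ)) (D : ι → ℝ)
    (hV : ∀ i, IsLip (V i) (D i)) (α e : ι → ℝ)
    (he : ∀ i, ∀ r : ℝ, 0 < r → ∃ t0 : ℝ, 0 < t0 ∧ ∀ t : ℝ, |t| ≤ t0 →
        Λ ((∑ i, α i • V i) + t • V i) ≤ Λ (∑ i, α i • V i) + t * e i + |t| * r)
    (δ : ℝ) (hδ : 0 < δ) :
    ∃ c1 : ℝ, 0 < c1 ∧ ∀ᶠ n : ℕ in atTop, ∀ μ : Measure X, IsProbabilityMeasure μ →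
      c1 * Real.exp (n * (Λ (∑ i, α i • V i) - ∑ i, α i * e i - δ * ∑ i, |α i|)) ≤
        (μ.prod P).real {p | ∀ i, |tavg S (V i) n p - e i| < δ} := by
  set Vs := ∑ i, α i • V i with hVs
  have hlip : ∃ D', IsLip Vs D' := by
    refine ⟨∑ i, |α i| * D i, ?_⟩
    classical
    rw [hVs]
    refine Finset.induction_on (Finset.univ : Finset ι) ?_ ?_
    · intro x y; simp
    · intro a s ha ih
      rw [Finset.sum_insert ha, Finset.sum_insert ha]
      exact ((hV a).smul (α a)).add ih
  obtain ⟨D', hD'⟩ := hlip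
  obtain ⟨g, K, c, hg⟩ := hΛ _ _ hD'
  choose t ht0 ht using fun i => he i (δ / 2) (by positivity)
  have hex : ∀ i (s : ℝ), ∃ g K c, IsEig (TT ℓ S hS) (Vs + s • V i) (Λ (Vs + s • V i)) g K c :=
    fun i s => hΛ _ _ (hD'.add ((hV i).smul s))
  choose gg KK cc hgg using hex
  set M : ι → ℝ := fun i => (cc i (t i))⁻¹ + (cc i (-t i))⁻¹ with hM
  have hlim : Tendsto (fun n : ℕ => ∑ i, M i * Real.exp (n * (-(t i * δ / 2)))) atTop (𝓝 0) := by
    have : Tendsto (fun n : ℕ => ∑ i, M i * Real.exp (n * (-(t i * δ / 2)))) atTop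
        (𝓝 (∑ i : ι, M i * 0)) := by
      refine tendsto_finsetSum _ fun i _ => Tendsto.const_mul _ ?_
      refine Real.tendsto_exp_atBot.comp ?_
      refine Tendsto.atTop_mul_const_of_neg ?_ tendsto_natCast_atTop_atTop
      have := ht0 i
      have : 0 < t i * δ / 2 := by positivity
      linarith
    simpa using this
  refine ⟨c / 2, half_pos hg.c0, ?_⟩
  filter_upwards [hlim.eventually (gt_mem_nhds (half_pos hg.c0))] with n hn μ hμ
  set Q := μ.prod P with hQ
  set G := {p | ∀ i, |tavg S (V i) n p - e i| < δ} with hG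
  have hGm : MeasurableSet G := by
    have : G = ⋂ i, {p | |tavg S (V i) n p - e i| < δ} := by ext; simp [hG]
    rw [this]
    refine MeasurableSet.iInter fun i => measurableSet_lt ?_ measurable_const
    exact continuous_abs.measurable.comp ((tavg_meas hS (V i) n).sub_const _)
  set A := ∑ i, α i * e i + δ * ∑ i, |α i| with hA
  have hn0 : (0 : ℝ) ≤ n := Nat.cast_nonneg n
  have pt : ∀ p, wt S Vs n p ≤ Real.exp (n * A) * G.indicator 1 p +
      ∑ i, (Real.exp (n * (-(t i * (e i + δ)))) * wt S (Vs + t i • V i) n p +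
        Real.exp (n * (t i * (e i - δ))) * wt S (Vs + (-t i) • V i) n p) := by
    intro p
    have hterm : ∀ i, 0 ≤ Real.exp (n * (-(t i * (e i + δ)))) * wt S (Vs + t i • V i) n p +
        Real.exp (n * (t i * (e i - δ))) * wt S (Vs + (-t i) • V i) n p := fun i => by
      have h1 := wt_pos S (Vs + t i • V i) n p
      have h2 := wt_pos S (Vs + (-t i) • V i) n p
      positivity
    by_cases hp : p ∈ G
    · rw [Set.indicator_of_mem hp, Pi.one_apply, mul_one]
      have h1 : wt S Vs n p ≤ Real.exp (n * A) := by
        rw [wt_eq]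
        refine Real.exp_le_exp.2 (mul_le_mul_of_nonneg_left ?_ hn0)
        rw [hVs, tavg_sum, hA, Finset.mul_sum, ← Finset.sum_add_distrib]
        refine Finset.sum_le_sum fun i _ => ?_
        have h2 := (hp i).le
        have h3 : α i * (tavg S (V i) n p - e i) ≤ |α i| * δ := by
          refine (le_abs_self _).trans ?_
          rw [abs_mul]
          exact mul_le_mul_of_nonneg_left h2 (abs_nonneg _)
        linarith
      have h2 := Finset.sum_nonneg (s := Finset.univ) fun i _ => hterm i
      linarith
    · rw [Set.indicator_of_notMem hp, mul_zero, zero_add]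
      have hp' : ∃ i, δ ≤ |tavg S (V i) n p - e i| := by
        by_contra hcon
        push Not at hcon
        exact hp hcon
      obtain ⟨i, hi⟩ := hp'
      refine le_trans ?_ (Finset.single_le_sum (fun i _ => hterm i) (Finset.mem_univ i))
      have hti := ht0 i
      have h1 := wt_pos S (Vs + t i • V i) n p
      have h2 := wt_pos S (Vs + (-t i) • V i) n p
      rcases le_abs.1 hi with h3 | h3
      · have h4 : wt S Vs n p ≤ Real.exp (n * (-(t i * (e i + δ)))) * wt S (Vs + t i • V i) n p := by
          rw [wt_eq, wt_eq, ← Real.exp_add, ← mul_add, tavg_add, tavg_smul]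
          refine Real.exp_le_exp.2 (mul_le_mul_of_nonneg_left ?_ hn0)
          nlinarith
        have h5 : 0 ≤ Real.exp (n * (t i * (e i - δ))) * wt S (Vs + (-t i) • V i) n p := by
          positivity
        linarith
      · have h4 : wt S Vs n p ≤ Real.exp (n * (t i * (e i - δ))) * wt S (Vs + (-t i) • V i) n p := by
          rw [wt_eq, wt_eq, ← Real.exp_add, ← mul_add, tavg_add, tavg_smul]
          refine Real.exp_le_exp.2 (mul_le_mul_of_nonneg_left ?_ hn0)
          nlinarith
        have h5 : 0 ≤ Real.exp (n * (-(t i * (e i + δ)))) * wt S (Vs + t i • V i) n p := by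
          positivity
        linarith
  have hGi : Integrable (fun p => Real.exp (n * A) * G.indicator (1 : X × (ℕ → E) → ℝ) p) Q :=
    ((integrable_const (1 : ℝ)).indicator hGm).const_mul _
  have hTi : ∀ i, Integrable (fun p => Real.exp (n * (-(t i * (e i + δ)))) *
        wt S (Vs + t i • V i) n p +
        Real.exp (n * (t i * (e i - δ))) * wt S (Vs + (-t i) • V i) n p) Q := fun i =>
    ((wt_int1 hS Q _ n).const_mul _).add ((wt_int1 hS Q _ n).const_mul _)
  have hintg := integral_mono (wt_int1 hS Q Vs n)
    (hGi.add (integrable_finsetSum Finset.univ fun i _ => hTi i)) pt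
  rw [integral_add' hGi (integrable_finsetSum Finset.univ fun i _ => hTi i),
    integral_const_mul, integral_indicator_one hGm, integral_finsetSum _ fun i _ => hTi i] at hintg
  have hlow := (wt_bounds ℓ S hS P hP hg n μ).1
  have hup : ∀ i, ∫ p, (Real.exp (n * (-(t i * (e i + δ)))) *
        wt S (Vs + t i • V i) n p +
        Real.exp (n * (t i * (e i - δ))) * wt S (Vs + (-t i) • V i) n p) ∂Q ≤
        Real.exp (n * Λ Vs) * (M i * Real.exp (n * (-(t i * δ / 2)))) := by
    intro i
    rw [integral_add ((wt_int1 hS Q _ n).const_mul _) ((wt_int1 hS Q _ n).const_mul _),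
      integral_const_mul, integral_const_mul]
    have u1 := (wt_bounds ℓ S hS P hP (hgg i (t i)) n μ).2
    have u2 := (wt_bounds ℓ S hS P hP (hgg i (-t i)) n μ).2
    have c1 := inv_pos.2 (hgg i (t i)).c0
    have c2 := inv_pos.2 (hgg i (-t i)).c0
    have hti := ht0 i
    have l1 := ht i (t i) (by rw [abs_of_pos hti])
    have l2 := ht i (-t i) (by rw [abs_neg, abs_of_pos hti])
    rw [abs_of_pos hti] at l1
    rw [abs_neg, abs_of_pos hti] at l2
    have v1 : Real.exp (n * (-(t i * (e i + δ)))) * Real.exp (n * Λ (Vs + t i • V i)) ≤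
        Real.exp (n * Λ Vs) * Real.exp (n * (-(t i * δ / 2))) := by
      rw [← Real.exp_add, ← Real.exp_add, ← mul_add, ← mul_add]
      refine Real.exp_le_exp.2 (mul_le_mul_of_nonneg_left ?_ hn0)
      linarith
    have v2 : Real.exp (n * (t i * (e i - δ))) * Real.exp (n * Λ (Vs + (-t i) • V i)) ≤
        Real.exp (n * Λ Vs) * Real.exp (n * (-(t i * δ / 2))) := by
      rw [← Real.exp_add, ← Real.exp_add, ← mul_add, ← mul_add]
      refine Real.exp_le_exp.2 (mul_le_mul_of_nonneg_left ?_ hn0)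
      linarith
    have w1 := mul_le_mul_of_nonneg_left u1 (Real.exp_pos (n * (-(t i * (e i + δ))))).le
    have w2 := mul_le_mul_of_nonneg_left u2 (Real.exp_pos (n * (t i * (e i - δ)))).le
    have z1 := mul_le_mul_of_nonneg_left v1 c1.le
    have z2 := mul_le_mul_of_nonneg_left v2 c2.le
    simp only [hM]
    linarith
  have hsum := Finset.sum_le_sum (s := Finset.univ) fun i _ => hup i
  rw [← Finset.mul_sum] at hsum
  have hΛp := Real.exp_pos (n * Λ Vs)
  have hfin : c / 2 * Real.exp (n * Λ Vs) ≤ Real.exp (n * A) * Q.real G := by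
    have := mul_le_mul_of_nonneg_left hn.le hΛp.le
    linarith
  have e1 : Real.exp (n * Λ Vs) = Real.exp (n * A) *
      Real.exp (n * (Λ Vs - ∑ i, α i * e i - δ * ∑ i, |α i|)) := by
    rw [← Real.exp_add, ← mul_add, hA]; congr 2; ring
  rw [e1] at hfin
  refine le_of_mul_le_mul_left (le_trans (le_of_eq ?_) hfin) (Real.exp_pos (n * A))
  ring

end LDPtilt

section LDPrate
variable {X : Type*} [MetricSpace X] [CompactSpace X] [MeasurableSpace X] [BorelSpace X]

/-- The rate function: Legendre transform of the pressure over Lipschitz potentials. -/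
noncomputable def rateF (Λ : C(X, ℝ) → ℝ) (σ : ProbabilityMeasure X) : ℝ≥0∞ :=
  ⨆ V : {V : C(X, ℝ) // ∃ D, IsLip V D}, ENNReal.ofReal ((∫ x, V.1 x ∂(σ : Measure X)) - Λ V.1)

lemma intV (V : C(X, ℝ)) (μ : Measure X) [IsFiniteMeasure μ] : Integrable (fun x => V x) μ :=
  Integrable.of_bound V.continuous.measurable.aestronglyMeasurable ‖V‖
    (Eventually.of_forall V.norm_coe_le_norm)

lemma cont_intV (V : C(X, ℝ)) :
    Continuous fun σ : ProbabilityMeasure X => ∫ x, V x ∂(σ : Measure X) :=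
  ProbabilityMeasure.continuous_integral_boundedContinuousFunction
    (BoundedContinuousFunction.mkOfCompact V)

lemma rateF_lsc (Λ : C(X, ℝ) → ℝ) : LowerSemicontinuous (rateF Λ) := by
  refine lowerSemicontinuous_iSup fun V => Continuous.lowerSemicontinuous ?_
  exact ENNReal.continuous_ofReal.comp ((cont_intV V.1).sub continuous_const)

lemma rateF_convex (Λ : C(X, ℝ) → ℝ) (t : ℝ≥0) (ht : t ≤ 1) (σ₁ σ₂ τ : ProbabilityMeasure X)
    (h : (τ : Measure X) = (t : ℝ≥0∞) • (σ₁ : Measure X)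
            + (((1 - t : ℝ≥0)) : ℝ≥0∞) • (σ₂ : Measure X)) :
    rateF Λ τ ≤ t • rateF Λ σ₁ + (1 - t) • rateF Λ σ₂ := by
  refine iSup_le fun V => ?_
  have e : ∫ x, V.1 x ∂(τ : Measure X) = t * ∫ x, V.1 x ∂(σ₁ : Measure X) +
      (1 - t) * ∫ x, V.1 x ∂(σ₂ : Measure X) := by
    rw [h, integral_add_measure ((intV V.1 _).smul_measure ENNReal.coe_ne_top)
      ((intV V.1 _).smul_measure ENNReal.coe_ne_top), integral_smul_measure,
      integral_smul_measure]
    rw [ENNReal.coe_toReal, ENNReal.coe_toReal, NNReal.coe_sub ht, NNReal.coe_one, smul_eq_mul,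
      smul_eq_mul]
  have hs : ∀ σ : ProbabilityMeasure X,
      ENNReal.ofReal ((∫ x, V.1 x ∂(σ : Measure X)) - Λ V.1) ≤ rateF Λ σ := fun σ =>
    le_iSup (fun V : {V : C(X, ℝ) // ∃ D, IsLip V D} =>
      ENNReal.ofReal ((∫ x, V.1 x ∂(σ : Measure X)) - Λ V.1)) V
  set a := (∫ x, V.1 x ∂(σ₁ : Measure X)) - Λ V.1 with ha
  set b := (∫ x, V.1 x ∂(σ₂ : Measure X)) - Λ V.1 with hb
  have e2 : (∫ x, V.1 x ∂(τ : Measure X)) - Λ V.1 = (t : ℝ) * a + ((1 - t : ℝ≥0) : ℝ) * b := by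
    rw [e, ha, hb, NNReal.coe_sub ht, NNReal.coe_one]; ring
  rw [e2]
  refine ENNReal.ofReal_add_le.trans ?_
  rw [ENNReal.ofReal_mul (NNReal.coe_nonneg t), ENNReal.ofReal_mul (NNReal.coe_nonneg _), ENNReal.ofReal_coe_nnreal,
    ENNReal.ofReal_coe_nnreal]
  rw [ENNReal.smul_def, ENNReal.smul_def, smul_eq_mul, smul_eq_mul]
  gcongr
  · exact hs σ₁
  · exact hs σ₂

lemma lip_separate (σ τ : ProbabilityMeasure X)
    (h : ∀ V : C(X, ℝ), (∃ D, IsLip V D) →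
      ∫ x, V x ∂(τ : Measure X) = ∫ x, V x ∂(σ : Measure X)) : τ = σ := by
  have h1 : Tendsto (fun _ : ℕ => τ) atTop (𝓝 σ) := by
    rw [tendsto_iff_forall_lipschitz_integral_tendsto]
    rintro f - ⟨L, hL⟩
    have := h ⟨f, hL.continuous⟩ ⟨L, fun x y => by
      have := hL.dist_le_mul x y
      rwa [Real.dist_eq] at this⟩
    simp only [ContinuousMap.coe_mk] at this
    rw [this]
    exact tendsto_const_nhds
  exact tendsto_nhds_unique tendsto_const_nhds h1

lemma lip_nhds (σ : ProbabilityMeasure X) (U : Set (ProbabilityMeasure X)) (hU : IsOpen U)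
    (hσ : σ ∈ U) : ∃ s : Finset {V : C(X, ℝ) // ∃ D, IsLip V D}, ∀ τ : ProbabilityMeasure X,
      (∀ V : s, |(∫ x, V.1.1 x ∂(τ : Measure X)) - ∫ x, V.1.1 x ∂(σ : Measure X)| < 1) → τ ∈ U := by
  have hK : IsCompact Uᶜ := hU.isClosed_compl.isCompact
  obtain ⟨s, hs⟩ := hK.elim_finite_subcover
    (fun V : {V : C(X, ℝ) // ∃ D, IsLip V D} =>
      {τ : ProbabilityMeasure X |
        1 < |(∫ x, V.1 x ∂(τ : Measure X)) - ∫ x, V.1 x ∂(σ : Measure X)|})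
    (fun V => isOpen_lt continuous_const ((cont_intV V.1).sub continuous_const).abs) (by
      intro τ hτ
      have hne : τ ≠ σ := fun h => hτ (h ▸ hσ)
      have : ∃ V : C(X, ℝ), (∃ D, IsLip V D) ∧
          ∫ x, V x ∂(τ : Measure X) ≠ ∫ x, V x ∂(σ : Measure X) := by
        by_contra hcon
        push Not at hcon
        exact hne (lip_separate σ τ hcon)
      obtain ⟨V, ⟨D, hD⟩, hV⟩ := this
      set d := (∫ x, V x ∂(τ : Measure X)) - ∫ x, V x ∂(σ : Measure X) with hd
      have hd0 : d ≠ 0 := sub_ne_zero.2 hV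
      rw [Set.mem_iUnion]
      refine ⟨⟨(2 / d) • V, _, hD.smul _⟩, ?_⟩
      simp only [Set.mem_setOf_eq, ContinuousMap.smul_apply, smul_eq_mul]
      rw [integral_const_mul, integral_const_mul, ← mul_sub, ← hd, div_mul_cancel₀ _ hd0]
      norm_num)
  refine ⟨s, fun τ hτ => ?_⟩
  by_contra hcon
  have := hs hcon
  simp only [Set.mem_iUnion] at this
  obtain ⟨V, hV, h1⟩ := this
  exact absurd (hτ ⟨V, hV⟩) (not_lt.2 (le_of_lt h1))

lemma log_up {n : ℕ} (hn : n ≠ 0) {M b : ℝ} (hM : 0 < M) {x : ℝ≥0∞}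
    (hx : x ≤ ENNReal.ofReal (M * Real.exp (n * b))) :
    (((n : ℝ) : EReal)⁻¹) * ENNReal.log x ≤ ((Real.log M / n + b : ℝ) : EReal) := by
  have hn' : (n : ℝ) ≠ 0 := by exact_mod_cast hn
  have h1 := ENNReal.log_le_log hx
  rw [ENNReal.log_ofReal_of_pos (by positivity), Real.log_mul hM.ne' (Real.exp_pos _).ne',
    Real.log_exp] at h1
  rw [← EReal.coe_inv]
  refine (mul_le_mul_of_nonneg_left h1 (by exact_mod_cast inv_nonneg.2 (Nat.cast_nonneg n))).trans
    (le_of_eq ?_)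
  rw [← EReal.coe_mul]
  congr 1
  field_simp

lemma log_low {n : ℕ} (hn : n ≠ 0) {M b : ℝ} (hM : 0 < M) {x : ℝ≥0∞}
    (hx : ENNReal.ofReal (M * Real.exp (n * b)) ≤ x) :
    ((Real.log M / n + b : ℝ) : EReal) ≤ (((n : ℝ) : EReal)⁻¹) * ENNReal.log x := by
  have hn' : (n : ℝ) ≠ 0 := by exact_mod_cast hn
  have h1 := ENNReal.log_le_log hx
  rw [ENNReal.log_ofReal_of_pos (by positivity), Real.log_mul hM.ne' (Real.exp_pos _).ne',
    Real.log_exp] at h1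
  rw [← EReal.coe_inv]
  refine (le_of_eq ?_).trans
    (mul_le_mul_of_nonneg_left h1 (by exact_mod_cast inv_nonneg.2 (Nat.cast_nonneg n)))
  rw [← EReal.coe_mul]
  congr 1
  field_simp

lemma log_lim (M b : ℝ) :
    Tendsto (fun n : ℕ => ((Real.log M / n + b : ℝ) : EReal)) atTop (𝓝 (b : EReal)) := by
  rw [EReal.tendsto_coe]
  have := (tendsto_const_div_atTop_nhds_zero_nat (Real.log M)).add_const b
  simpa using this

end LDPrate

section LDPmain
variable {X E : Type*} [MetricSpace X] [CompactSpace X] [Nonempty X]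
    [MeasurableSpace X] [BorelSpace X]
    [MetricSpace E] [CompactSpace E] [MeasurableSpace E] [BorelSpace E]

lemma LDP_upper (ℓ : Measure E) [IsProbabilityMeasure ℓ] (S : X × E → X) (hS : Continuous S)
    (P : Measure (ℕ → E)) [IsProbabilityMeasure P]
    (hP : ∀ n : ℕ, Measure.map (fun ω (i : Fin n) => ω i) P = Measure.pi fun _ : Fin n => ℓ)
    {q : ℝ} (h : Setup (TT ℓ S hS) q) (Λ : C(X, ℝ) → ℝ)
    (hΛ : ∀ V D, IsLip V D → ∃ g K c, IsEig (TT ℓ S hS) V (Λ V) g K c)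
    (B : Set (ProbabilityMeasure X)) :
    limsup (fun n : ℕ => ⨆ μ : ProbabilityMeasure X, ((n : ℝ)⁻¹ : EReal)
                * ENNReal.log (((μ : Measure X).prod P) {p | empDist S n p ∈ B})) atTop
            ≤ -(⨅ σ ∈ closure B, (rateF Λ σ : EReal)) := by
  refine EReal.le_neg_of_le_neg (le_of_forall_lt fun a ha => ?_)
  induction a using EReal.rec with
  | top => exact absurd ha (not_lt.2 le_top)
  | bot =>
    -- the limsup is bounded above by zero
    refine lt_of_lt_of_le (EReal.bot_lt_coe (-1)) (EReal.le_neg_of_le_neg ?_)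
    refine limsup_le_of_le (by isBoundedDefault) (Eventually.of_forall fun n => iSup_le fun μ => ?_)
    have h1 : ENNReal.log (((μ : Measure X).prod P) {p | empDist S n p ∈ B}) ≤ 0 := by
      rw [ENNReal.log_le_zero_iff]; exact prob_le_one
    have h2 : ((n : ℝ) : EReal)⁻¹ * ENNReal.log (((μ : Measure X).prod P)
        {p | empDist S n p ∈ B}) ≤ 0 := by
      rw [← EReal.coe_inv]
      have := mul_le_mul_of_nonneg_left h1
        (a := (((n : ℝ)⁻¹ : ℝ) : EReal)) (by exact_mod_cast inv_nonneg.2 (Nat.cast_nonneg n))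
      simpa using this
    refine h2.trans ?_
    rw [← EReal.coe_neg]
    norm_num
  | coe a =>
    obtain ⟨a', ha1, ha2⟩ := EReal.lt_iff_exists_real_btwn.1 ha
    refine lt_of_lt_of_le ha1 (EReal.le_neg_of_le_neg ?_)
    have hcov : closure B ⊆ ⋃ V : {V : C(X, ℝ) // ∃ D, IsLip V D},
        {τ : ProbabilityMeasure X | a' < (∫ x, V.1 x ∂(τ : Measure X)) - Λ V.1} := by
      intro σ hσ
      have h1 : (a' : EReal) < (rateF Λ σ : EReal) :=
        lt_of_lt_of_le ha2 (iInf₂_le σ hσ)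
      rw [Set.mem_iUnion]
      rcases lt_or_ge a' 0 with hneg | hpos
      · have hl : IsLip (0 : C(X, ℝ)) 0 := fun x y => by simp
        refine ⟨⟨0, 0, hl⟩, ?_⟩
        obtain ⟨g, K, c, hg⟩ := hΛ _ _ hl
        have := press_zero h hg
        simp only [Set.mem_setOf_eq, ContinuousMap.zero_apply, integral_zero]
        linarith
      · have h2 : ENNReal.ofReal a' < rateF Λ σ := by
          rw [← EReal.coe_ennreal_lt_coe_ennreal_iff, EReal.coe_ennreal_ofReal, max_eq_left hpos]
          exact h1
        rw [rateF, lt_iSup_iff] at h2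
        obtain ⟨V, hV⟩ := h2
        exact ⟨V, (ENNReal.ofReal_lt_ofReal_iff_of_nonneg hpos).1 hV⟩
    obtain ⟨s, hs⟩ := isClosed_closure.isCompact.elim_finite_subcover _
      (fun V : {V : C(X, ℝ) // ∃ D, IsLip V D} =>
        isOpen_lt continuous_const ((cont_intV V.1).sub continuous_const)) hcov
    choose g K c hg using fun V : {V : C(X, ℝ) // ∃ D, IsLip V D} => hΛ V.1 _ V.2.choose_spec
    set M : ℝ := (∑ V ∈ s, (c V)⁻¹) + 1 with hM
    have hM0 : 0 < M := by
      have : 0 ≤ ∑ V ∈ s, (c V)⁻¹ := Finset.sum_nonneg fun V _ => inv_nonneg.2 (hg V).c0.le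
      linarith
    have hbound : ∀ᶠ n : ℕ in atTop, (⨆ μ : ProbabilityMeasure X, ((n : ℝ)⁻¹ : EReal)
        * ENNReal.log (((μ : Measure X).prod P) {p | empDist S n p ∈ B})) ≤
        ((Real.log M / n + (-a') : ℝ) : EReal) := by
      filter_upwards [eventually_ne_atTop 0] with n hn
      refine iSup_le fun μ => log_up hn hM0 ?_
      calc ((μ : Measure X).prod P) {p | empDist S n p ∈ B}
          ≤ ((μ : Measure X).prod P) (⋃ V ∈ s, {p | a' < tavg S V.1 n p - Λ V.1}) := by
            refine measure_mono fun p hp => ?_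
            have h1 := hs (subset_closure hp)
            simp only [Set.mem_iUnion, Set.mem_setOf_eq] at h1 ⊢
            obtain ⟨V, hV, h2⟩ := h1
            change a' < (∫ x, V.1 x ∂(empDist S n p : Measure X)) - Λ V.1 at h2
            rw [tavg_eq S V.1 hn p] at h2
            exact ⟨V, hV, h2⟩
        _ ≤ ∑ V ∈ s, ((μ : Measure X).prod P) {p | a' < tavg S V.1 n p - Λ V.1} :=
            measure_biUnion_finset_le _ _
        _ ≤ ∑ V ∈ s, ENNReal.ofReal ((c V)⁻¹ * Real.exp (n * (-a'))) :=
            Finset.sum_le_sum fun V _ => cheb ℓ S hS P hP (hg V) n a' μ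
        _ = ENNReal.ofReal (∑ V ∈ s, (c V)⁻¹ * Real.exp (n * (-a'))) := by
            rw [ENNReal.ofReal_sum_of_nonneg]
            intro V _
            have := inv_pos.2 (hg V).c0
            positivity
        _ ≤ _ := by
            refine ENNReal.ofReal_le_ofReal ?_
            rw [← Finset.sum_mul]
            refine mul_le_mul_of_nonneg_right (by linarith) (Real.exp_pos _).le
    refine (limsup_le_limsup hbound (by isBoundedDefault) (by isBoundedDefault)).trans ?_
    rw [(log_lim M (-a')).limsup_eq, EReal.coe_neg]

lemma LDP_lower (ℓ : Measure E) [IsProbabilityMeasure ℓ] (S : X × E → X) (hS : Continuous S)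
    (P : Measure (ℕ → E)) [IsProbabilityMeasure P]
    (hP : ∀ n : ℕ, Measure.map (fun ω (i : Fin n) => ω i) P = Measure.pi fun _ : Fin n => ℓ)
    {q : ℝ} (h : Setup (TT ℓ S hS) q) (Λ : C(X, ℝ) → ℝ)
    (hΛ : ∀ V D, IsLip V D → ∃ g K c, IsEig (TT ℓ S hS) V (Λ V) g K c)
    (B : Set (ProbabilityMeasure X)) :
    -(⨅ σ ∈ interior B, (rateF Λ σ : EReal)) ≤
      liminf (fun n : ℕ => ⨅ μ : ProbabilityMeasure X, ((n : ℝ)⁻¹ : EReal)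
                * ENNReal.log (((μ : Measure X).prod P) {p | empDist S n p ∈ B})) atTop := by
  classical
  refine EReal.neg_le_of_neg_le (le_iInf₂ fun σ hσ => ?_)
  by_cases htop : rateF Λ σ = ⊤
  · rw [htop]; exact le_top
  rw [← EReal.coe_ennreal_toReal htop]
  set I := (rateF Λ σ).toReal with hI
  refine EReal.neg_le_of_neg_le (le_of_forall_lt fun b hb => ?_)
  rw [← EReal.coe_neg] at hb
  obtain ⟨b', hb1, hb2⟩ := EReal.lt_iff_exists_real_btwn.1 hb
  refine lt_of_lt_of_le hb1 ?_
  have hb3 : b' < -I := by exact_mod_cast hb2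
  obtain ⟨s, hs⟩ := lip_nhds σ _ isOpen_interior hσ
  set V : s → C(X, ℝ) := fun i => i.1.1 with hVdef
  choose D hD using fun i : s => i.1.2
  have hIle : ∀ U : C(X, ℝ), (∃ D, IsLip U D) → (∫ x, U x ∂(σ : Measure X)) - Λ U ≤ I := by
    intro U hU
    have h1 : ENNReal.ofReal ((∫ x, U x ∂(σ : Measure X)) - Λ U) ≤ rateF Λ σ :=
      le_iSup (fun V : {V : C(X, ℝ) // ∃ D, IsLip V D} =>
        ENNReal.ofReal ((∫ x, V.1 x ∂(σ : Measure X)) - Λ V.1)) ⟨U, hU⟩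
    have h2 := ENNReal.toReal_mono htop h1
    rw [ENNReal.toReal_ofReal'] at h2
    exact (le_max_left _ _).trans h2
  obtain ⟨α, e, he1, he2, he3⟩ := minim h Λ hΛ V D hD
    (fun i => ∫ x, V i x ∂(σ : Measure X)) I (by
      intro α
      have hl : ∃ D', IsLip (∑ i, α i • V i) D' := by
        refine ⟨∑ i, |α i| * D i, ?_⟩
        refine Finset.induction_on (Finset.univ : Finset s) ?_ ?_
        · intro x y; simp
        · intro a s ha ih
          rw [Finset.sum_insert ha, Finset.sum_insert ha]
          exact ((hD a).smul (α a)).add ih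
      have h1 := hIle _ hl
      have h2 : ∫ x, (∑ i, α i • V i) x ∂(σ : Measure X) =
          ∑ i, α i * ∫ x, V i x ∂(σ : Measure X) := by
        have : ∀ x, (∑ i, α i • V i) x = ∑ i, α i * V i x := by
          intro x; simp
        simp only [this]
        rw [integral_finsetSum _ fun i _ => (intV (V i) _).const_mul (α i)]
        simp only [integral_const_mul]
      rw [h2] at h1
      exact h1)
  set A := ∑ i, |α i| with hA
  have hA0 : 0 ≤ A := Finset.sum_nonneg fun i _ => abs_nonneg _
  set δ := min (1 / 2) ((-I - b') / (A + 1)) with hδ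
  have hδ0 : 0 < δ := lt_min (by norm_num) (div_pos (by linarith) (by linarith))
  have hδ1 : δ ≤ 1 / 2 := min_le_left _ _
  have hδ2 : δ * A ≤ -I - b' := by
    have : δ ≤ (-I - b') / (A + 1) := min_le_right _ _
    rw [le_div_iff₀ (by linarith)] at this
    nlinarith
  obtain ⟨c1, hc1, hev⟩ := tilt ℓ S hS P hP Λ hΛ V D hD α e he3 δ hδ0
  have hbound : ∀ᶠ n : ℕ in atTop, ((Real.log c1 / n + b' : ℝ) : EReal) ≤
      (⨅ μ : ProbabilityMeasure X, ((n : ℝ)⁻¹ : EReal)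
        * ENNReal.log (((μ : Measure X).prod P) {p | empDist S n p ∈ B})) := by
    filter_upwards [eventually_ne_atTop 0, hev] with n hn hn2
    refine le_iInf fun μ => log_low hn hc1 ?_
    have h1 := hn2 (μ : Measure X) inferInstance
    have h2 : ((μ : Measure X).prod P) {p | ∀ i, |tavg S (V i) n p - e i| < δ} ≤
        ((μ : Measure X).prod P) {p | empDist S n p ∈ B} := by
      refine measure_mono fun p hp => ?_
      suffices hin : empDist S n p ∈ interior B from
        (interior_subset : interior B ⊆ B) hin
      refine hs _ fun i => ?_
      have h3 := hp i
      have h4 := he1 i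
      rw [tavg_eq S i.1.1 hn p]
      rw [abs_lt] at h3 ⊢
      rw [abs_le] at h4
      simp only [hVdef] at h3 h4
      constructor <;> linarith
    refine le_trans ?_ h2
    rw [← ENNReal.ofReal_toReal (measure_ne_top ((μ : Measure X).prod P)
      {p | ∀ i, |tavg S (V i) n p - e i| < δ})]
    refine ENNReal.ofReal_le_ofReal (le_trans ?_ h1)
    refine mul_le_mul_of_nonneg_left (Real.exp_le_exp.2 (mul_le_mul_of_nonneg_left ?_
      (Nat.cast_nonneg n))) hc1.le
    linarith
  rw [← (log_lim c1 b').liminf_eq]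
  exact liminf_le_liminf hbound (by isBoundedDefault) (by isBoundedDefault)

end LDPmain

/-- Uniform large deviation principle for the empirical distributions of a
random dynamical system, under hypotheses (I) and (C): there exists a convex, lower
semicontinuous rate function `I : P(X) → [0,∞]` with compact sublevel sets such that the
uniform-in-initial-distribution LDP bounds hold for every Borel set `B ⊆ P(X)`. -/
theorem uniform_LDP_for_RDS
    {X E : Type*} [MetricSpace X] [CompactSpace X] [Nonempty X]
    [MeasurableSpace X] [BorelSpace X]
    [MetricSpace E] [CompactSpace E] [MeasurableSpace E] [BorelSpace E]
    (ℓ : Measure E) [IsProbabilityMeasure ℓ]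
    (S : X × E → X) (hS : Continuous S)
    (C₀ : ℝ) (hC₀ : 0 < C₀)
    (hSLip : ∀ (x x' : X) (ζ : E), dist (S (x, ζ)) (S (x', ζ)) ≤ C₀ * dist x x')
    (κ : X → Measure X) (hκdef : κ = fun x => Measure.map (fun ζ => S (x, ζ)) ℓ)
    -- hypothesis (I): uniform irreducibility
    (hI : ∀ ε : ℝ, 0 < ε → ∃ (N : ℕ) (p : ℝ≥0∞), 0 < p ∧
      ∀ x y : X, p < kIter κ N x (Metric.ball y ε))
    -- hypothesis (C): coupling
    {Ω₀ : Type*} [MeasurableSpace Ω₀] (P₀ : Measure Ω₀) [IsProbabilityMeasure P₀]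
    (q : ℝ) (hq0 : 0 ≤ q) (hq1 : q < 1) (C : ℝ) (hC : 0 < C)
    (R R' : X → X → Ω₀ → X)
    (hRmeas : Measurable fun p : (X × X) × Ω₀ => R p.1.1 p.1.2 p.2)
    (hR'meas : Measurable fun p : (X × X) × Ω₀ => R' p.1.1 p.1.2 p.2)
    (hRlaw : ∀ x x' : X, Measure.map (R x x') P₀ = κ x)
    (hR'law : ∀ x x' : X, Measure.map (R' x x') P₀ = κ x')
    (hcouple : ∀ x x' : X,
      P₀ {ω | q * dist x x' < dist (R x x' ω) (R' x x' ω)} ≤ ENNReal.ofReal (C * dist x x'))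
    -- `P` is the countable product measure `ℓ^{⊗ℕ}` on `E^ℕ`
    (P : Measure (ℕ → E)) [IsProbabilityMeasure P]
    (hP : ∀ n : ℕ, Measure.map (fun ω (i : Fin n) => ω i) P = Measure.pi fun _ : Fin n => ℓ) :
    ∃ I : ProbabilityMeasure X → ℝ≥0∞,
      -- `I` is convex
      (∀ (t : ℝ≥0), t ≤ 1 → ∀ σ₁ σ₂ τ : ProbabilityMeasure X,
        (τ : Measure X) = (t : ℝ≥0∞) • (σ₁ : Measure X)
            + (((1 - t : ℝ≥0)) : ℝ≥0∞) • (σ₂ : Measure X) →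
        I τ ≤ t • I σ₁ + (1 - t) • I σ₂) ∧
      -- `I` is lower semicontinuous for the topology of weak convergence
      LowerSemicontinuous I ∧
      -- `I` has compact sublevel sets
      (∀ a : ℝ≥0∞, a < ⊤ → IsCompact {σ : ProbabilityMeasure X | I σ ≤ a}) ∧
      -- the uniform LDP bounds
      ∀ B : Set (ProbabilityMeasure X),
        (-(⨅ σ ∈ interior B, (I σ : EReal))
            ≤ liminf (fun n : ℕ => ⨅ μ : ProbabilityMeasure X, ((n : ℝ)⁻¹ : EReal)
                * ENNReal.log (((μ : Measure X).prod P) {p | empDist S n p ∈ B})) atTop) ∧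
        (liminf (fun n : ℕ => ⨅ μ : ProbabilityMeasure X, ((n : ℝ)⁻¹ : EReal)
                * ENNReal.log (((μ : Measure X).prod P) {p | empDist S n p ∈ B})) atTop
            ≤ limsup (fun n : ℕ => ⨆ μ : ProbabilityMeasure X, ((n : ℝ)⁻¹ : EReal)
                * ENNReal.log (((μ : Measure X).prod P) {p | empDist S n p ∈ B})) atTop) ∧
        (limsup (fun n : ℕ => ⨆ μ : ProbabilityMeasure X, ((n : ℝ)⁻¹ : EReal)
                * ENNReal.log (((μ : Measure X).prod P) {p | empDist S n p ∈ B})) atTop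
            ≤ -(⨅ σ ∈ closure B, (I σ : EReal))) := by
  have h := setupTT ℓ S hS κ hκdef hI P₀ q hq0 hq1 C hC R R' hRmeas hR'meas hRlaw hR'law hcouple
  have hex : ∀ V : C(X, ℝ), ∃ l, ∀ D, IsLip V D → ∃ g K c, IsEig (TT ℓ S hS) V l g K c := by
    intro V
    by_cases hV : ∃ D, IsLip V D
    · obtain ⟨D, hD⟩ := hV
      obtain ⟨l, g, K, c, hg⟩ := exists_eig h hD
      exact ⟨l, fun _ _ => ⟨g, K, c, hg⟩⟩
    · exact ⟨0, fun D hD => absurd ⟨D, hD⟩ hV⟩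
  choose Λ hΛ using hex
  have hne : Nonempty (ProbabilityMeasure X) :=
    ⟨⟨Measure.dirac (Classical.arbitrary X), inferInstance⟩⟩
  refine ⟨rateF Λ, fun t ht σ₁ σ₂ τ hτ => rateF_convex Λ t ht σ₁ σ₂ τ hτ, rateF_lsc Λ,
    fun a _ => ((rateF_lsc Λ).isClosed_preimage a).isCompact, fun B =>
    ⟨LDP_lower ℓ S hS P hP h Λ hΛ B, ?_, LDP_upper ℓ S hS P hP h Λ hΛ B⟩⟩
  refine le_trans (liminf_le_liminf (Eventually.of_forall fun n => ?_)
    (by isBoundedDefault) (by isBoundedDefault)) liminf_le_limsup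
  exact iInf_le_iSup
end

section
/- Existence of the pressure function: Assume hypotheses (I) and (C). Then for every continuous V : X → ℝ there exists a real number Λ(V) such that sup_{x∈X} |(1/n)·log(Q_n^V 1(x)) − Λ(V)| → 0 as n → ∞; that is, the functions x ↦ (1/n)·log E_x[exp(V(x_1)+⋯+V(x_n))] converge uniformly on X to a constant Λ(V) independent of the initial point. -/
open MeasureTheory Filter Topology
open scoped ENNReal NNReal

noncomputable def FK {X : Type*} [MeasurableSpace X] (κ : X → Measure X) (V f : X → ℝ) (x : X) : ℝ :=
  ∫ y, Real.exp (V y) * f y ∂(κ x)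

noncomputable def FKiter {X : Type*} [MeasurableSpace X] (κ : X → Measure X) (V : X → ℝ) :
    ℕ → (X → ℝ) → X → ℝ
  | 0 => fun f => f
  | n + 1 => fun f => FK κ V (FKiter κ V n f)

structure FellerK {X : Type*} [MetricSpace X] [MeasurableSpace X]
    (κ : X → Measure X) : Prop where
  meas : Measurable κ
  prob : ∀ x, IsProbabilityMeasure (κ x)
  feller : ∀ f : X → ℝ, Continuous f → Continuous fun x => ∫ y, f y ∂(κ x)

set_option linter.unusedSectionVars false

section basic

variable {X : Type*} [MetricSpace X] [CompactSpace X] [MeasurableSpace X] [BorelSpace X]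
  {κ : X → Measure X} {V : X → ℝ}

lemma FellerK.integrable (h : FellerK κ) {f : X → ℝ} (hf : Continuous f) (x : X) :
    Integrable f (κ x) := by
  have := h.prob x
  exact hf.integrable_of_hasCompactSupport (HasCompactSupport.of_compactSpace f)

lemma FellerK.cont_FK (h : FellerK κ) (hV : Continuous V) {f : X → ℝ} (hf : Continuous f) :
    Continuous (FK κ V f) :=
  h.feller (fun y => Real.exp (V y) * f y) (by fun_prop)

lemma FellerK.cont_iter (h : FellerK κ) (hV : Continuous V) {f : X → ℝ} (hf : Continuous f)
    (n : ℕ) : Continuous (FKiter κ V n f) := by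
  induction n with
  | zero => exact hf
  | succ n ih => exact h.cont_FK hV ih

lemma FellerK.FK_mono (h : FellerK κ) {W : X → ℝ} (hV : Continuous V) (hW : Continuous W)
    {f g : X → ℝ}
    (hf : Continuous f) (hg : Continuous g)
    (hle : ∀ y, Real.exp (V y) * f y ≤ Real.exp (W y) * g y) (x : X) :
    FK κ V f x ≤ FK κ W g x := by
  apply integral_mono
  · exact h.integrable (by fun_prop) x
  · exact h.integrable (by fun_prop) x
  · exact hle

lemma FK_smul (c : ℝ) (f : X → ℝ) (x : X) :
    FK κ V (fun y => c * f y) x = c * FK κ V f x := by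
  unfold FK
  rw [← integral_const_mul]
  congr 1; ext y; ring

lemma iter_smul (c : ℝ) (f : X → ℝ) (n : ℕ) :
    FKiter κ V n (fun y => c * f y) = fun x => c * FKiter κ V n f x := by
  induction n with
  | zero => rfl
  | succ n ih =>
    ext x
    simp only [FKiter, ih]
    exact FK_smul _ _ _

lemma iter_add (f : X → ℝ) (m n : ℕ) :
    FKiter κ V (m + n) f = FKiter κ V m (FKiter κ V n f) := by
  induction m with
  | zero => simp [FKiter]
  | succ m ih => rw [Nat.add_right_comm]; simp only [FKiter, ih]

lemma FellerK.iter_mono (h : FellerK κ) (hV : Continuous V)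
    {f g : X → ℝ} (hf : Continuous f) (hg : Continuous g) (hle : ∀ y, f y ≤ g y) (n : ℕ) (x : X) :
    FKiter κ V n f x ≤ FKiter κ V n g x := by
  induction n generalizing x with
  | zero => exact hle x
  | succ n ih =>
    exact h.FK_mono hV hV (h.cont_iter hV hf n) (h.cont_iter hV hg n)
      (fun y => mul_le_mul_of_nonneg_left (ih y) (Real.exp_pos _).le) x

lemma FellerK.iter_nonneg (h : FellerK κ) (hV : Continuous V)
    {f : X → ℝ} (hf : Continuous f) (hle : ∀ y, 0 ≤ f y) (n : ℕ) (x : X) :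
    0 ≤ FKiter κ V n f x := by
  have := h.iter_mono hV continuous_const hf hle n x
  have h2 := congrFun (iter_smul (κ := κ) (V := V) 0 f n) x
  simp only [zero_mul] at h2
  linarith

lemma FK_const_one (h : FellerK κ) (c : ℝ) (x : X) : ∫ _, c ∂(κ x) = c := by
  have := h.prob x
  simp

lemma FellerK.iter_lower (h : FellerK κ) (hV : Continuous V) {v : ℝ} (hv : ∀ x, |V x| ≤ v)
    (n : ℕ) (x : X) : Real.exp (-(n * v)) ≤ FKiter κ V n 1 x := by
  induction n generalizing x with
  | zero => simp [FKiter]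
  | succ n ih =>
    rw [← FK_const_one h (Real.exp (-((n + 1 : ℕ) * v))) x]
    apply integral_mono (h.integrable continuous_const x)
    · have := h.cont_iter hV (continuous_one (X := X) (M := ℝ)) n
      exact h.integrable (by fun_prop) x
    · intro y
      have e : Real.exp (-((n + 1 : ℕ) * v)) = Real.exp (-v) * Real.exp (-(n * v)) := by
        rw [← Real.exp_add]; push_cast; ring_nf
      simp only [e]
      gcongr
      · exact (abs_le.1 (hv y)).1
      · exact ih y

lemma FellerK.iter_upper (h : FellerK κ) (hV : Continuous V) {v : ℝ} (hv : ∀ x, |V x| ≤ v)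
    (n : ℕ) (x : X) : FKiter κ V n 1 x ≤ Real.exp (n * v) := by
  induction n generalizing x with
  | zero => simp [FKiter]
  | succ n ih =>
    rw [← FK_const_one h (Real.exp (((n + 1 : ℕ) * v))) x]
    apply integral_mono _ (h.integrable continuous_const x)
    · intro y
      have e : Real.exp (((n + 1 : ℕ) * v)) = Real.exp (v) * Real.exp ((n * v)) := by
        rw [← Real.exp_add]; push_cast; ring_nf
      simp only [e]
      have := ih y
      have h1 := (abs_le.1 (hv y)).2
      have h0 := h.iter_nonneg hV (continuous_one (X := X) (M := ℝ)) (fun _ => zero_le_one) n y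
      gcongr
    · have := h.cont_iter hV (continuous_one (X := X) (M := ℝ)) n
      exact h.integrable (by fun_prop) x

lemma FellerK.iter_le_of_le (h : FellerK κ) {W : X → ℝ} (hV : Continuous V) (hW : Continuous W)
    {e : ℝ} (hle : ∀ x, V x ≤ W x + e) (n : ℕ) (x : X) :
    FKiter κ V n 1 x ≤ Real.exp (n * e) * FKiter κ W n 1 x := by
  induction n generalizing x with
  | zero => simp [FKiter]
  | succ n ih =>
    have c1 := h.cont_iter hV (continuous_one (X := X) (M := ℝ)) n
    have c2 := h.cont_iter hW (continuous_one (X := X) (M := ℝ)) n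
    simp only [FKiter]
    rw [← FK_smul]
    refine h.FK_mono hV hW c1 (by fun_prop) (fun y => ?_) x
    have h0 := h.iter_nonneg hV (continuous_one (X := X) (M := ℝ)) (fun _ => zero_le_one) n y
    calc Real.exp (V y) * FKiter κ V n 1 y
        ≤ Real.exp (W y + e) * (Real.exp (n * e) * FKiter κ W n 1 y) := by
          have := ih y
          have := hle y
          gcongr
      _ = _ := by
          push_cast
          rw [add_mul, Real.exp_add, Real.exp_add]; ring_nf

lemma FellerK.kIter_le (h : FellerK κ) (hV : Continuous V) {v : ℝ} (hv : ∀ x, |V x| ≤ v)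
    (n : ℕ) {f : X → ℝ} (hf : Continuous f) (hf0 : ∀ y, 0 ≤ f y) (x : X) :
    ∫⁻ y, ENNReal.ofReal (f y) ∂(kIter κ n x) ≤
      ENNReal.ofReal (Real.exp (n * v) * FKiter κ V n f x) := by
  induction n generalizing f with
  | zero => 
    simp only [kIter, FKiter]
    rw [lintegral_dirac' _ (by fun_prop)]
    simp
  | succ n ih =>
    simp only [kIter]
    rw [Measure.lintegral_bind h.meas.aemeasurable (by fun_prop)]
    have hc := h.cont_FK hV hf
    have key : ∀ y, ∫⁻ z, ENNReal.ofReal (f z) ∂(κ y) ≤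
        ENNReal.ofReal (Real.exp v * FK κ V f y) := by
      intro y
      rw [← ofReal_integral_eq_lintegral_ofReal (h.integrable hf y) (ae_of_all _ hf0)]
      apply ENNReal.ofReal_le_ofReal
      rw [FK, ← integral_const_mul]
      apply integral_mono (h.integrable hf y) (h.integrable (by fun_prop) y)
      intro z
      have : 1 ≤ Real.exp v * Real.exp (V z) := by
        rw [← Real.exp_add]
        apply Real.one_le_exp
        linarith [(abs_le.1 (hv z)).1]
      have := hf0 z
      simp only
      nlinarith
    refine (lintegral_mono key).trans ?_
    refine (ih (f := fun y => Real.exp v * FK κ V f y) (by fun_prop) ?_).trans ?_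
    · intro y
      have := h.iter_nonneg hV hf hf0 1 y
      simp only [FKiter] at this
      positivity
    · apply ENNReal.ofReal_le_ofReal
      rw [iter_smul, iter_add]
      simp only [FKiter]
      push_cast
      rw [add_mul, Real.exp_add]
      apply le_of_eq; ring_nf

end basic

lemma FellerK.lip_step 
    {X : Type*} [MetricSpace X] [CompactSpace X] [MeasurableSpace X] [BorelSpace X]
    {κ : X → Measure X} (h : FellerK κ)
    {Ω₀ : Type*} [MeasurableSpace Ω₀] (P₀ : Measure Ω₀) [IsProbabilityMeasure P₀]
    (q : ℝ) (hq0 : 0 ≤ q) (hq1 : q < 1) (C : ℝ) (hC : 0 < C)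
    (R R' : X → X → Ω₀ → X)
    (hRmeas : Measurable fun p : (X × X) × Ω₀ => R p.1.1 p.1.2 p.2)
    (hR'meas : Measurable fun p : (X × X) × Ω₀ => R' p.1.1 p.1.2 p.2)
    (hRlaw : ∀ x x' : X, Measure.map (R x x') P₀ = κ x)
    (hR'law : ∀ x x' : X, Measure.map (R' x x') P₀ = κ x')
    (hcouple : ∀ x x' : X,
      P₀ {ω | q * dist x x' < dist (R x x' ω) (R' x x' ω)} ≤ ENNReal.ofReal (C * dist x x'))
    {V : X → ℝ} (hV : Continuous V) {v : ℝ} (hv : ∀ x, |V x| ≤ v)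
    {K : ℝ} (hK : ∀ x y, |Real.exp (V x) - Real.exp (V y)| ≤ K * dist x y) (hK0 : 0 ≤ K)
    {u G : X → ℝ} (hu : Continuous u) (hG : Continuous G) {M : ℝ} (hu0 : ∀ x, 0 ≤ u x)
    (huM : ∀ x, u x ≤ M) (hM : 0 ≤ M) (hG0 : ∀ x, 0 ≤ G x)
    (hlip : ∀ x y, |u x - u y| ≤ dist x y * G x) (x x' : X) :
    |FK κ V u x - FK κ V u x'| ≤
      dist x x' * (q * FK κ V G x + (C * Real.exp v + K) * M) := by
  have mR : Measurable (R x x') := hRmeas.comp (measurable_prodMk_left (x := (x, x')))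
  have mR' : Measurable (R' x x') := hR'meas.comp (measurable_prodMk_left (x := (x, x')))
  have iR : ∀ f : X → ℝ, Continuous f → Integrable (fun ω => f (R x x' ω)) P₀ := by
    intro f hf
    have := h.integrable hf x
    rw [← hRlaw x x'] at this
    exact (integrable_map_measure hf.aestronglyMeasurable mR.aemeasurable).1 this
  have iR' : ∀ f : X → ℝ, Continuous f → Integrable (fun ω => f (R' x x' ω)) P₀ := by
    intro f hf
    have := h.integrable hf x'
    rw [← hR'law x x'] at this
    exact (integrable_map_measure hf.aestronglyMeasurable mR'.aemeasurable).1 this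
  have eR : ∀ f : X → ℝ, Continuous f → FK κ V f x =
      ∫ ω, Real.exp (V (R x x' ω)) * f (R x x' ω) ∂P₀ := by
    intro f hf
    rw [FK, ← hRlaw x x', integral_map mR.aemeasurable]
    exact Continuous.aestronglyMeasurable (by fun_prop)
  have eR' : ∀ f : X → ℝ, Continuous f → FK κ V f x' =
      ∫ ω, Real.exp (V (R' x x' ω)) * f (R' x x' ω) ∂P₀ := by
    intro f hf
    rw [FK, ← hR'law x x', integral_map mR'.aemeasurable]
    exact Continuous.aestronglyMeasurable (by fun_prop)
  set bad : Set Ω₀ := {ω | q * dist x x' < dist (R x x' ω) (R' x x' ω)} with hbad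
  have mbad : MeasurableSet bad := by
    apply measurableSet_lt measurable_const
    exact mR.dist mR'
  have hPbad : P₀.real bad ≤ C * dist x x' :=
    ENNReal.toReal_le_of_le_ofReal (by positivity) (hcouple x x')
  have iF1 := iR (fun y => Real.exp (V y) * u y) (by fun_prop)
  have iF2 := iR' (fun y => Real.exp (V y) * u y) (by fun_prop)
  have iG := iR (fun y => Real.exp (V y) * G y) (by fun_prop)
  rw [eR u hu, eR' u hu, eR G hG, ← integral_sub iF1 iF2]
  have pw : ∀ ω, |Real.exp (V (R x x' ω)) * u (R x x' ω) -
      Real.exp (V (R' x x' ω)) * u (R' x x' ω)| ≤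
      (q * dist x x') * (Real.exp (V (R x x' ω)) * G (R x x' ω)) + K * dist x x' * M +
        bad.indicator (fun _ => Real.exp v * M) ω := by
    intro ω
    set y := R x x' ω with hy
    set z := R' x x' ω with hz
    have hd : 0 ≤ dist x x' := dist_nonneg
    have hGy : 0 ≤ Real.exp (V y) * G y := mul_nonneg (Real.exp_pos _).le (hG0 y)
    by_cases hω : ω ∈ bad
    · rw [Set.indicator_of_mem hω]
      have bnd : ∀ w, 0 ≤ Real.exp (V w) * u w ∧ Real.exp (V w) * u w ≤ Real.exp v * M := by
        intro w
        have := hu0 w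
        have := huM w
        have := (abs_le.1 (hv w)).2
        refine ⟨by positivity, by gcongr⟩
      have h1 : 0 ≤ (q * dist x x') * (Real.exp (V y) * G y) + K * dist x x' * M := by
        positivity
      have := bnd y
      have := bnd z
      rw [abs_le]
      constructor <;> linarith
    · rw [Set.indicator_of_notMem hω]
      have hle : dist y z ≤ q * dist x x' := by
        simpa [hbad] using hω
      have hle2 : q * dist x x' ≤ dist x x' := by nlinarith
      have e : Real.exp (V y) * u y - Real.exp (V z) * u z =
        Real.exp (V y) * (u y - u z) + (Real.exp (V y) - Real.exp (V z)) * u z := by ring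
      rw [e]
      refine (abs_add_le _ _).trans ?_
      rw [abs_mul, abs_mul, abs_of_pos (Real.exp_pos _), abs_of_nonneg (hu0 z), add_zero]
      apply add_le_add
      · calc Real.exp (V y) * |u y - u z| ≤ Real.exp (V y) * (dist y z * G y) := by
              gcongr; exact hlip y z
          _ = dist y z * (Real.exp (V y) * G y) := by ring
          _ ≤ _ := by gcongr
      · have := hK y z
        have := huM z
        have := hu0 z
        calc |Real.exp (V y) - Real.exp (V z)| * u z ≤ (K * dist y z) * M := by gcongr
          _ ≤ _ := by gcongr; linarith
  have iI : Integrable (bad.indicator (fun _ => Real.exp v * M)) P₀ :=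
    (integrable_const _).indicator mbad
  calc |∫ ω, (Real.exp (V (R x x' ω)) * u (R x x' ω) -
      Real.exp (V (R' x x' ω)) * u (R' x x' ω)) ∂P₀|
      ≤ ∫ ω, |Real.exp (V (R x x' ω)) * u (R x x' ω) -
      Real.exp (V (R' x x' ω)) * u (R' x x' ω)| ∂P₀ := abs_integral_le_integral_abs
    _ ≤ ∫ ω, ((q * dist x x') * (Real.exp (V (R x x' ω)) * G (R x x' ω)) + K * dist x x' * M +
        bad.indicator (fun _ => Real.exp v * M) ω) ∂P₀ := by
        apply integral_mono (iF1.sub iF2).abs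
        · exact ((iG.const_mul _).add (integrable_const _)).add iI
        · exact pw
    _ = (q * dist x x') * (∫ ω, Real.exp (V (R x x' ω)) * G (R x x' ω) ∂P₀) + K * dist x x' * M
        + P₀.real bad * (Real.exp v * M) := by
        have iH : Integrable (fun ω => (q * dist x x') * (Real.exp (V (R x x' ω)) * G (R x x' ω))
            + K * dist x x' * M) P₀ := (iG.const_mul _).add (integrable_const _)
        rw [integral_add iH iI,
          integral_add (iG.const_mul _) (integrable_const _), integral_const_mul,
          integral_indicator_const _ mbad]
        simp
    _ ≤ (q * dist x x') * (∫ ω, Real.exp (V (R x x' ω)) * G (R x x' ω) ∂P₀) + K * dist x x' * M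
        + (C * dist x x') * (Real.exp v * M) := by gcongr
    _ = _ := by ring

/-- Sequence lemma. -/
lemma seq_records {M : ℕ → ℝ} {s q θ : ℝ} (hs : 0 < s) (hθ0 : 0 < θ) (hθ1 : θ < 1)
    (hq0 : 0 ≤ q) (hq : q ≤ θ ^ 4) (hM : ∀ n, s ^ n ≤ M n) {K1 : ℝ}
    (hK1 : ∀ n, M n * (θ ^ 2) ^ n ≤ K1 * s ^ n) :
    ∃ᶠ n in atTop, ∑ k ∈ Finset.range n, q ^ k * M (n - 1 - k) * M k ≤
      (K1 / (s * θ * (1 - θ))) * M n := by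
  have hMp : ∀ n, 0 < M n := fun n => (pow_pos hs n).trans_le (hM n)
  have hK0 : 0 ≤ K1 := by
    have := hK1 0
    simp at this
    linarith [hMp 0]
  have hlim : Tendsto (fun n => M n / (s * θ) ^ n) atTop atTop := by
    apply tendsto_atTop_mono (f := fun n => (θ⁻¹) ^ n)
    · intro n
      rw [le_div_iff₀ (by positivity), mul_pow, inv_pow]
      calc _ = s ^ n := by field_simp
        _ ≤ _ := hM n
    · exact tendsto_pow_atTop_atTop_of_one_lt ((one_lt_inv₀ hθ0).2 hθ1)
  refine (frequently_high_scores hlim).mono fun n hn => ?_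
  have term : ∀ k ∈ Finset.range n, q ^ k * M (n - 1 - k) * M k ≤
      (K1 / (s * θ) * M n) * θ ^ k := by
    intro k hk
    have hk : k < n := Finset.mem_range.1 hk
    obtain ⟨j, hj⟩ : ∃ j, n = j + (k + 1) := ⟨n - 1 - k, by omega⟩
    have hj' : n - 1 - k = j := by omega
    rw [hj']
    have h1 : M j * (s * θ) ^ (k + 1) ≤ M n := by
      have := (hn j (by omega)).le
      rw [div_le_div_iff₀ (by positivity) (by positivity), hj, pow_add, ← hj] at this
      have hp : 0 < (s * θ) ^ j := by positivity
      nlinarith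
    have h2 := hK1 k
    have h3 : q ^ k ≤ (θ ^ 4) ^ k := pow_le_pow_left₀ hq0 hq k
    have hMj := hMp j
    have hMk := hMp k
    have e : (K1 / (s * θ) * M n) * θ ^ k = K1 * s ^ k * θ ^ (2 * k) * (M n / (s * θ) ^ (k + 1)) := by
      rw [mul_pow, pow_succ, pow_succ, mul_comm 2 k, pow_mul]; field_simp
    rw [e]
    calc q ^ k * M j * M k ≤ (θ ^ 4) ^ k * M j * M k := by gcongr
      _ = (M k * (θ ^ 2) ^ k) * θ ^ (2 * k) * M j := by
        rw [← pow_mul, ← pow_mul, show 4 * k = 2 * k + 2 * k by ring, pow_add]; ring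
      _ ≤ _ := by
        have : M j ≤ M n / (s * θ) ^ (k + 1) := by rwa [le_div_iff₀ (by positivity)]
        gcongr
  refine (Finset.sum_le_sum term).trans ?_
  rw [← Finset.mul_sum]
  have hg : ∑ k ∈ Finset.range n, θ ^ k ≤ (1 - θ)⁻¹ := by
    rw [← tsum_geometric_of_lt_one hθ0.le hθ1]
    exact (summable_geometric_of_lt_one hθ0.le hθ1).sum_le_tsum _ (fun i _ => by positivity)
  have := hMp n
  calc _ ≤ (K1 / (s * θ) * M n) * (1 - θ)⁻¹ := by gcongr
    _ = _ := by
      have : 1 - θ ≠ 0 := by linarith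
      field_simp

lemma exists_lim {a : ℕ → ℝ} {v : ℝ} (hsub : Subadditive a) (hv : ∀ n : ℕ, |a n| ≤ n * v) :
    ∃ L, Tendsto (fun n : ℕ => a n / n) atTop (𝓝 L) ∧ ∀ n : ℕ, n * L ≤ a n := by
  have hb : BddBelow (Set.range fun n : ℕ => a n / n) := by
    refine ⟨-|v|, ?_⟩
    rintro _ ⟨n, rfl⟩
    simp only
    rcases Nat.eq_zero_or_pos n with rfl | hn
    · simp
    · have hn' : (0 : ℝ) < n := by exact_mod_cast hn
      rw [le_div_iff₀ hn']
      have := (abs_le.1 (hv n)).1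
      have := le_abs_self v
      nlinarith
  refine ⟨hsub.lim, hsub.tendsto_lim hb, fun n => ?_⟩
  rcases Nat.eq_zero_or_pos n with rfl | hn
  · have := (abs_le.1 (hv 0)).1
    simp at this ⊢
    exact this
  · have hn' : (0 : ℝ) < n := by exact_mod_cast hn
    have := hsub.lim_le_div hb hn.ne'
    rw [le_div_iff₀ hn'] at this
    linarith

lemma exists_K1 {M : ℕ → ℝ} {L θ : ℝ} (hM : ∀ n, 0 < M n)
    (hL : Tendsto (fun n : ℕ => Real.log (M n) / n) atTop (𝓝 L)) (hθ0 : 0 < θ) (hθ1 : θ < 1) :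
    ∃ K1 : ℝ, ∀ n, M n * (θ ^ 2) ^ n ≤ K1 * (Real.exp L) ^ n := by
  have hlog : Real.log θ < 0 := Real.log_neg hθ0 hθ1
  have ev : ∀ᶠ n : ℕ in atTop, M n * (θ ^ 2) ^ n / (Real.exp L) ^ n ≤ 1 := by
    filter_upwards [hL.eventually (gt_mem_nhds (show L < L - 2 * Real.log θ by linarith)),
      eventually_gt_atTop 0] with n hn hn0
    have hn' : (0 : ℝ) < n := by exact_mod_cast hn0
    rw [div_le_one (by positivity)]
    rw [div_lt_iff₀ hn'] at hn
    rw [← Real.exp_log (hM n), ← Real.exp_log hθ0, ← Real.exp_nat_mul, ← Real.exp_nat_mul,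
      ← Real.exp_nat_mul, ← Real.exp_add, Real.exp_le_exp]
    push_cast
    nlinarith
  have : BddAbove (Set.range fun n : ℕ => M n * (θ ^ 2) ^ n / (Real.exp L) ^ n) := by
    apply Filter.IsBoundedUnder.bddAbove_range
    exact ⟨1, by simpa using ev⟩
  obtain ⟨K, hK⟩ := this
  refine ⟨K, fun n => ?_⟩
  have := hK ⟨n, rfl⟩
  simp only at this
  rwa [div_le_iff₀ (by positivity)] at this

noncomputable def UM {X : Type*} [MeasurableSpace X] (κ : X → Measure X) (V : X → ℝ) (n : ℕ) : ℝ :=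
  ⨆ x, FKiter κ V n 1 x

noncomputable def Um {X : Type*} [MeasurableSpace X] (κ : X → Measure X) (V : X → ℝ) (n : ℕ) : ℝ :=
  ⨅ x, FKiter κ V n 1 x

section ext

variable {X : Type*} [MetricSpace X] [CompactSpace X] [MeasurableSpace X] [BorelSpace X]
  {κ : X → Measure X} {V : X → ℝ}

lemma exists_v (hV : Continuous V) : ∃ v, ∀ x, |V x| ≤ v := by
  obtain ⟨v, hv⟩ := isCompact_univ.exists_bound_of_continuousOn hV.continuousOn
  exact ⟨v, fun x => hv x trivial⟩

lemma FellerK.le_UM (h : FellerK κ) (hV : Continuous V) (n : ℕ) (x : X) :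
    FKiter κ V n 1 x ≤ UM κ V n := by
  obtain ⟨v, hv⟩ := exists_v hV
  refine le_ciSup (f := fun x => FKiter κ V n 1 x) ⟨Real.exp (n * v), ?_⟩ x
  rintro _ ⟨y, rfl⟩
  exact h.iter_upper hV hv n y

lemma FellerK.Um_le (h : FellerK κ) (hV : Continuous V) (n : ℕ) (x : X) :
    Um κ V n ≤ FKiter κ V n 1 x := by
  obtain ⟨v, hv⟩ := exists_v hV
  refine ciInf_le (f := fun x => FKiter κ V n 1 x) ⟨Real.exp (-(n * v)), ?_⟩ x
  rintro _ ⟨y, rfl⟩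
  exact h.iter_lower hV hv n y

variable [Nonempty X]

lemma FellerK.exp_le_Um (h : FellerK κ) (hV : Continuous V) {v : ℝ} (hv : ∀ x, |V x| ≤ v) (n : ℕ) :
    Real.exp (-(n * v)) ≤ Um κ V n := le_ciInf (h.iter_lower hV hv n)

lemma FellerK.UM_le_exp (h : FellerK κ) (hV : Continuous V) {v : ℝ} (hv : ∀ x, |V x| ≤ v) (n : ℕ) :
    UM κ V n ≤ Real.exp (n * v) := ciSup_le (h.iter_upper hV hv n)

lemma FellerK.Um_le_UM (h : FellerK κ) (hV : Continuous V) (n : ℕ) : Um κ V n ≤ UM κ V n :=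
  (h.Um_le hV n (Classical.arbitrary X)).trans (h.le_UM hV n _)

lemma FellerK.Um_pos (h : FellerK κ) (hV : Continuous V) (n : ℕ) : 0 < Um κ V n := by
  obtain ⟨v, hv⟩ := exists_v hV
  exact (Real.exp_pos _).trans_le (h.exp_le_Um hV hv n)

lemma FellerK.UM_pos (h : FellerK κ) (hV : Continuous V) (n : ℕ) : 0 < UM κ V n :=
  (h.Um_pos hV n).trans_le (h.Um_le_UM hV n)

lemma FellerK.UM_add (h : FellerK κ) (hV : Continuous V) (m n : ℕ) :
    UM κ V (m + n) ≤ UM κ V m * UM κ V n := by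
  refine ciSup_le fun x => ?_
  have c1 := h.cont_iter hV (continuous_one (X := X) (M := ℝ)) n
  rw [iter_add]
  refine (h.iter_mono (g := fun y => UM κ V n * (1 : X → ℝ) y) hV c1 (by simp; fun_prop)
    (fun y => by simpa using h.le_UM hV n y) m x).trans ?_
  rw [iter_smul, mul_comm (UM κ V m)]
  exact mul_le_mul_of_nonneg_left (h.le_UM hV m x) (h.UM_pos hV n).le

lemma FellerK.Um_add (h : FellerK κ) (hV : Continuous V) (m n : ℕ) :
    Um κ V m * Um κ V n ≤ Um κ V (m + n) := by
  refine le_ciInf fun x => ?_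
  have c1 := h.cont_iter hV (continuous_one (X := X) (M := ℝ)) n
  rw [iter_add]
  refine le_trans ?_ (h.iter_mono (f := fun y => Um κ V n * (1 : X → ℝ) y) hV (by simp; fun_prop) c1
    (fun y => by simpa using h.Um_le hV n y) m x)
  rw [iter_smul, mul_comm]
  exact mul_le_mul_of_nonneg_left (h.Um_le hV m x) (h.Um_pos hV n).le

lemma FellerK.abs_logs (h : FellerK κ) (hV : Continuous V) {v : ℝ} (hv : ∀ x, |V x| ≤ v) (n : ℕ) :
    |Real.log (Um κ V n)| ≤ n * v ∧ |Real.log (UM κ V n)| ≤ n * v := by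
  have p1 := h.Um_pos hV n
  have p2 := h.UM_pos hV n
  have a := (Real.le_log_iff_exp_le p1).2 (h.exp_le_Um hV hv n)
  have b := (Real.log_le_iff_le_exp p2).2 (h.UM_le_exp hV hv n)
  have c := Real.log_le_log p1 (h.Um_le_UM hV n)
  constructor <;> rw [abs_le] <;> constructor <;> linarith

lemma FellerK.lim_UM (h : FellerK κ) (hV : Continuous V) :
    ∃ L, Tendsto (fun n : ℕ => Real.log (UM κ V n) / n) atTop (𝓝 L) ∧
      ∀ n : ℕ, Real.exp L ^ n ≤ UM κ V n := by
  obtain ⟨v, hv⟩ := exists_v hV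
  obtain ⟨L, h1, h2⟩ := exists_lim (a := fun n => Real.log (UM κ V n)) (v := v)
    (fun m n => by
      simp only
      rw [← Real.log_mul (h.UM_pos hV m).ne' (h.UM_pos hV n).ne']
      exact Real.log_le_log (h.UM_pos hV _) (h.UM_add hV m n))
    (fun n => (h.abs_logs hV hv n).2)
  refine ⟨L, h1, fun n => ?_⟩
  rw [← Real.exp_nat_mul, ← Real.le_log_iff_exp_le (h.UM_pos hV n)]
  exact h2 n

lemma FellerK.lim_Um (h : FellerK κ) (hV : Continuous V) :
    ∃ L, Tendsto (fun n : ℕ => Real.log (Um κ V n) / n) atTop (𝓝 L) := by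
  obtain ⟨v, hv⟩ := exists_v hV
  obtain ⟨L, h1, h2⟩ := exists_lim (a := fun n => -Real.log (Um κ V n)) (v := v)
    (fun m n => by
      simp only
      have := Real.log_le_log (mul_pos (h.Um_pos hV m) (h.Um_pos hV n)) (h.Um_add hV m n)
      rw [Real.log_mul (h.Um_pos hV m).ne' (h.Um_pos hV n).ne'] at this
      linarith)
    (fun n => by rw [abs_neg]; exact (h.abs_logs hV hv n).1)
  refine ⟨-L, ?_⟩
  convert h1.neg using 2
  ring

end ext

lemma FellerK.lip_main
    {X : Type*} [MetricSpace X] [CompactSpace X] [MeasurableSpace X] [BorelSpace X] [Nonempty X]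
    {κ : X → Measure X} (h : FellerK κ)
    {Ω₀ : Type*} [MeasurableSpace Ω₀] (P₀ : Measure Ω₀) [IsProbabilityMeasure P₀]
    (q : ℝ) (hq0 : 0 ≤ q) (hq1 : q < 1) (C : ℝ) (hC : 0 < C)
    (R R' : X → X → Ω₀ → X)
    (hRmeas : Measurable fun p : (X × X) × Ω₀ => R p.1.1 p.1.2 p.2)
    (hR'meas : Measurable fun p : (X × X) × Ω₀ => R' p.1.1 p.1.2 p.2)
    (hRlaw : ∀ x x' : X, Measure.map (R x x') P₀ = κ x)
    (hR'law : ∀ x x' : X, Measure.map (R' x x') P₀ = κ x')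
    (hcouple : ∀ x x' : X,
      P₀ {ω | q * dist x x' < dist (R x x' ω) (R' x x' ω)} ≤ ENNReal.ofReal (C * dist x x'))
    {V : X → ℝ} (hV : Continuous V) {v : ℝ} (hv : ∀ x, |V x| ≤ v)
    {K : ℝ} (hK : ∀ x y, |Real.exp (V x) - Real.exp (V y)| ≤ K * dist x y) (hK0 : 0 ≤ K)
    (n : ℕ) (x x' : X) :
    |FKiter κ V n 1 x - FKiter κ V n 1 x'| ≤
      dist x x' * ((C * Real.exp v + K) *
        ∑ k ∈ Finset.range n, q ^ k * UM κ V (n - 1 - k) * FKiter κ V k 1 x) := by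
  have c1 := fun n => h.cont_iter hV (continuous_one (X := X) (M := ℝ)) n
  have n1 := fun n => h.iter_nonneg hV (continuous_one (X := X) (M := ℝ)) (fun _ => zero_le_one) n
  have hB : 0 ≤ C * Real.exp v + K := by positivity
  induction n generalizing x x' with
  | zero => simp [FKiter]
  | succ n ih =>
    have := h.lip_step P₀ q hq0 hq1 C hC R R' hRmeas hR'meas hRlaw hR'law hcouple hV hv hK hK0
      (u := FKiter κ V n 1)
      (G := fun x => (C * Real.exp v + K) *
        ∑ k ∈ Finset.range n, q ^ k * UM κ V (n - 1 - k) * FKiter κ V k 1 x)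
      (c1 n) (by fun_prop) (M := UM κ V n) (n1 n) (h.le_UM hV n) (h.UM_pos hV n).le
      (fun x => mul_nonneg hB (Finset.sum_nonneg fun k _ =>
        mul_nonneg (mul_nonneg (pow_nonneg hq0 k) (h.UM_pos hV _).le) (n1 k x)))
      ih x x'
    refine this.trans (le_of_eq ?_)
    congr 1
    rw [FK_smul]
    have e : FK κ V (fun y => ∑ k ∈ Finset.range n, q ^ k * UM κ V (n - 1 - k) * FKiter κ V k 1 y) x
        = ∑ k ∈ Finset.range n, q ^ k * UM κ V (n - 1 - k) * FKiter κ V (k + 1) 1 x := by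
      simp only [FK, Finset.mul_sum]
      rw [integral_finsetSum]
      · refine Finset.sum_congr rfl fun k _ => ?_
        exact FK_smul (κ := κ) (V := V) _ _ x
      · intro k _
        have := c1 k
        exact h.integrable (by fun_prop) x
    rw [e, Finset.sum_range_succ']
    simp only [FKiter, pow_zero, one_mul, Nat.add_sub_cancel, Nat.sub_zero, Pi.one_apply, mul_one]
    rw [mul_add]
    congr 1
    rw [Finset.mul_sum, Finset.mul_sum, Finset.mul_sum]
    refine Finset.sum_congr rfl fun k _ => ?_
    rw [show n - 1 - k = n - (k + 1) by omega, pow_succ]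
    ring

lemma FellerK.core
    {X : Type*} [MetricSpace X] [CompactSpace X] [MeasurableSpace X] [BorelSpace X] [Nonempty X]
    {κ : X → Measure X} (h : FellerK κ)
    (hI : ∀ ε : ℝ, 0 < ε → ∃ (N : ℕ) (p : ℝ≥0∞), 0 < p ∧
      ∀ x y : X, p < kIter κ N x (Metric.ball y ε))
    {Ω₀ : Type*} [MeasurableSpace Ω₀] (P₀ : Measure Ω₀) [IsProbabilityMeasure P₀]
    (q : ℝ) (hq0 : 0 ≤ q) (hq1 : q < 1) (C : ℝ) (hC : 0 < C)
    (R R' : X → X → Ω₀ → X)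
    (hRmeas : Measurable fun p : (X × X) × Ω₀ => R p.1.1 p.1.2 p.2)
    (hR'meas : Measurable fun p : (X × X) × Ω₀ => R' p.1.1 p.1.2 p.2)
    (hRlaw : ∀ x x' : X, Measure.map (R x x') P₀ = κ x)
    (hR'law : ∀ x x' : X, Measure.map (R' x x') P₀ = κ x')
    (hcouple : ∀ x x' : X,
      P₀ {ω | q * dist x x' < dist (R x x' ω) (R' x x' ω)} ≤ ENNReal.ofReal (C * dist x x'))
    {V : X → ℝ} (hV : Continuous V)
    {K : ℝ} (hK : ∀ x y, |Real.exp (V x) - Real.exp (V y)| ≤ K * dist x y) (hK0 : 0 ≤ K)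
    {L l : ℝ} (hL : Tendsto (fun n : ℕ => Real.log (UM κ V n) / n) atTop (𝓝 L))
    (hl : Tendsto (fun n : ℕ => Real.log (Um κ V n) / n) atTop (𝓝 l))
    (hLe : ∀ n : ℕ, Real.exp L ^ n ≤ UM κ V n) : L ≤ l := by
  obtain ⟨v, hv⟩ := exists_v hV
  have c1 := fun n => h.cont_iter hV (continuous_one (X := X) (M := ℝ)) n
  have n1 := fun n => h.iter_nonneg hV (continuous_one (X := X) (M := ℝ)) (fun _ => zero_le_one) n
  obtain ⟨θ, hθ0, hθ1, hqθ⟩ : ∃ θ : ℝ, 0 < θ ∧ θ < 1 ∧ q ≤ θ ^ 4 := by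
    have ht : Tendsto (fun θ : ℝ => θ ^ 4) (𝓝[<] 1) (𝓝 (1 ^ 4)) :=
      ((continuous_pow 4).tendsto 1).mono_left nhdsWithin_le_nhds
    have e1 := ht.eventually (lt_mem_nhds (show q < 1 ^ 4 by simpa using hq1))
    have e2 : ∀ᶠ θ : ℝ in 𝓝[<] 1, 0 < θ :=
      nhdsWithin_le_nhds (lt_mem_nhds (zero_lt_one (α := ℝ)))
    obtain ⟨θ, h1, h2, h3⟩ := (e1.and (e2.and self_mem_nhdsWithin)).exists
    exact ⟨θ, h2, h3, h1.le⟩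
  obtain ⟨K1, hK1⟩ := exists_K1 (h.UM_pos hV) hL hθ0 hθ1
  have hrec := seq_records (Real.exp_pos L) hθ0 hθ1 hq0 hqθ hLe hK1
  set A := K1 / (Real.exp L * θ * (1 - θ)) with hA
  set B := C * Real.exp v + K with hB
  have hB0 : 0 ≤ B := by positivity
  have hr : 0 < 1 / (2 * (|B * A| + 1)) := by positivity
  set r := 1 / (2 * (|B * A| + 1)) with hrdef
  obtain ⟨N, p, hp, hball⟩ := hI r hr
  have hptop : p ≠ ⊤ := by
    have := hball (Classical.arbitrary X) (Classical.arbitrary X)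
    exact this.ne_top
  set p' := p.toReal with hp'
  have hp'0 : 0 < p' := ENNReal.toReal_pos hp.ne' hptop
  set c := p' / 2 * Real.exp (-(N * v)) with hc
  have hc0 : 0 < c := by positivity
  -- main estimate at record times
  have hmain : ∃ᶠ n : ℕ in atTop, (Real.log c + n * L) / ((N + n : ℕ) : ℝ) ≤
      Real.log (Um κ V (N + n)) / ((N + n : ℕ) : ℝ) := by
    refine hrec.mono fun n hn => ?_
    have hMn := h.UM_pos hV n
    have hlip : ∀ x x', |FKiter κ V n 1 x - FKiter κ V n 1 x'| ≤
        dist x x' * (|B * A| * UM κ V n) := by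
      intro x x'
      refine (h.lip_main P₀ q hq0 hq1 C hC R R' hRmeas hR'meas hRlaw hR'law hcouple hV hv hK hK0
        n x x').trans ?_
      apply mul_le_mul_of_nonneg_left _ dist_nonneg
      calc _ ≤ B * ∑ k ∈ Finset.range n, q ^ k * UM κ V (n - 1 - k) * UM κ V k := by
            refine mul_le_mul_of_nonneg_left (Finset.sum_le_sum fun k _ => ?_) hB0
            exact mul_le_mul_of_nonneg_left (h.le_UM hV k x)
              (mul_nonneg (pow_nonneg hq0 k) (h.UM_pos hV _).le)
        _ ≤ B * (A * UM κ V n) := mul_le_mul_of_nonneg_left hn hB0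
        _ = (B * A) * UM κ V n := by ring
        _ ≤ _ := by gcongr; exact le_abs_self _
    obtain ⟨y, -, hy⟩ := isCompact_univ.exists_isMaxOn Set.univ_nonempty (c1 n).continuousOn
    have hyM : UM κ V n ≤ FKiter κ V n 1 y := ciSup_le fun x => hy (Set.mem_univ x)
    have hhalf : ∀ z ∈ Metric.ball y r, UM κ V n / 2 ≤ FKiter κ V n 1 z := by
      intro z hz
      have h1 := (abs_le.1 (hlip y z)).2
      have h2 : dist y z ≤ r := by rw [dist_comm]; exact (Metric.mem_ball.1 hz).le
      have h3 : dist y z * (|B * A| * UM κ V n) ≤ UM κ V n / 2 := by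
        calc _ ≤ r * (|B * A| * UM κ V n) := by gcongr
          _ ≤ r * ((|B * A| + 1) * UM κ V n) := by gcongr; linarith
          _ = _ := by rw [hrdef]; field_simp
      linarith
    have hlow : c * UM κ V n ≤ Um κ V (N + n) := by
      refine le_ciInf fun x => ?_
      have k1 := h.kIter_le hV hv N (c1 n) (n1 n) x
      rw [← iter_add] at k1
      have k2 : ENNReal.ofReal (UM κ V n / 2) * p ≤
          ∫⁻ y, ENNReal.ofReal (FKiter κ V n 1 y) ∂(kIter κ N x) := by
        calc _ ≤ ENNReal.ofReal (UM κ V n / 2) * kIter κ N x (Metric.ball y r) := by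
              gcongr; exact (hball x y).le
          _ = ∫⁻ _ in Metric.ball y r, ENNReal.ofReal (UM κ V n / 2) ∂(kIter κ N x) := by
              rw [setLIntegral_const]
          _ ≤ ∫⁻ z in Metric.ball y r, ENNReal.ofReal (FKiter κ V n 1 z) ∂(kIter κ N x) := by
              apply setLIntegral_mono' Metric.isOpen_ball.measurableSet
              intro z hz
              exact ENNReal.ofReal_le_ofReal (hhalf z hz)
          _ ≤ _ := setLIntegral_le_lintegral _ _
      have k3 := k2.trans k1
      rw [← ENNReal.ofReal_toReal hptop, ← ENNReal.ofReal_mul (by positivity),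
        ENNReal.ofReal_le_ofReal_iff (mul_nonneg (Real.exp_pos _).le (n1 (N + n) x))] at k3
      calc c * UM κ V n = Real.exp (-(N * v)) * (UM κ V n / 2 * p') := by rw [hc]; ring
        _ ≤ Real.exp (-(N * v)) * (Real.exp (N * v) * FKiter κ V (N + n) 1 x) := by gcongr
        _ = _ := by rw [← mul_assoc, ← Real.exp_add]; simp
    gcongr
    rw [Real.le_log_iff_exp_le (h.Um_pos hV _), Real.exp_add, Real.exp_log hc0, Real.exp_nat_mul]
    exact (mul_le_mul_of_nonneg_left (hLe n) hc0.le).trans hlow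
  have t1 : Tendsto (fun n : ℕ => Real.log (Um κ V (N + n)) / ((N + n : ℕ) : ℝ)) atTop (𝓝 l) := by
    have := hl.comp (tendsto_add_atTop_nat N)
    simpa only [Function.comp_def, add_comm N] using this
  have t2 : Tendsto (fun n : ℕ => (Real.log c + n * L) / ((N + n : ℕ) : ℝ)) atTop (𝓝 L) := by
    have hinf : Tendsto (fun n : ℕ => ((N + n : ℕ) : ℝ)) atTop atTop := by
      have := (tendsto_natCast_atTop_atTop (R := ℝ)).comp (tendsto_add_atTop_nat N)
      simpa only [Function.comp_def, add_comm N] using this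
    have t3 : Tendsto (fun n : ℕ => (Real.log c - N * L) / ((N + n : ℕ) : ℝ) + L) atTop
        (𝓝 (0 + L)) := (hinf.const_div_atTop _).add_const L
    rw [zero_add] at t3
    refine t3.congr' ?_
    filter_upwards [eventually_gt_atTop 0] with n hn
    have : ((N + n : ℕ) : ℝ) ≠ 0 := by positivity
    field_simp
    push_cast
    ring
  exact le_of_tendsto_of_tendsto_of_frequently t2 t1 hmain

/-- Lipschitz approximation by inf-convolution. -/
lemma exists_lip_approx {X : Type*} [MetricSpace X] [CompactSpace X] [Nonempty X]
    {V : X → ℝ} (hV : Continuous V) {e : ℝ} (he : 0 < e) :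
    ∃ W : X → ℝ, ∃ K : ℝ≥0, LipschitzWith K W ∧ (∀ x, W x ≤ V x) ∧ ∀ x, V x ≤ W x + e := by
  obtain ⟨v, hv⟩ : ∃ v, ∀ x, |V x| ≤ v := by
    obtain ⟨v, hv⟩ := isCompact_univ.exists_bound_of_continuousOn hV.continuousOn
    exact ⟨v, fun x => hv x trivial⟩
  have hv0 : 0 ≤ v := (abs_nonneg _).trans (hv (Classical.arbitrary X))
  obtain ⟨δ, hδ, hd⟩ := Metric.uniformContinuous_iff.1
    (CompactSpace.uniformContinuous_of_continuous hV) e he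
  set K : ℝ≥0 := ⟨2 * v / δ, by positivity⟩ with hKdef
  have hKδ : (K : ℝ) * δ = 2 * v := by
    change 2 * v / δ * δ = 2 * v
    field_simp
  have key : ∀ x y, V x - e ≤ V y + K * dist x y := by
    intro x y
    by_cases hxy : dist x y < δ
    · have := hd hxy
      rw [Real.dist_eq] at this
      have := (abs_lt.1 this).2
      have : 0 ≤ (K : ℝ) * dist x y := by positivity
      linarith
    · have h1 := (abs_le.1 (hv x)).2
      have h2 := (abs_le.1 (hv y)).1
      have : (K : ℝ) * δ ≤ K * dist x y := by
        gcongr; exact not_lt.1 hxy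
      linarith
  have bdd : ∀ x, BddBelow (Set.range fun y => V y + K * dist x y) := by
    intro x
    refine ⟨V x - e, ?_⟩
    rintro _ ⟨y, rfl⟩
    exact key x y
  refine ⟨fun x => ⨅ y, (V y + K * dist x y), K, ?_, ?_, ?_⟩
  · apply LipschitzWith.of_le_add_mul
    intro x x'
    rw [← sub_le_iff_le_add]
    refine le_ciInf fun y => ?_
    rw [sub_le_iff_le_add]
    refine (ciInf_le (bdd x) y).trans ?_
    have := dist_triangle x x' y
    have : (K : ℝ) * dist x y ≤ K * (dist x x' + dist x' y) := by gcongr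
    linarith
  · intro x
    refine (ciInf_le (bdd x) x).trans ?_
    simp
  · intro x
    rw [← sub_le_iff_le_add]
    exact le_ciInf fun y => key x y

lemma exp_lip {a b v : ℝ} (ha : |a| ≤ v) (hb : |b| ≤ v) :
    |Real.exp a - Real.exp b| ≤ Real.exp v * |a - b| := by
  wlog hab : b ≤ a generalizing a b
  · rw [abs_sub_comm, abs_sub_comm a]
    exact this hb ha (le_of_not_ge hab)
  rw [abs_of_nonneg (sub_nonneg.2 (Real.exp_le_exp.2 hab)), abs_of_nonneg (sub_nonneg.2 hab)]
  have h1 : Real.exp b = Real.exp a * Real.exp (b - a) := by rw [← Real.exp_add]; ring_nf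
  have h2 := Real.add_one_le_exp (b - a)
  have h3 := Real.exp_le_exp.2 (abs_le.1 ha).2
  calc Real.exp a - Real.exp b = Real.exp a * (1 - Real.exp (b - a)) := by rw [h1]; ring
    _ ≤ Real.exp a * (a - b) :=
        mul_le_mul_of_nonneg_left (by linarith) (Real.exp_pos a).le
    _ ≤ _ := by gcongr

/-- Existence of the pressure function: under hypotheses (I) and (C),
for every continuous `V : X → ℝ` there is `Λ(V) ∈ ℝ` such that
`x ↦ (1/n)·log Q_n^V 1(x)` converges uniformly on `X` to the constant `Λ(V)`. -/
theorem pressure_function_exists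
    {X : Type*} [MetricSpace X] [CompactSpace X] [MeasurableSpace X] [BorelSpace X]
    (κ : X → Measure X) (hκmeas : Measurable κ)
    (hκprob : ∀ x, IsProbabilityMeasure (κ x))
    (hFeller : ∀ f : X → ℝ, Continuous f → Continuous fun x => ∫ y, f y ∂(κ x))
    -- hypothesis (I): uniform irreducibility
    (hI : ∀ ε : ℝ, 0 < ε → ∃ (N : ℕ) (p : ℝ≥0∞), 0 < p ∧
      ∀ x y : X, p < kIter κ N x (Metric.ball y ε))
    -- hypothesis (C): coupling
    {Ω₀ : Type*} [MeasurableSpace Ω₀] (P₀ : Measure Ω₀) [IsProbabilityMeasure P₀]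
    (q : ℝ) (hq0 : 0 ≤ q) (hq1 : q < 1) (C : ℝ) (hC : 0 < C)
    (R R' : X → X → Ω₀ → X)
    (hRmeas : Measurable fun p : (X × X) × Ω₀ => R p.1.1 p.1.2 p.2)
    (hR'meas : Measurable fun p : (X × X) × Ω₀ => R' p.1.1 p.1.2 p.2)
    (hRlaw : ∀ x x' : X, Measure.map (R x x') P₀ = κ x)
    (hR'law : ∀ x x' : X, Measure.map (R' x x') P₀ = κ x')
    (hcouple : ∀ x x' : X,
      P₀ {ω | q * dist x x' < dist (R x x' ω) (R' x x' ω)} ≤ ENNReal.ofReal (C * dist x x'))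
    (V : X → ℝ) (hV : Continuous V) :
    ∃ Λ : ℝ, Tendsto
      (fun n : ℕ => ⨆ x : X, |(n : ℝ)⁻¹ * Real.log (FKiter κ V n 1 x) - Λ|)
      atTop (nhds 0) := by
  rcases isEmpty_or_nonempty X with hX | hX
  · exact ⟨0, by simp [Real.iSup_of_isEmpty]⟩
  have h : FellerK κ := ⟨hκmeas, hκprob, hFeller⟩
  obtain ⟨L, hL, hLe⟩ := h.lim_UM hV
  obtain ⟨l, hl⟩ := h.lim_Um hV
  have hlL : l ≤ L := by
    refine le_of_tendsto_of_tendsto' hl hL fun n => ?_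
    gcongr
    · exact h.Um_pos hV n
    · exact h.Um_le_UM hV n
  have hLl : L ≤ l := by
    refine le_of_forall_pos_le_add fun e he => ?_
    obtain ⟨W, K, hWK, hWV, hVW⟩ := exists_lip_approx hV he
    have hW := hWK.continuous
    obtain ⟨L', hL', hLe'⟩ := h.lim_UM hW
    obtain ⟨l', hl'⟩ := h.lim_Um hW
    obtain ⟨w, hw⟩ := exists_v hW
    have a1 : L' ≤ l' := h.core hI P₀ q hq0 hq1 C hC R R' hRmeas hR'meas hRlaw hR'law hcouple hW
      (K := Real.exp w * K) (fun x y => by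
        refine (exp_lip (hw x) (hw y)).trans ?_
        rw [mul_assoc]
        gcongr
        exact hWK.dist_le_mul x y) (by positivity) hL' hl' hLe'
    have a2 : l' ≤ l := by
      refine le_of_tendsto_of_tendsto' hl' hl fun n => ?_
      gcongr
      · exact h.Um_pos hW n
      · refine le_ciInf fun x => (h.Um_le hW n x).trans ?_
        have := h.iter_le_of_le hW hV (e := 0) (by simpa using hWV) n x
        simpa using this
    have a3 : L ≤ L' + e := by
      refine le_of_tendsto_of_tendsto hL (hL'.add_const e) ?_
      filter_upwards [eventually_gt_atTop 0] with n hn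
      have hn' : (0 : ℝ) < n := by exact_mod_cast hn
      rw [div_add' _ _ _ hn'.ne']
      gcongr
      rw [Real.log_le_iff_le_exp (h.UM_pos hV n), Real.exp_add, Real.exp_log (h.UM_pos hW n)]
      refine ciSup_le fun x => (h.iter_le_of_le hV hW hVW n x).trans ?_
      rw [mul_comm, mul_comm e]
      gcongr
      exact h.le_UM hW n x
    linarith
  obtain rfl : l = L := le_antisymm hlL hLl
  refine ⟨l, ?_⟩
  have t : Tendsto (fun n : ℕ => |Real.log (UM κ V n) / n - l| + |Real.log (Um κ V n) / n - l|)
      atTop (𝓝 0) := by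
    have := (hL.sub_const l).abs.add (hl.sub_const l).abs
    simpa using this
  refine squeeze_zero (fun n => Real.iSup_nonneg fun x => abs_nonneg _) (fun n => ?_) t
  refine ciSup_le fun x => ?_
  have p1 := h.Um_pos hV n
  have b1 := Real.log_le_log p1 (h.Um_le hV n x)
  have b2 := Real.log_le_log (p1.trans_le (h.Um_le hV n x)) (h.le_UM hV n x)
  have hn : (0 : ℝ) ≤ (n : ℝ)⁻¹ := by positivity
  have b3 := mul_le_mul_of_nonneg_left b1 hn
  have b4 := mul_le_mul_of_nonneg_left b2 hn
  rw [div_eq_inv_mul, div_eq_inv_mul]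
  have d1 := le_abs_self ((n : ℝ)⁻¹ * Real.log (UM κ V n) - l)
  have d2 := neg_abs_le ((n : ℝ)⁻¹ * Real.log (Um κ V n) - l)
  have d3 := abs_nonneg ((n : ℝ)⁻¹ * Real.log (UM κ V n) - l)
  have d4 := abs_nonneg ((n : ℝ)⁻¹ * Real.log (Um κ V n) - l)
  rw [abs_le]
  constructor <;> linarith
end
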